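/- arXiv:2509.15822 — 2 statements merged into one kernel-verified Lean document; each statement's English description precedes it below -/
import Mathlib

section
/- Let c_s ≥ 14, D ≥ 2, q ≤ 1/2, q + 2λ ≤ 1, λ > 0, and 2 ≤ K ≤ n. Assume K ≥ √n and 2·D^{16c_s}·λ ≤ (λ/K + q̄)^{1 − log_n(K)}, where log_n(K) := log K / log n. Then Corr²_{≤D} ≤ (4/n)·D^{−15c_s}. -/
/-!
The proof exhibits an almost orthogonal basis of the polynomials of degree at most `D` in the
edge variables and reads the low-degree correlation off the coordinates of the signal in it.

*The basis.* To a set `G` of at most `D` edges is attached the product `PB G`, over the connected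
components `C` of `G`, of the centred monomials `P_C - E[P_C]`. A power of a two-valued variable is
affine in it, so these functions span the polynomials of degree at most `D`. Since functions of
edges with no common vertex are independent, `E[PB G * PB H]` vanishes as soon as a component of
one graph shares no vertex with the other graph.

*Gram matrix.* Given the labels, the mixed moments of monomials factor over edges: an edge of the
symmetric difference contributes `lam` times the indicator that it is monochromatic, a common edge
its conditional variance. If no component of `G` or `H` avoids the other graph, monochromaticity of
the symmetric difference determines the labels of the vertices of one graph outside the other, at
the price of `1 / K` per vertex (`EZ_det`). There are two ways to bound the second moment of a
monomial from below: through the average edge variance `r = lam (1 - 2 * q) / K + q (1 - q)`, or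
through the within-community variance `p = lam (1 - 2 * q) + q (1 - q)`, by restricting to
monochromatic edges. With `t` defined by `n = K ^ (2 - t)`, which lies in `[0, 1]` because
`√n ≤ K ≤ n`, the hypothesis yields `lam ^ 2 ≤ δ r ^ (1 - t) p ^ t` with `δ = D ^ (-16 cs)`
(`regime_of_cond`), and interpolating between the two bounds with exponent `t` turns the powers of
`1 / K` into powers of `1 / n` (`Regime.core`). The normalized squared Gram entries are therefore at
most a small power indexed by the number of edges in the symmetric difference, times `n⁻¹` for
each vertex outside the common part.

*Counting and conclusion.* Revealing edges one at a time shows that graphs are few once each new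
vertex is discounted by `1 / n` (`sum_graph_le`). So the Gram matrix is diagonally dominant after a
rescaling by weights (`diag_dom`), and `E[f ^ 2]` is at least a constant times the sum of the
squared coordinates weighted by the second moments of the monomials (`Regime.gram_lower`). The
signal is uncorrelated with `PB G` unless `G` is connected and contains both marked vertices
(`signal_eq_zero`, by shifting the labels of a part of the graph), and for such `G` the squared
correlation has the order `δ ^ |G| n ^ (-(v - 1))`, `v` being the number of vertices. The
Cauchy–Schwarz inequality and the same counting give `Regime.corr_le`, from which the stated bound
follows by arithmetic.
-/

open Classical Finset

noncomputable section

namespace SBM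

abbrev Pairs (n : ℕ) := {p : Fin n × Fin n // p.1 < p.2}
abbrev EdgeConf (n : ℕ) := Pairs n → Bool
abbrev Lab (n K : ℕ) := Fin n → Fin K

def Ymat (n : ℕ) (q : ℝ) (y : EdgeConf n) (i j : Fin n) : ℝ :=
  if h : i = j then 0
  else (if y ⟨(min i j, max i j), min_lt_max.mpr h⟩ then 1 else 0) - q

def pEdge (n K : ℕ) (q lam : ℝ) (z : Lab n K) (p : Pairs n) : ℝ :=
  if z p.1.1 = z p.1.2 then q + lam else q

def wt (n K : ℕ) (q lam : ℝ) (z : Lab n K) (y : EdgeConf n) : ℝ :=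
  ((K : ℝ)⁻¹) ^ n *
    ∏ p : Pairs n, (if y p then pEdge n K q lam z p else 1 - pEdge n K q lam z p)

def expec (n K : ℕ) (q lam : ℝ) (F : Lab n K → EdgeConf n → ℝ) : ℝ :=
  ∑ z : Lab n K, ∑ y : EdgeConf n, wt n K q lam z y * F z y

def xind (n K : ℕ) (i0 i1 : Fin n) (z : Lab n K) : ℝ :=
  (if z i0 = z i1 then 1 else 0) - 1 / K

/-- Evaluation of a polynomial in the variables `(Y_{ij})_{i<j}` at the observed `Y`. -/
def evalY (n : ℕ) (q : ℝ) (f : MvPolynomial (Pairs n) ℝ) (y : EdgeConf n) : ℝ :=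
  MvPolynomial.eval (fun p : Pairs n => Ymat n q y p.1.1 p.1.2) f

/-- The squared low-degree correlation `Corr²_{≤ D}`: supremum over polynomials of total
degree at most `D` (with nondegenerate second moment) of `E[f(Y)x]² / E[f(Y)²]`. -/
def Corr2 (n K D : ℕ) (q lam : ℝ) (i0 i1 : Fin n) : ℝ :=
  sSup {r : ℝ | ∃ f : MvPolynomial (Pairs n) ℝ, f.totalDegree ≤ D ∧
    0 < expec n K q lam (fun _ y => evalY n q f y ^ 2) ∧
    r = expec n K q lam (fun z y => evalY n q f y * xind n K i0 i1 z) ^ 2 /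
        expec n K q lam (fun _ y => evalY n q f y ^ 2)}

set_option linter.unusedSectionVars false

/-! ### Expectations under product weights -/

section ProductExpectation

variable {ι α : Type*} [Fintype ι] [DecidableEq ι] [Fintype α]

/-- Expectation of `f` under the product of the (signed) weights `w i`, `i : ι`. -/
def pE (w : ι → α → ℝ) (f : (ι → α) → ℝ) : ℝ := ∑ x, (∏ i, w i (x i)) * f x

lemma pE_prod (w : ι → α → ℝ) (g : ι → α → ℝ) :
    pE w (fun x => ∏ i, g i (x i)) = ∏ i, ∑ a, w i a * g i a := by
  rw [Finset.prod_univ_sum, Fintype.piFinset_univ]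
  simp only [pE, Finset.prod_mul_distrib]

lemma pE_one (w : ι → α → ℝ) (hw : ∀ i, ∑ a, w i a = 1) : pE w (fun _ => 1) = 1 := by
  have := pE_prod w (fun _ _ => 1)
  simpa [hw] using this

lemma pE_add (w : ι → α → ℝ) (f g : (ι → α) → ℝ) :
    pE w (fun x => f x + g x) = pE w f + pE w g := by
  simp [pE, mul_add, Finset.sum_add_distrib]

lemma pE_const_mul (w : ι → α → ℝ) (c : ℝ) (f : (ι → α) → ℝ) :
    pE w (fun x => c * f x) = c * pE w f := by
  simp only [pE, Finset.mul_sum]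
  exact Finset.sum_congr rfl fun x _ => by ring

lemma pE_sum {κ : Type*} (s : Finset κ) (w : ι → α → ℝ) (f : κ → (ι → α) → ℝ) :
    pE w (fun x => ∑ k ∈ s, f k x) = ∑ k ∈ s, pE w (f k) := by
  simp only [pE, Finset.mul_sum]
  exact Finset.sum_comm

lemma pE_mono (w : ι → α → ℝ) (hw : ∀ i a, 0 ≤ w i a) {f g : (ι → α) → ℝ}
    (h : ∀ x, f x ≤ g x) : pE w f ≤ pE w g :=
  Finset.sum_le_sum fun x _ =>
    mul_le_mul_of_nonneg_left (h x) (Finset.prod_nonneg fun i _ => hw i _)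

lemma piecewise_swap_involutive (A : Set ι) :
    Function.Involutive (fun p : (ι → α) × (ι → α) =>
      (A.piecewise p.1 p.2, A.piecewise p.2 p.1)) := by
  rintro ⟨x, y⟩
  ext i <;> by_cases h : i ∈ A <;> simp [h]

/-- Exchanging the coordinates outside `A` of two points is a bijection of pairs of points. -/
lemma sum_piecewise_swap (A : Set ι) (Φ : (ι → α) → (ι → α) → ℝ) :
    ∑ x, ∑ y, Φ (A.piecewise x y) (A.piecewise y x) = ∑ x, ∑ y, Φ x y := by
  rw [← Fintype.sum_prod_type', ← Fintype.sum_prod_type']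
  exact Equiv.sum_comp (Function.Involutive.toPerm _ (piecewise_swap_involutive A))
    (fun p : (ι → α) × (ι → α) => Φ p.1 p.2)

lemma dependsOn_piecewise {f : (ι → α) → ℝ} {A : Set ι} (hf : DependsOn f A) (x y : ι → α) :
    f (A.piecewise x y) = f x :=
  hf fun i hi => by simp [hi]

lemma dependsOn_compl_piecewise {f : (ι → α) → ℝ} {A : Set ι} (hf : DependsOn f Aᶜ)
    (x y : ι → α) : f (A.piecewise x y) = f y :=
  hf fun i hi => by simp [show i ∉ A from hi]

/-- Independence and change of weights at once: `w' = w` gives the factorization `pE_mul`, and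
`g = 1` the insensitivity `pE_congr_weight` to the weights outside `A`. -/
lemma pE_mul_pE (w w' : ι → α → ℝ) (A : Set ι) (hA : ∀ i ∈ A, w i = w' i)
    {f g : (ι → α) → ℝ} (hf : DependsOn f A) (hg : DependsOn g Aᶜ) :
    pE w f * pE w' g = pE w' (fun x => f x * g x) * pE w (fun _ => 1) := by
  simp only [pE, Finset.sum_mul_sum]
  rw [← sum_piecewise_swap A]
  refine Finset.sum_congr rfl fun x _ => Finset.sum_congr rfl fun y _ => ?_
  rw [dependsOn_piecewise hf, dependsOn_compl_piecewise hg]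
  have : (∏ i, w i (A.piecewise x y i)) * (∏ i, w' i (A.piecewise y x i)) =
      (∏ i, w' i (x i)) * ∏ i, w i (y i) := by
    rw [← Finset.prod_mul_distrib, ← Finset.prod_mul_distrib]
    refine Finset.prod_congr rfl fun i _ => ?_
    by_cases h : i ∈ A
    · simp [h, hA i h]
    · simp [h, mul_comm]
  linear_combination (f x * g x) * this

lemma pE_mul (w : ι → α → ℝ) (hw : ∀ i, ∑ a, w i a = 1) (A : Set ι)
    {f g : (ι → α) → ℝ} (hf : DependsOn f A) (hg : DependsOn g Aᶜ) :
    pE w (fun x => f x * g x) = pE w f * pE w g := by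
  rw [pE_mul_pE w w A (fun _ _ => rfl) hf hg, pE_one w hw, mul_one]

lemma pE_congr_weight (w w' : ι → α → ℝ) (hw : ∀ i, ∑ a, w i a = 1)
    (hw' : ∀ i, ∑ a, w' i a = 1) (A : Set ι) (hA : ∀ i ∈ A, w i = w' i)
    {f : (ι → α) → ℝ} (hf : DependsOn f A) : pE w f = pE w' f := by
  have := pE_mul_pE w w' A hA hf (g := fun _ => 1) (fun _ _ _ => rfl)
  simpa [pE_one w hw, pE_one w' hw'] using this

end ProductExpectation

/-! ### Edge sets, their vertices and components -/

section Graphs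

variable {n : ℕ}

/-- The two endpoints of an edge. -/
def ends (p : Pairs n) : Finset (Fin n) := {p.1.1, p.1.2}

/-- The vertices touched by a set of edges. -/
def verts (G : Finset (Pairs n)) : Finset (Fin n) := G.biUnion ends

lemma mem_ends {p : Pairs n} {v : Fin n} : v ∈ ends p ↔ v = p.1.1 ∨ v = p.1.2 := by
  simp [ends]

lemma mem_verts {G : Finset (Pairs n)} {v : Fin n} : v ∈ verts G ↔ ∃ p ∈ G, v ∈ ends p := by
  simp [verts]

lemma verts_mono {G H : Finset (Pairs n)} (h : G ⊆ H) : verts G ⊆ verts H :=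
  Finset.biUnion_subset_biUnion_of_subset_left _ h

lemma verts_union (G H : Finset (Pairs n)) : verts (G ∪ H) = verts G ∪ verts H :=
  Finset.union_biUnion

lemma card_ends (p : Pairs n) : (ends p).card = 2 := Finset.card_pair p.2.ne

lemma card_verts_le (G : Finset (Pairs n)) : (verts G).card ≤ 2 * G.card := by
  refine Finset.card_biUnion_le.trans ?_
  simp [card_ends, mul_comm]

lemma ends_subset_verts {G : Finset (Pairs n)} {p : Pairs n} (h : p ∈ G) : ends p ⊆ verts G :=
  fun _ hv => mem_verts.2 ⟨p, h, hv⟩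

lemma verts_nonempty {G : Finset (Pairs n)} (h : G.Nonempty) : (verts G).Nonempty := by
  obtain ⟨p, hp⟩ := h
  exact ⟨p.1.1, mem_verts.2 ⟨p, hp, by simp [ends]⟩⟩

lemma disjoint_of_verts {G H : Finset (Pairs n)} (h : Disjoint (verts G) (verts H)) :
    Disjoint G H := by
  rw [Finset.disjoint_left] at h ⊢
  intro p hG hH
  exact h (ends_subset_verts hG (by simp [ends] : p.1.1 ∈ ends p))
    (ends_subset_verts hH (by simp [ends]))

/-- `C` is a union of connected components of `G`: no vertex is shared with the other edges. -/
def IsClosedIn (C G : Finset (Pairs n)) : Prop :=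
  C ⊆ G ∧ Disjoint (verts C) (verts (G \ C))

/-- The connected components of the graph with edge set `G` (isolated vertices are ignored),
encoded as the atoms of the Boolean algebra of closed subsets of `G`. -/
def comps (G : Finset (Pairs n)) : Finset (Finset (Pairs n)) :=
  G.powerset.filter fun C =>
    IsClosedIn C G ∧ C.Nonempty ∧ ∀ B ⊆ C, B.Nonempty → IsClosedIn B G → B = C

lemma mem_comps {C G : Finset (Pairs n)} : C ∈ comps G ↔
    IsClosedIn C G ∧ C.Nonempty ∧ ∀ B ⊆ C, B.Nonempty → IsClosedIn B G → B = C := by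
  simp only [comps, Finset.mem_filter, Finset.mem_powerset, and_iff_right_iff_imp]
  exact fun h => h.1.1

lemma isClosedIn_iff {C G : Finset (Pairs n)} : IsClosedIn C G ↔
    C ⊆ G ∧ ∀ p ∈ C, ∀ p' ∈ G, ∀ v, v ∈ ends p → v ∈ ends p' → p' ∈ C := by
  refine and_congr_right fun _ => ?_
  rw [Finset.disjoint_left]
  constructor
  · intro h p hp p' hp' v hv hv'
    by_contra hC
    exact h (mem_verts.2 ⟨p, hp, hv⟩) (mem_verts.2 ⟨p', by simp [hp', hC], hv'⟩)
  · intro h v hv hv'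
    obtain ⟨p, hp, hv⟩ := mem_verts.1 hv
    obtain ⟨p', hp', hv'⟩ := mem_verts.1 hv'
    rw [Finset.mem_sdiff] at hp'
    exact hp'.2 (h p hp p' hp'.1 v hv hv')

lemma IsClosedIn.inter {B C G : Finset (Pairs n)} (hB : IsClosedIn B G) (hC : IsClosedIn C G) :
    IsClosedIn (B ∩ C) G := by
  rw [isClosedIn_iff] at *
  refine ⟨fun p hp => hB.1 (Finset.mem_inter.1 hp).1, fun p hp p' hp' v hv hv' => ?_⟩
  rw [Finset.mem_inter] at hp ⊢
  exact ⟨hB.2 p hp.1 p' hp' v hv hv', hC.2 p hp.2 p' hp' v hv hv'⟩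

lemma IsClosedIn.compl {C G : Finset (Pairs n)} (hC : IsClosedIn C G) : IsClosedIn (G \ C) G :=
  ⟨Finset.sdiff_subset, by
    rw [Finset.sdiff_sdiff_eq_self hC.1]; exact hC.2.symm⟩

lemma IsClosedIn.sdiff {B C G : Finset (Pairs n)} (hB : IsClosedIn B G) (hC : IsClosedIn C G) :
    IsClosedIn (B \ C) G := by
  have := hB.inter hC.compl
  rwa [← Finset.inter_sdiff_assoc, Finset.inter_eq_left.2 hB.1] at this

lemma IsClosedIn.trans {B C G : Finset (Pairs n)} (hB : IsClosedIn B C) (hC : IsClosedIn C G) :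
    IsClosedIn B G := by
  rw [isClosedIn_iff] at *
  refine ⟨hB.1.trans hC.1, fun p hp p' hp' v hv hv' => ?_⟩
  exact hB.2 p hp p' (hC.2 p (hB.1 hp) p' hp' v hv hv') v hv hv'

lemma isClosedIn_self (G : Finset (Pairs n)) : IsClosedIn G G := ⟨subset_rfl, by simp [verts]⟩

/-- Every nonempty closed set contains a component. -/
lemma exists_comp_subset {B G : Finset (Pairs n)} (hB : IsClosedIn B G) (hne : B.Nonempty) :
    ∃ C ∈ comps G, C ⊆ B := by
  induction B using Finset.strongInduction with
  | H B ih =>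
    by_cases h : B ∈ comps G
    · exact ⟨B, h, subset_rfl⟩
    · rw [mem_comps] at h
      push Not at h
      obtain ⟨B', hB', hne', hc, hneq⟩ := h hB hne
      obtain ⟨C, hC, hCB⟩ := ih B' (Finset.ssubset_iff_subset_ne.2 ⟨hB', hneq⟩) hc hne'
      exact ⟨C, hC, hCB.trans hB'⟩

lemma comps_disjoint {C C' G : Finset (Pairs n)} (hC : C ∈ comps G) (hC' : C' ∈ comps G)
    (hne : C ≠ C') : Disjoint (verts C) (verts C') := by
  rw [mem_comps] at hC hC'
  have hi : C ∩ C' = ∅ := by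
    by_contra h
    have h := Finset.nonempty_iff_ne_empty.2 h
    have hc := hC.1.inter hC'.1
    exact hne ((hC.2.2 _ Finset.inter_subset_left h hc).symm.trans
      (hC'.2.2 _ Finset.inter_subset_right h hc))
  refine hC.1.2.mono_right (verts_mono ?_)
  intro p hp
  rw [Finset.mem_sdiff]
  exact ⟨hC'.1.1 hp, fun h => by simpa [hi] using Finset.mem_inter.2 ⟨h, hp⟩⟩

lemma biUnion_closed {G : Finset (Pairs n)} {𝒮 : Finset (Finset (Pairs n))} (h : 𝒮 ⊆ comps G) :
    IsClosedIn (𝒮.biUnion id) G := by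
  rw [isClosedIn_iff]
  refine ⟨Finset.biUnion_subset.2 fun C hC => (mem_comps.1 (h hC)).1.1, ?_⟩
  intro p hp p' hp' v hv hv'
  rw [Finset.mem_biUnion] at hp ⊢
  obtain ⟨C, hC, hpC⟩ := hp
  exact ⟨C, hC, (isClosedIn_iff.1 (mem_comps.1 (h hC)).1).2 p hpC p' hp' v hv hv'⟩

lemma biUnion_comps (G : Finset (Pairs n)) : (comps G).biUnion id = G := by
  have hc := biUnion_closed (subset_refl (comps G))
  refine Finset.Subset.antisymm hc.1 ?_
  by_contra h
  obtain ⟨C, hC, hCs⟩ := exists_comp_subset hc.compl (Finset.sdiff_nonempty.2 h)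
  obtain ⟨p, hp⟩ := (mem_comps.1 hC).2.1
  have := hCs hp
  rw [Finset.mem_sdiff, Finset.mem_biUnion] at this
  exact this.2 ⟨C, hC, hp⟩

lemma exists_comp_mem {G : Finset (Pairs n)} {p : Pairs n} (hp : p ∈ G) :
    ∃ C ∈ comps G, p ∈ C := by
  rw [← biUnion_comps G, Finset.mem_biUnion] at hp
  exact hp

lemma comps_pairwiseDisjoint (G : Finset (Pairs n)) :
    (↑(comps G) : Set (Finset (Pairs n))).PairwiseDisjoint id :=
  fun _ hC _ hC' hne => disjoint_of_verts (comps_disjoint hC hC' hne)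

lemma card_comps_le (G : Finset (Pairs n)) : (comps G).card ≤ G.card := by
  calc (comps G).card = ∑ C ∈ comps G, 1 := by simp
    _ ≤ ∑ C ∈ comps G, C.card :=
        Finset.sum_le_sum fun C hC => (mem_comps.1 hC).2.1.card_pos
    _ = G.card := by
        conv_rhs => rw [← biUnion_comps G, Finset.card_biUnion (comps_pairwiseDisjoint G)]
        rfl

/-- A component of `G` that is not a component of `H` touches an edge of the symmetric
difference: it has an edge outside `H`, or `H` has a further edge attached to it. -/
lemma touches_symmDiff {G H C : Finset (Pairs n)} (hC : C ∈ comps G) (hCH : C ∉ comps H) :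
    ∃ v ∈ verts C, v ∈ verts (G \ H ∪ H \ G) := by
  by_cases hsub : C ⊆ H
  · have hnc : ¬ IsClosedIn C H := by
      intro hcl
      refine hCH (mem_comps.2 ⟨hcl, (mem_comps.1 hC).2.1, fun B hBC hB hBH => ?_⟩)
      refine (mem_comps.1 hC).2.2 B hBC hB (IsClosedIn.trans ?_ (mem_comps.1 hC).1)
      exact ⟨hBC, hBH.2.mono_right (verts_mono (Finset.sdiff_subset_sdiff hsub subset_rfl))⟩
    rw [isClosedIn_iff] at hnc
    push Not at hnc
    obtain ⟨p, hp, p', hp', v, hv, hv', hpC⟩ := hnc hsub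
    refine ⟨v, mem_verts.2 ⟨p, hp, hv⟩, mem_verts.2 ⟨p', ?_, hv'⟩⟩
    have : p' ∉ G := fun hG =>
      hpC ((isClosedIn_iff.1 (mem_comps.1 hC).1).2 p hp p' hG v hv hv')
    simp [hp', this]
  · obtain ⟨p, hp, hpH⟩ := Finset.not_subset.1 hsub
    have hpG := (mem_comps.1 hC).1.1 hp
    exact ⟨p.1.1, mem_verts.2 ⟨p, hp, by simp [ends]⟩,
      mem_verts.2 ⟨p, by simp [hpG, hpH], by simp [ends]⟩⟩

/-- The number of components of `G` that are not components of `H` is controlled by the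
symmetric difference, since distinct components touch distinct vertices. -/
lemma card_comps_sdiff_le (G H : Finset (Pairs n)) :
    (comps G \ comps H).card ≤ 2 * (G \ H ∪ H \ G).card := by
  refine le_trans ?_ (card_verts_le _)
  have h : ∀ C ∈ comps G \ comps H, ∃ v, v ∈ verts C ∧ v ∈ verts (G \ H ∪ H \ G) := by
    intro C hC
    rw [Finset.mem_sdiff] at hC
    obtain ⟨v, h1, h2⟩ := touches_symmDiff hC.1 hC.2
    exact ⟨v, h1, h2⟩
  rcases (comps G \ comps H).eq_empty_or_nonempty with h0 | ⟨C₀, hC₀⟩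
  · simp [h0]
  have : Nonempty (Fin n) := ⟨(h C₀ hC₀).choose⟩
  choose! v hv using h
  refine Finset.card_le_card_of_injOn v (fun C hC => (hv C hC).2) ?_
  intro C hC C' hC' heq
  by_contra hne
  have hd := comps_disjoint (Finset.mem_sdiff.1 hC).1 (Finset.mem_sdiff.1 hC').1 hne
  exact Finset.disjoint_left.1 hd (hv C hC).1 (heq ▸ (hv C' hC').1)

end Graphs

/-! ### Expectations over the labels -/

section Labels

variable {n K : ℕ}

/-- Expectation over i.i.d. uniform labels. -/
def EZ (φ : Lab n K → ℝ) : ℝ := pE (fun (_ : Fin n) (_ : Fin K) => (K : ℝ)⁻¹) φ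

/-- Indicator that the edge `p` is monochromatic. -/
def mo (z : Lab n K) (p : Pairs n) : ℝ := if z p.1.1 = z p.1.2 then 1 else 0

/-- Indicator that all edges of `F` are monochromatic. -/
def mono (F : Finset (Pairs n)) (z : Lab n K) : ℝ := ∏ p ∈ F, mo z p

lemma mo_nonneg (z : Lab n K) (p : Pairs n) : 0 ≤ mo z p := by unfold mo; split_ifs <;> norm_num
lemma mo_le_one (z : Lab n K) (p : Pairs n) : mo z p ≤ 1 := by unfold mo; split_ifs <;> norm_num
lemma mo_sq (z : Lab n K) (p : Pairs n) : mo z p * mo z p = mo z p := by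
  unfold mo; split_ifs <;> norm_num

lemma mono_nonneg (F : Finset (Pairs n)) (z : Lab n K) : 0 ≤ mono F z :=
  Finset.prod_nonneg fun p _ => mo_nonneg z p

lemma mono_le_one (F : Finset (Pairs n)) (z : Lab n K) : mono F z ≤ 1 :=
  Finset.prod_le_one (fun p _ => mo_nonneg z p) fun p _ => mo_le_one z p

lemma mono_eq (F : Finset (Pairs n)) (z : Lab n K) :
    mono F z = if ∀ p ∈ F, z p.1.1 = z p.1.2 then 1 else 0 := by
  split_ifs with h
  · exact Finset.prod_eq_one fun p hp => by simp [mo, h p hp]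
  · push Not at h
    obtain ⟨p, hp, hne⟩ := h
    exact Finset.prod_eq_zero hp (by simp [mo, hne])

lemma mono_mul (F F' : Finset (Pairs n)) (z : Lab n K) :
    mono F z * mono F' z = mono (F ∪ F') z := by
  simp only [mono_eq]
  by_cases h : ∀ p ∈ F, z p.1.1 = z p.1.2 <;> by_cases h' : ∀ p ∈ F', z p.1.1 = z p.1.2
  · have : ∀ p ∈ F ∪ F', z p.1.1 = z p.1.2 := fun p hp => by
      rcases Finset.mem_union.1 hp with hp | hp
      exacts [h p hp, h' p hp]
    rw [if_pos h, if_pos h', if_pos this, one_mul]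
  · have : ¬ ∀ p ∈ F ∪ F', z p.1.1 = z p.1.2 := fun H =>
      h' fun p hp => H p (Finset.mem_union_right _ hp)
    rw [if_neg h', if_neg this, mul_zero]
  all_goals
    have : ¬ ∀ p ∈ F ∪ F', z p.1.1 = z p.1.2 := fun H =>
      h fun p hp => H p (Finset.mem_union_left _ hp)
    rw [if_neg h, if_neg this, zero_mul]

lemma weight_nonneg : ∀ (_ : Fin n) (_ : Fin K), 0 ≤ (K : ℝ)⁻¹ := fun _ _ => by positivity

lemma weight_sum (hK : 0 < K) : ∀ _ : Fin n, ∑ _ : Fin K, (K : ℝ)⁻¹ = 1 := fun _ => by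
  have : (K : ℝ) ≠ 0 := by positivity
  simp [this]

lemma EZ_mono {φ ψ : Lab n K → ℝ} (h : ∀ z, φ z ≤ ψ z) : EZ φ ≤ EZ ψ :=
  pE_mono _ weight_nonneg h

lemma EZ_nonneg {φ : Lab n K → ℝ} (h : ∀ z, 0 ≤ φ z) : 0 ≤ EZ φ :=
  Finset.sum_nonneg fun z _ =>
    mul_nonneg (Finset.prod_nonneg fun i _ => weight_nonneg i (z i)) (h z)

lemma EZ_one (hK : 0 < K) : EZ (fun _ : Lab n K => (1 : ℝ)) = 1 := pE_one _ (weight_sum hK)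

lemma EZ_eq (φ : Lab n K → ℝ) : EZ φ = (K : ℝ)⁻¹ ^ n * ∑ z, φ z := by
  simp [EZ, pE, Finset.mul_sum]

/-- The label vectors for which all edges of `F` are monochromatic form a subgroup of
`(ℤ/K)ⁿ`. -/
def monoSub [NeZero K] (F : Finset (Pairs n)) : AddSubgroup (Lab n K) where
  carrier := {z | ∀ p ∈ F, z p.1.1 = z p.1.2}
  add_mem' := by
    intro a b ha hb p hp
    simp [ha p hp, hb p hp]
  zero_mem' := by intro p _; rfl
  neg_mem' := by
    intro a ha p hp
    simp [ha p hp]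

lemma EZ_mono_eq [NeZero K] (F : Finset (Pairs n)) :
    EZ (mono (K := K) F) = ((monoSub (K := K) F).index : ℝ)⁻¹ := by
  have hK : (K : ℝ) ≠ 0 := by exact_mod_cast NeZero.ne K
  have h1 := (monoSub (K := K) F).card_mul_index
  have h2 : Nat.card (Lab n K) = K ^ n := by simp
  rw [h2] at h1
  have h3 : (∑ z, mono (K := K) F z) = Nat.card (monoSub (K := K) F) := by
    simp only [mono_eq]
    rw [Finset.sum_boole, Nat.cast_inj]
    symm
    refine Nat.subtype_card _ fun z => ?_
    rw [Finset.mem_filter]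
    exact ⟨fun h => h.2, fun h => ⟨Finset.mem_univ _, h⟩⟩
  have hi : ((monoSub (K := K) F).index : ℝ) ≠ 0 := by
    exact_mod_cast AddSubgroup.index_ne_zero_of_finite
  rw [EZ_eq, h3]
  have h4 : (Nat.card (monoSub (K := K) F) : ℝ) * (monoSub (K := K) F).index = (K : ℝ) ^ n := by
    exact_mod_cast h1
  rw [inv_pow, ← h4]
  have hc : (Nat.card (monoSub (K := K) F) : ℝ) ≠ 0 := by
    exact_mod_cast Nat.card_pos.ne'
  field_simp

/-- Monochromaticity events are positively correlated, because the index of an intersection of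
subgroups is at most the product of the indices. -/
lemma EZ_mono_mul_le (hK : 0 < K) (F F' : Finset (Pairs n)) :
    EZ (mono (K := K) F) * EZ (mono (K := K) F') ≤ EZ (mono (K := K) (F ∪ F')) := by
  have : NeZero K := ⟨hK.ne'⟩
  rw [EZ_mono_eq, EZ_mono_eq, EZ_mono_eq, ← mul_inv]
  have h : monoSub (K := K) (F ∪ F') = monoSub F ⊓ monoSub F' := by
    ext z
    constructor
    · exact fun h => ⟨fun p hp => h p (Finset.mem_union_left _ hp),
        fun p hp => h p (Finset.mem_union_right _ hp)⟩
    · rintro ⟨h, h'⟩ p hp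
      rcases Finset.mem_union.1 hp with hp | hp
      exacts [h p hp, h' p hp]
  have hi : (0 : ℝ) < ((monoSub (K := K) (F ∪ F')).index : ℝ) := by
    exact_mod_cast Nat.pos_of_ne_zero AddSubgroup.index_ne_zero_of_finite
  apply inv_anti₀ hi
  rw [h]
  exact_mod_cast AddSubgroup.index_inf_le

lemma EZ_mono_pos (hK : 0 < K) (F : Finset (Pairs n)) : 0 < EZ (mono (K := K) F) := by
  have : NeZero K := ⟨hK.ne'⟩
  rw [EZ_mono_eq]
  have : 0 < (monoSub (K := K) F).index :=
    Nat.pos_of_ne_zero AddSubgroup.index_ne_zero_of_finite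
  positivity

lemma EZ_const_mul (c : ℝ) (φ : Lab n K → ℝ) : EZ (fun z => c * φ z) = c * EZ φ :=
  pE_const_mul _ c φ

lemma EZ_add (φ ψ : Lab n K → ℝ) : EZ (fun z => φ z + ψ z) = EZ φ + EZ ψ := pE_add _ φ ψ

lemma EZ_sum {κ : Type*} (s : Finset κ) (φ : κ → Lab n K → ℝ) :
    EZ (fun z => ∑ k ∈ s, φ k z) = ∑ k ∈ s, EZ (φ k) := pE_sum s _ φ

/-- Positive correlation of a monochromaticity event with a product of factors that increase on
monochromatic edges. -/
lemma EZ_mono_mul_prod_le (hK : 0 < K) (C : Finset (Pairs n)) (α β : Pairs n → ℝ)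
    (hα : ∀ p, 0 ≤ α p) (hβ : ∀ p, 0 ≤ β p) :
    EZ (mono (K := K) C) * EZ (fun z : Lab n K => ∏ p, (β p * mo z p + α p)) ≤
      EZ (fun z : Lab n K => mono C z * ∏ p, (β p * mo z p + α p)) := by
  have hexp : ∀ z : Lab n K, ∏ p, (β p * mo z p + α p) =
      ∑ F ∈ (Finset.univ : Finset (Pairs n)).powerset,
        ((∏ p ∈ F, β p) * ∏ p ∈ Finset.univ \ F, α p) * mono F z := by
    intro z
    rw [Finset.prod_add]
    refine Finset.sum_congr rfl fun F _ => ?_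
    rw [Finset.prod_mul_distrib, mono]; ring
  simp only [hexp, Finset.mul_sum]
  rw [EZ_sum, EZ_sum, Finset.mul_sum]
  refine Finset.sum_le_sum fun F _ => ?_
  rw [EZ_const_mul]
  have h1 : (fun z : Lab n K => mono C z *
      (((∏ p ∈ F, β p) * ∏ p ∈ Finset.univ \ F, α p) * mono F z)) =
      fun z => ((∏ p ∈ F, β p) * ∏ p ∈ Finset.univ \ F, α p) * mono (C ∪ F) z := by
    funext z; rw [← mono_mul]; ring
  rw [h1, EZ_const_mul]
  have h2 : 0 ≤ (∏ p ∈ F, β p) * ∏ p ∈ Finset.univ \ F, α p :=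
    mul_nonneg (Finset.prod_nonneg fun p _ => hβ p) (Finset.prod_nonneg fun p _ => hα p)
  calc _ = ((∏ p ∈ F, β p) * ∏ p ∈ Finset.univ \ F, α p) *
        (EZ (mono (K := K) C) * EZ (mono (K := K) F)) := by ring
    _ ≤ _ := mul_le_mul_of_nonneg_left (EZ_mono_mul_le hK C F) h2

/-- Shift of the labels in `A` by the colour `a`. -/
def shift [NeZero K] (A : Finset (Fin n)) (a : Fin K) (z : Lab n K) : Lab n K :=
  fun v => if v ∈ A then z v + a else z v

lemma shift_bijective [NeZero K] (A : Finset (Fin n)) (a : Fin K) :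
    Function.Bijective (shift (n := n) A a) := by
  have h : ∀ b : Fin K, ∀ z : Lab n K, shift A (-b) (shift A b z) = z := by
    intro b z; funext v; by_cases hv : v ∈ A <;> simp [shift, hv]
  refine ⟨fun z z' hz => ?_, fun z => ⟨shift A (-a) z, by simpa using h (-a) z⟩⟩
  rw [← h a z, hz, h a z']

/-- If a function is unchanged when the labels in a set separating `i` from `j` are shifted, it
is uncorrelated with the event `z i = z j`. -/
lemma EZ_shift [NeZero K] (A : Finset (Fin n)) {i j : Fin n} (hi : i ∈ A) (hj : j ∉ A)
    (φ : Lab n K → ℝ) (hφ : ∀ a z, φ (shift A a z) = φ z) :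
    EZ (fun z => φ z * ((if z i = z j then 1 else 0) - 1 / (K : ℝ))) = 0 := by
  have hK : (K : ℝ) ≠ 0 := by exact_mod_cast NeZero.ne K
  rw [EZ_eq]
  have h1 : ∀ a : Fin K, ∑ z : Lab n K, φ z * ((if z i = z j then 1 else 0) - 1 / (K : ℝ)) =
      ∑ z : Lab n K, φ z * ((if z i + a = z j then 1 else 0) - 1 / (K : ℝ)) := by
    intro a
    rw [← (shift_bijective A a).sum_comp]
    refine Finset.sum_congr rfl fun z _ => ?_
    rw [hφ]
    simp only [shift, hi, hj, if_true, if_false]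
  have h2 : (K : ℝ) * ∑ z : Lab n K, φ z * ((if z i = z j then 1 else 0) - 1 / (K : ℝ)) = 0 := by
    calc _ = ∑ a : Fin K, ∑ z : Lab n K,
          φ z * ((if z i = z j then 1 else 0) - 1 / (K : ℝ)) := by simp
      _ = ∑ a : Fin K, ∑ z : Lab n K,
          φ z * ((if z i + a = z j then 1 else 0) - 1 / (K : ℝ)) :=
          Finset.sum_congr rfl fun a _ => h1 a
      _ = 0 := by
          rw [Finset.sum_comm]
          refine Finset.sum_eq_zero fun z _ => ?_
          rw [← Finset.mul_sum, Finset.sum_sub_distrib]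
          have : ∀ a : Fin K, (z i + a = z j) ↔ a = z j - z i := fun a => by
            rw [eq_sub_iff_add_eq, add_comm]
          simp [this, hK]
  rcases mul_eq_zero.1 h2 with h | h
  · exact absurd h hK
  · rw [h, mul_zero]

lemma EZ_mono_singleton (hK : 0 < K) (p : Pairs n) :
    EZ (mono (K := K) {p}) = (K : ℝ)⁻¹ := by
  have : NeZero K := ⟨hK.ne'⟩
  have h := EZ_shift (K := K) {p.1.1} (i := p.1.1) (j := p.1.2) (by simp)
    (by simpa using p.2.ne') (fun _ => 1) (fun _ _ => rfl)
  have h1 : (fun z : Lab n K => (1 : ℝ) * ((if z p.1.1 = z p.1.2 then 1 else 0) - 1 / (K : ℝ))) =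
      fun z => mono {p} z + -(K : ℝ)⁻¹ * 1 := by
    funext z; simp [mono, mo, sub_eq_add_neg]
  rw [h1, EZ_add, EZ_const_mul, EZ_one hK] at h
  linarith

/-- If no nonempty union of components of `U` lives inside the vertex set `W`, then
monochromaticity of `U` determines the labels on `W` from those off `W`, which costs a factor
`1/K` for each vertex of `W`. -/
lemma EZ_det (hK : 0 < K) (U : Finset (Pairs n)) (W : Finset (Fin n)) (hW : W ⊆ verts U)
    (hB : ∀ B, B.Nonempty → IsClosedIn B U → ¬ verts B ⊆ W)
    (φ : Lab n K → ℝ) (hφ0 : ∀ z, 0 ≤ φ z) (hφ : DependsOn φ ((W : Set (Fin n))ᶜ)) :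
    EZ (fun z => φ z * mono U z) ≤ (K : ℝ)⁻¹ ^ W.card * EZ φ := by
  obtain ⟨A, hA⟩ : ∃ A : Set (Fin n), A = (W : Set (Fin n))ᶜ := ⟨_, rfl⟩
  rw [← hA] at hφ
  have huniq : ∀ z z' : Lab n K, (∀ i ∉ W, z i = z' i) → (∀ p ∈ U, z p.1.1 = z p.1.2) →
      (∀ p ∈ U, z' p.1.1 = z' p.1.2) → ∀ i ∈ W, z i = z' i := by
    intro z z' hoff hz hz'
    set B := U.filter (fun p => z p.1.1 ≠ z' p.1.1) with hBdef
    have hends : ∀ p ∈ U, ∀ v ∈ ends p, z v = z p.1.1 ∧ z' v = z' p.1.1 := by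
      intro p hp v hv
      rcases mem_ends.1 hv with rfl | rfl
      · exact ⟨rfl, rfl⟩
      · exact ⟨(hz p hp).symm, (hz' p hp).symm⟩
    have hcl : IsClosedIn B U := by
      rw [isClosedIn_iff]
      refine ⟨Finset.filter_subset _ _, fun p hp p' hp' v hv hv' => ?_⟩
      rw [hBdef, Finset.mem_filter] at hp ⊢
      refine ⟨hp', ?_⟩
      rw [← (hends p' hp' v hv').1, ← (hends p' hp' v hv').2, (hends p hp.1 v hv).1,
        (hends p hp.1 v hv).2]
      exact hp.2
    have hBW : verts B ⊆ W := by
      intro v hv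
      obtain ⟨p, hp, hv⟩ := mem_verts.1 hv
      rw [hBdef, Finset.mem_filter] at hp
      by_contra hvW
      have := hoff v hvW
      rw [(hends p hp.1 v hv).1, (hends p hp.1 v hv).2] at this
      exact hp.2 this
    have hBe : B = ∅ := by
      by_contra h
      exact hB B (Finset.nonempty_iff_ne_empty.2 h) hcl hBW
    intro i hi
    obtain ⟨p, hp, hv⟩ := mem_verts.1 (hW hi)
    rw [(hends p hp i hv).1, (hends p hp i hv).2]
    by_contra hne
    have : p ∈ B := by rw [hBdef, Finset.mem_filter]; exact ⟨hp, hne⟩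
    rw [hBe] at this
    simp at this
  have hfib : ∀ z : Lab n K, EZ (fun z' => mono U (A.piecewise z z')) ≤ (K : ℝ)⁻¹ ^ W.card := by
    intro z
    by_cases hex : ∃ g : Lab n K, ∀ p ∈ U, (A.piecewise z g) p.1.1 = (A.piecewise z g) p.1.2
    · obtain ⟨g, hg⟩ := hex
      have h1 : EZ (fun z' => mono U (A.piecewise z z')) ≤
          EZ (fun z' : Lab n K => ∏ i, (if i ∈ W then (if z' i = g i then (1 : ℝ) else 0)
            else 1)) := by
        refine EZ_mono fun z' => ?_
        rw [mono_eq]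
        split_ifs with h
        · refine (Finset.prod_eq_one fun i _ => ?_).ge
          split_ifs with hi hz
          · rfl
          · exfalso
            apply hz
            have := huniq (A.piecewise z z') (A.piecewise z g) (fun i hi => by
              simp [hA, Set.piecewise, hi]) h hg i hi
            simpa [hA, Set.piecewise, hi] using this
          · rfl
        · exact Finset.prod_nonneg fun i _ => by split_ifs <;> norm_num
      refine h1.trans ?_
      rw [EZ, pE_prod (fun (_ : Fin n) (_ : Fin K) => (K : ℝ)⁻¹)
        (fun i a => if i ∈ W then (if a = g i then (1 : ℝ) else 0) else 1)]
      have h2 : ∀ i : Fin n, ∑ a : Fin K, (K : ℝ)⁻¹ *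
          (if i ∈ W then (if a = g i then (1 : ℝ) else 0) else 1) =
          if i ∈ W then (K : ℝ)⁻¹ else 1 := by
        intro i
        have := weight_sum (n := n) hK i
        split_ifs with hi
        · simp
        · simpa using this
      rw [Finset.prod_congr rfl fun i _ => h2 i, Finset.prod_ite]
      simp
    · push Not at hex
      have : (fun z' => mono U (A.piecewise z z')) = fun _ : Lab n K => (0 : ℝ) * 1 := by
        funext z'
        rw [mono_eq, if_neg]
        · simp
        · push Not; exact hex z'
      rw [this, EZ_const_mul, zero_mul]
      positivity
  have hsw : EZ (fun z => φ z * mono U z) =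
      EZ (fun z => φ z * EZ (fun z' => mono U (A.piecewise z z'))) := by
    have h1 : EZ (fun z => φ z * mono U z) =
        EZ (fun z => φ z * mono U z) * EZ (fun _ : Lab n K => (1 : ℝ)) := by
      rw [EZ_one hK, mul_one]
    rw [h1]
    have key := sum_piecewise_swap A (fun z _ : Lab n K => φ z * mono U z)
    simp only [dependsOn_piecewise hφ] at key
    have h2 : (∑ z : Lab n K, φ z * mono U z) * ∑ _ : Lab n K, (1 : ℝ) =
        ∑ z : Lab n K, ∑ _ : Lab n K, φ z * mono U z := by
      rw [Finset.sum_mul_sum]; simp only [mul_one]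
    simp only [EZ_eq]
    calc _ = (K : ℝ)⁻¹ ^ n * (K : ℝ)⁻¹ ^ n *
          ((∑ z : Lab n K, φ z * mono U z) * ∑ _ : Lab n K, (1 : ℝ)) := by ring
      _ = (K : ℝ)⁻¹ ^ n * (K : ℝ)⁻¹ ^ n *
          ∑ z : Lab n K, ∑ z' : Lab n K, φ z * mono U (A.piecewise z z') := by rw [h2, ← key]
      _ = _ := by
          rw [mul_assoc, Finset.mul_sum]
          congr 1
          refine Finset.sum_congr rfl fun z _ => ?_
          rw [← Finset.mul_sum]
          ring
  rw [hsw, ← EZ_const_mul]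
  refine EZ_mono fun z => ?_
  rw [mul_comm]
  exact mul_le_mul_of_nonneg_right (hfib z) (hφ0 z)

end Labels

/-! ### Conditional expectation given the labels -/

section Moments

variable {n K : ℕ} (q lam : ℝ)

/-- The centred observation `Y_p`. -/
def yv (y : EdgeConf n) (p : Pairs n) : ℝ := (if y p then 1 else 0) - q

/-- The monomial `∏_{p ∈ S} Y_p`. -/
def PP (S : Finset (Pairs n)) (y : EdgeConf n) : ℝ := ∏ p ∈ S, yv q y p

/-- The law of the edge `p` given the labels. -/
def we (z : Lab n K) (p : Pairs n) (b : Bool) : ℝ :=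
  if b then pEdge n K q lam z p else 1 - pEdge n K q lam z p

/-- Conditional expectation given the labels. -/
def CE (z : Lab n K) (F : EdgeConf n → ℝ) : ℝ := pE (we q lam z) F

/-- Expectation of a function of the observations. -/
def EY (K : ℕ) (F : EdgeConf n → ℝ) : ℝ := EZ (fun z : Lab n K => CE q lam z F)

lemma expec_eq (F : EdgeConf n → ℝ) (φ : Lab n K → ℝ) :
    expec n K q lam (fun z y => F y * φ z) = EZ (fun z => CE q lam z F * φ z) := by
  simp only [expec, EZ_eq, CE, pE, Finset.mul_sum, Finset.sum_mul]
  refine Finset.sum_congr rfl fun z _ => Finset.sum_congr rfl fun y _ => ?_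
  simp only [wt, we]
  ring

lemma expec_eq' (F : EdgeConf n → ℝ) :
    expec n K q lam (fun _ y => F y) = EY q lam K F := by
  have := expec_eq (K := K) q lam F (fun _ => 1)
  simpa [EY] using this

lemma we_sum (z : Lab n K) (p : Pairs n) : ∑ b, we q lam z p b = 1 := by
  simp [we]

lemma pEdge_eq (z : Lab n K) (p : Pairs n) : pEdge n K q lam z p = q + lam * mo z p := by
  unfold pEdge mo; split_ifs <;> ring

lemma we_nonneg (hq0 : 0 ≤ q) (hlam : 0 ≤ lam) (h1 : q + lam ≤ 1) (z : Lab n K) (p : Pairs n)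
    (b : Bool) : 0 ≤ we q lam z p b := by
  have := mo_nonneg z p
  have := mo_le_one z p
  have : lam * mo z p ≤ lam := by nlinarith
  have : 0 ≤ lam * mo z p := by positivity
  unfold we
  rw [pEdge_eq]
  split_ifs <;> linarith

lemma EY_add (F R : EdgeConf n → ℝ) :
    EY q lam K (fun y => F y + R y) = EY q lam K F + EY q lam K R := by
  simp only [EY, CE, pE_add, EZ_add]

lemma EY_const_mul (c : ℝ) (F : EdgeConf n → ℝ) :
    EY q lam K (fun y => c * F y) = c * EY q lam K F := by
  simp only [EY, CE, pE_const_mul, EZ_const_mul]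

lemma EY_sum {κ : Type*} (s : Finset κ) (F : κ → EdgeConf n → ℝ) :
    EY q lam K (fun y => ∑ k ∈ s, F k y) = ∑ k ∈ s, EY q lam K (F k) := by
  simp only [EY, CE, pE_sum, EZ_sum]

lemma EY_one (hK : 0 < K) : EY q lam K (fun _ : EdgeConf n => (1 : ℝ)) = 1 := by
  simp only [EY, CE, pE_one _ (we_sum q lam _), EZ_one hK]

lemma EY_nonneg (hq0 : 0 ≤ q) (hlam : 0 ≤ lam) (h1 : q + lam ≤ 1) {F : EdgeConf n → ℝ}
    (h : ∀ y, 0 ≤ F y) : 0 ≤ EY q lam K F :=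
  EZ_nonneg fun z => Finset.sum_nonneg fun y _ =>
    mul_nonneg (Finset.prod_nonneg fun p _ => we_nonneg q lam hq0 hlam h1 z p _) (h y)

/-! ### Independence -/

lemma CE_dependsOn {F : EdgeConf n → ℝ} {A : Finset (Pairs n)}
    (hF : DependsOn F (A : Set (Pairs n))) :
    DependsOn (fun z : Lab n K => CE q lam z F) (verts A : Set (Fin n)) := by
  intro z z' h
  refine pE_congr_weight _ _ (we_sum q lam z) (we_sum q lam z') (A : Set (Pairs n)) ?_ hF
  intro p hp
  have h1 : z p.1.1 = z' p.1.1 := h _ (ends_subset_verts hp (by simp [ends]))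
  have h2 : z p.1.2 = z' p.1.2 := h _ (ends_subset_verts hp (by simp [ends]))
  funext b
  simp [we, pEdge, h1, h2]

/-- Functions of the edges of `A` are independent of the edges and labels that avoid the vertices
of `A`. -/
lemma indep (hK : 0 < K) {F R : EdgeConf n → ℝ} {φ : Lab n K → ℝ} {A B : Finset (Pairs n)}
    {W : Finset (Fin n)}
    (hF : DependsOn F (A : Set (Pairs n))) (hR : DependsOn R (B : Set (Pairs n)))
    (hφ : DependsOn φ (W : Set (Fin n))) (hAB : Disjoint (verts A) (verts B))
    (hAW : Disjoint (verts A) W) :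
    EZ (fun z => CE q lam z (fun y => F y * R y) * φ z) =
      EY q lam K F * EZ (fun z => CE q lam z R * φ z) := by
  have h1 : ∀ z : Lab n K, CE q lam z (fun y => F y * R y) = CE q lam z F * CE q lam z R := by
    intro z
    refine pE_mul _ (we_sum q lam z) (A : Set (Pairs n)) hF (hR.mono ?_)
    intro p hp hpA
    exact Finset.disjoint_left.1 (disjoint_of_verts hAB) hpA hp
  simp only [h1, mul_assoc]
  refine pE_mul _ (weight_sum hK) (verts A : Set (Fin n)) (CE_dependsOn q lam hF) ?_
  intro z z' h
  have e1 : CE q lam z R = CE q lam z' R := CE_dependsOn q lam hR fun v hv => h v fun hvA =>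
    Finset.disjoint_left.1 hAB hvA hv
  have e2 : φ z = φ z' := hφ fun v hv => h v fun hvA => Finset.disjoint_left.1 hAW hvA hv
  simp only [e1, e2]

lemma EY_mul (hK : 0 < K) {F R : EdgeConf n → ℝ} {A B : Finset (Pairs n)}
    (hF : DependsOn F (A : Set (Pairs n))) (hR : DependsOn R (B : Set (Pairs n)))
    (hAB : Disjoint (verts A) (verts B)) :
    EY q lam K (fun y => F y * R y) = EY q lam K F * EY q lam K R := by
  have := indep (K := K) q lam hK (φ := fun _ => 1) (W := ∅) hF hR (fun _ _ _ => rfl) hAB (by simp)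
  simpa [EY] using this

lemma PP_dependsOn (S : Finset (Pairs n)) : DependsOn (PP q S) (S : Set (Pairs n)) := by
  intro y y' h
  exact Finset.prod_congr rfl fun p hp => by simp [yv, h p hp]

/-! ### Mixed moments of monomials -/

/-- `∏_{p ∈ G} E[Y_p² | z]`. -/
def DX (G : Finset (Pairs n)) (z : Lab n K) : ℝ :=
  ∏ p ∈ G, (lam * (1 - 2 * q) * mo z p + q * (1 - q))

/-- Constant part of the edge factor in `E[P_A P_B | z]`. -/
def al (A B : Finset (Pairs n)) (p : Pairs n) : ℝ :=
  if p ∈ A then (if p ∈ B then q * (1 - q) else 0) else (if p ∈ B then 0 else 1)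

/-- Coefficient of the monochromaticity indicator in the edge factor of `E[P_A P_B | z]`. -/
def be (A B : Finset (Pairs n)) (p : Pairs n) : ℝ :=
  if p ∈ A then (if p ∈ B then lam * (1 - 2 * q) else lam) else (if p ∈ B then lam else 0)

lemma CE_PP_mul (A B : Finset (Pairs n)) (z : Lab n K) :
    CE q lam z (fun y => PP q A y * PP q B y) =
      ∏ p, (be q lam A B p * mo z p + al q A B p) := by
  have h1 : (fun y : EdgeConf n => PP q A y * PP q B y) = fun y => ∏ p,
      ((if p ∈ A then ((if y p then 1 else 0) - q) else 1) *
        (if p ∈ B then ((if y p then 1 else 0) - q) else 1)) := by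
    funext y
    rw [Finset.prod_mul_distrib, Finset.prod_ite_mem, Finset.prod_ite_mem]
    simp [PP, yv]
  rw [h1, CE, pE_prod (we q lam z) (fun p b =>
      ((if p ∈ A then ((if b then 1 else 0) - q) else 1) *
        (if p ∈ B then ((if b then 1 else 0) - q) else 1)))]
  refine Finset.prod_congr rfl fun p _ => ?_
  simp only [Fintype.sum_bool, we, pEdge_eq, be, al]
  by_cases hA : p ∈ A <;> by_cases hB : p ∈ B <;>
    simp only [hA, hB, if_true, if_false, Bool.false_eq_true] <;> ring

lemma CE_PP_cross (G H : Finset (Pairs n)) (z : Lab n K) :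
    CE q lam z (fun y => PP q G y * PP q H y) =
      lam ^ ((G \ H).card + (H \ G).card) * (DX q lam (G ∩ H) z * mono (G \ H) z *
        mono (H \ G) z) := by
  rw [CE_PP_mul]
  have h1 : ∀ p, be q lam G H p * mo z p + al q G H p =
      (if p ∈ G ∩ H then (lam * (1 - 2 * q) * mo z p + q * (1 - q)) else 1) *
      (if p ∈ G \ H then lam * mo z p else 1) * (if p ∈ H \ G then lam * mo z p else 1) := by
    intro p
    by_cases hG : p ∈ G <;> by_cases hH : p ∈ H <;> simp [be, al, hG, hH]
  rw [Finset.prod_congr rfl fun p _ => h1 p, Finset.prod_mul_distrib, Finset.prod_mul_distrib,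
    Finset.prod_ite_mem, Finset.prod_ite_mem, Finset.prod_ite_mem]
  simp only [Finset.univ_inter, Finset.prod_mul_distrib, Finset.prod_const, DX, mono]
  ring

lemma CE_PP_sq (G : Finset (Pairs n)) (z : Lab n K) :
    CE q lam z (fun y => PP q G y * PP q G y) = DX q lam G z := by
  rw [CE_PP_cross]; simp [mono]

lemma CE_PP (G : Finset (Pairs n)) (z : Lab n K) :
    CE q lam z (PP q G) = lam ^ G.card * mono G z := by
  have e : PP q G = fun y => PP q G y * PP q ∅ y := by funext y; simp [PP]
  rw [e, CE_PP_cross]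
  simp [DX, mono]

end Moments

/-- Standing assumptions on the parameters. -/
structure Good (K : ℕ) (q lam : ℝ) : Prop where
  q0 : 0 ≤ q
  qh : q ≤ 1 / 2
  ql : q + 2 * lam ≤ 1
  lam0 : 0 < lam
  K2 : 2 ≤ K

section MomentBounds

variable {n K : ℕ} {q lam : ℝ}

lemma Good.K0 (h : Good K q lam) : 0 < K := by have := h.K2; omega
lemma Good.ql1 (h : Good K q lam) : q + lam ≤ 1 := by have := h.ql; have := h.lam0; linarith
lemma Good.qb (h : Good K q lam) : 0 ≤ q * (1 - q) := by
  have := h.q0; have := h.qh; nlinarith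
lemma Good.lp (h : Good K q lam) : 0 ≤ lam * (1 - 2 * q) := by
  have := h.qh; have := h.lam0; exact mul_nonneg this.le (by linarith)

lemma Good.al_nonneg (h : Good K q lam) (A B : Finset (Pairs n)) (p : Pairs n) :
    0 ≤ al q A B p := by
  have := h.qb; unfold al; split_ifs <;> first | assumption | norm_num

lemma Good.be_nonneg (h : Good K q lam) (A B : Finset (Pairs n)) (p : Pairs n) :
    0 ≤ be q lam A B p := by
  have := h.lp; have := h.lam0.le; unfold be; split_ifs <;> first | assumption | norm_num

lemma Good.DX_nonneg (h : Good K q lam) (G : Finset (Pairs n)) (z : Lab n K) :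
    0 ≤ DX q lam G z :=
  Finset.prod_nonneg fun p _ => add_nonneg (mul_nonneg h.lp (mo_nonneg z p)) h.qb

lemma Good.lam_sq_le (h : Good K q lam) : lam * lam ≤ lam * (1 - 2 * q) + q * (1 - q) := by
  have := h.q0; have := h.qh; have := h.ql; have := h.lam0
  nlinarith [mul_nonneg h.q0 h.lam0.le, mul_nonneg h.lam0.le (by linarith : 0 ≤ 1 - q - 2 * lam)]

/-- Restoring a removed factor: a product of moments is at most the joint moment. -/
lemma Good.absorb (h : Good K q lam) {A C : Finset (Pairs n)} (B : Finset (Pairs n))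
    (hd : Disjoint C A) :
    EY q lam K (PP q C) * EY q lam K (fun y => PP q A y * PP q B y) ≤
      EY q lam K (fun y => PP q (A ∪ C) y * PP q B y) := by
  have h1 : EY q lam K (PP q C) = lam ^ C.card * EZ (mono (K := K) C) := by
    simp only [EY, CE_PP, EZ_const_mul]
  rw [h1]
  simp only [EY, CE_PP_mul]
  have h2 := EZ_mono_mul_prod_le h.K0 C (al q A B) (be q lam A B) (h.al_nonneg A B)
    (h.be_nonneg A B)
  rw [mul_assoc]
  refine (mul_le_mul_of_nonneg_left h2 (pow_nonneg h.lam0.le _)).trans ?_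
  rw [← EZ_const_mul]
  refine EZ_mono fun z => ?_
  have h3 : lam ^ C.card * (mono C z * ∏ p, (be q lam A B p * mo z p + al q A B p)) =
      ∏ p, ((if p ∈ C then lam * mo z p else 1) * (be q lam A B p * mo z p + al q A B p)) := by
    rw [Finset.prod_mul_distrib, Finset.prod_ite_mem]
    simp only [Finset.univ_inter, Finset.prod_mul_distrib, Finset.prod_const, mono]
    ring
  rw [h3]
  have hmo := mo_nonneg z
  have hl := h.lam0.le
  refine Finset.prod_le_prod (fun p _ => mul_nonneg ?_ (add_nonneg
    (mul_nonneg (h.be_nonneg A B p) (mo_nonneg z p)) (h.al_nonneg A B p))) fun p _ => ?_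
  · split_ifs
    · exact mul_nonneg hl (hmo p)
    · norm_num
  · by_cases hC : p ∈ C
    · have hA : p ∉ A := Finset.disjoint_left.1 hd hC
      by_cases hB : p ∈ B
      · simp only [be, al, hC, hA, hB, Finset.mem_union, or_true, if_true, if_false, add_zero]
        have e := h.lam_sq_le
        have eb := h.qb
        unfold mo
        split_ifs <;> nlinarith
      · simp [be, al, hC, hA, hB, Finset.mem_union]
    · simp [be, al, hC, Finset.mem_union]

lemma EY_PP_sq (G : Finset (Pairs n)) :
    EY q lam K (fun y => PP q G y * PP q G y) = EZ (fun z : Lab n K => DX q lam G z) := by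
  simp only [EY, CE_PP_sq]

lemma EZ_DX_mul_mo (h : Good K q lam) (S : Finset (Pairs n)) (p : Pairs n) :
    (K : ℝ)⁻¹ * EZ (fun z : Lab n K => DX q lam S z) ≤
      EZ (fun z : Lab n K => mo z p * DX q lam S z) := by
  have h2 := EZ_mono_mul_prod_le h.K0 {p} (al q S S) (be q lam S S) (h.al_nonneg S S)
    (h.be_nonneg S S)
  rw [EZ_mono_singleton h.K0] at h2
  simp only [← CE_PP_mul, CE_PP_sq] at h2
  simpa [mono] using h2

lemma EZ_DX_grow (h : Good K q lam) (S U : Finset (Pairs n)) (hd : Disjoint S U) :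
    (lam * (1 - 2 * q) / K + q * (1 - q)) ^ U.card * EZ (fun z : Lab n K => DX q lam S z) ≤
      EZ (fun z : Lab n K => DX q lam (S ∪ U) z) := by
  have hr : 0 ≤ lam * (1 - 2 * q) / K + q * (1 - q) :=
    add_nonneg (div_nonneg h.lp (by positivity)) h.qb
  induction U using Finset.induction_on with
  | empty => simp
  | insert p U hp ih =>
    rw [Finset.disjoint_insert_right] at hd
    have ih := ih hd.2
    have hpn : p ∉ S ∪ U := by simp [hd.1, hp]
    rw [Finset.card_insert_of_notMem hp, Finset.union_insert]
    have h1 : (fun z : Lab n K => DX q lam (insert p (S ∪ U)) z) =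
        fun z => lam * (1 - 2 * q) * (mo z p * DX q lam (S ∪ U) z) +
          q * (1 - q) * DX q lam (S ∪ U) z := by
      funext z; rw [DX, Finset.prod_insert hpn, ← DX]; ring
    rw [h1, EZ_add, EZ_const_mul, EZ_const_mul]
    have h2 := mul_le_mul_of_nonneg_left (EZ_DX_mul_mo h (S ∪ U) p) h.lp
    have h3 := mul_le_mul_of_nonneg_left ih hr
    have h4 : (lam * (1 - 2 * q) / K + q * (1 - q)) * EZ (fun z : Lab n K => DX q lam (S ∪ U) z) =
      lam * (1 - 2 * q) * ((K : ℝ)⁻¹ * EZ (fun z : Lab n K => DX q lam (S ∪ U) z)) +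
        q * (1 - q) * EZ (fun z : Lab n K => DX q lam (S ∪ U) z) := by ring
    rw [pow_succ]
    linarith

lemma EZ_DX_mono (h : Good K q lam) (S U : Finset (Pairs n)) (hd : Disjoint S U) :
    (lam * (1 - 2 * q) + q * (1 - q)) ^ U.card *
      EZ (fun z : Lab n K => DX q lam S z * mono U z) ≤
      EZ (fun z : Lab n K => DX q lam (S ∪ U) z) := by
  rw [← EZ_const_mul]
  refine EZ_mono fun z => ?_
  have h1 : DX q lam (S ∪ U) z = DX q lam S z * DX q lam U z := Finset.prod_union hd
  have h2 : (lam * (1 - 2 * q) + q * (1 - q)) ^ U.card * mono U z ≤ DX q lam U z := by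
    rw [mono, ← Finset.prod_const, ← Finset.prod_mul_distrib]
    have := h.lp
    have := h.qb
    refine Finset.prod_le_prod (fun p _ => mul_nonneg (by linarith) (mo_nonneg z p))
      fun p _ => ?_
    unfold mo; split_ifs <;> linarith
  rw [h1]
  calc _ = DX q lam S z * ((lam * (1 - 2 * q) + q * (1 - q)) ^ U.card * mono U z) := by ring
    _ ≤ _ := mul_le_mul_of_nonneg_left h2 (h.DX_nonneg S z)

end MomentBounds

/-! ### Products of centred components and their moments -/

section Centred

variable {n : ℕ} (K : ℕ) (q lam : ℝ)

/-- The centred monomial `P_C - E[P_C]`. -/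
def PC (C : Finset (Pairs n)) (y : EdgeConf n) : ℝ := PP q C y - EY q lam K (PP q C)

/-- The basis function attached to `G`: the product over the connected components of `G` of the
centred monomials. -/
def PB (G : Finset (Pairs n)) (y : EdgeConf n) : ℝ := ∏ C ∈ comps G, PC K q lam C y

lemma PC_dependsOn (C : Finset (Pairs n)) : DependsOn (PC K q lam C) (C : Set (Pairs n)) := by
  intro y y' h
  simp only [PC, PP_dependsOn q C h]

lemma prod_PC_dependsOn {𝒮 : Finset (Finset (Pairs n))} {A : Finset (Pairs n)}
    (h : ∀ C ∈ 𝒮, C ⊆ A) :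
    DependsOn (fun y => ∏ C ∈ 𝒮, PC K q lam C y) (A : Set (Pairs n)) := by
  intro y y' hy
  exact Finset.prod_congr rfl fun C hC => PC_dependsOn K q lam C fun p hp => hy p (h C hC hp)

lemma dependsOn_mul {F R : EdgeConf n → ℝ} {A : Set (Pairs n)} (hF : DependsOn F A)
    (hR : DependsOn R A) : DependsOn (fun y => F y * R y) A := by
  intro y y' h
  simp only [hF h, hR h]

lemma comps_subset {G C : Finset (Pairs n)} (h : C ∈ comps G) : C ⊆ G := (mem_comps.1 h).1.1

lemma PB_dependsOn (G : Finset (Pairs n)) : DependsOn (PB K q lam G) (G : Set (Pairs n)) :=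
  prod_PC_dependsOn K q lam fun _ => comps_subset

variable {K q lam}

lemma EY_PC (hK : 0 < K) (C : Finset (Pairs n)) : EY q lam K (PC K q lam C) = 0 := by
  have : PC K q lam C = fun y => PP q C y + -EY q lam K (PP q C) * 1 := by
    funext y; simp [PC, sub_eq_add_neg]
  rw [this, EY_add, EY_const_mul, EY_one q lam hK]
  ring

/-- Basis functions are orthogonal as soon as one graph has a component avoiding the other. -/
lemma EY_PB_mul_eq_zero (hK : 0 < K) {G H B : Finset (Pairs n)} (hB : IsClosedIn B H)
    (hne : B.Nonempty) (hd : Disjoint (verts B) (verts G)) :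
    EY q lam K (fun y => PB K q lam G y * PB K q lam H y) = 0 := by
  obtain ⟨C, hC, hCB⟩ := exists_comp_subset hB hne
  have h1 : (fun y => PB K q lam G y * PB K q lam H y) = fun y => PC K q lam C y *
      (PB K q lam G y * ∏ C' ∈ (comps H).erase C, PC K q lam C' y) := by
    funext y
    rw [PB, PB, ← Finset.mul_prod_erase _ _ hC]; ring
  have hC' : ∀ C' ∈ (comps H).erase C, C' ⊆ H \ C := by
    intro C' h p hp
    rw [Finset.mem_erase] at h
    refine Finset.mem_sdiff.2 ⟨comps_subset h.2 hp, fun hpC => ?_⟩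
    exact Finset.disjoint_left.1 (disjoint_of_verts (comps_disjoint h.2 hC h.1)) hp hpC
  rw [h1, EY_mul q lam hK (A := C) (B := G ∪ H \ C) (PC_dependsOn K q lam C) ?_ ?_, EY_PC hK,
    zero_mul]
  · refine dependsOn_mul ((PB_dependsOn K q lam G).mono ?_) (prod_PC_dependsOn K q lam ?_)
    · exact_mod_cast Finset.subset_union_left
    · exact fun C' h => (hC' C' h).trans Finset.subset_union_right
  · rw [verts_union, Finset.disjoint_union_right]
    exact ⟨hd.mono_left (verts_mono hCB), (mem_comps.1 hC).1.2⟩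

/-- Factorization of expectations over vertex-disjoint blocks. -/
lemma EY_prod_mul (hK : 0 < K) (T : Finset (Finset (Pairs n)))
    (hT : ∀ C ∈ T, ∀ C' ∈ T, C ≠ C' → Disjoint (verts C) (verts C'))
    (g : Finset (Pairs n) → EdgeConf n → ℝ) (hg : ∀ C, DependsOn (g C) (C : Set (Pairs n)))
    {R : EdgeConf n → ℝ} {B : Finset (Pairs n)} (hR : DependsOn R (B : Set (Pairs n)))
    (hB : ∀ C ∈ T, Disjoint (verts C) (verts B)) :
    EY q lam K (fun y => (∏ C ∈ T, g C y) * R y) =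
      (∏ C ∈ T, EY q lam K (g C)) * EY q lam K R := by
  induction T using Finset.induction_on with
  | empty => simp
  | insert C T hC ih =>
    have h1 : (fun y => (∏ C ∈ insert C T, g C y) * R y) =
        fun y => g C y * ((∏ C ∈ T, g C y) * R y) := by
      funext y; rw [Finset.prod_insert hC]; ring
    rw [h1, EY_mul q lam hK (A := C) (B := T.biUnion id ∪ B) (hg C) ?_ ?_, ih ?_ ?_,
      Finset.prod_insert hC, mul_assoc]
    · exact fun C' h C'' h' => hT C' (Finset.mem_insert_of_mem h) C'' (Finset.mem_insert_of_mem h')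
    · exact fun C' h => hB C' (Finset.mem_insert_of_mem h)
    · refine dependsOn_mul (fun y y' h => Finset.prod_congr rfl fun C' hC' => hg C' fun p hp =>
        h p ?_) (hR.mono ?_)
      · exact Finset.mem_union_left _ (Finset.mem_biUnion.2 ⟨C', hC', hp⟩)
      · exact_mod_cast Finset.subset_union_right
    · rw [verts_union, Finset.disjoint_union_right]
      refine ⟨?_, hB C (Finset.mem_insert_self _ _)⟩
      rw [Finset.disjoint_left]
      intro v hv hv'
      obtain ⟨p, hp, hvp⟩ := mem_verts.1 hv'
      obtain ⟨C', hC', hp'⟩ := Finset.mem_biUnion.1 hp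
      have := hT C (Finset.mem_insert_self _ _) C' (Finset.mem_insert_of_mem hC')
        (fun h => hC (h ▸ hC'))
      exact Finset.disjoint_left.1 this hv (mem_verts.2 ⟨p, hp', hvp⟩)

lemma PP_union {A C : Finset (Pairs n)} (h : Disjoint C A) (y : EdgeConf n) :
    PP q (A ∪ C) y = PP q C y * PP q A y := by
  rw [PP, Finset.prod_union h.symm, mul_comm]; rfl

lemma Good.EY_PP_nonneg (h : Good K q lam) (C : Finset (Pairs n)) :
    0 ≤ EY q lam K (PP q C) := by
  simp only [EY, CE_PP]
  exact EZ_nonneg fun z => mul_nonneg (pow_nonneg h.lam0.le _) (mono_nonneg C z)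

/-- One centring step doubles the bound. -/
lemma Good.centre_step (h : Good K q lam) {A C : Finset (Pairs n)} (B B' : Finset (Pairs n))
    (R : EdgeConf n → ℝ) (c : ℝ) (hc : 0 ≤ c) (A' : Finset (Pairs n)) (hd : Disjoint C A)
    (hd' : Disjoint C A')
    (h1 : |EY q lam K (fun y => R y * (PP q (A ∪ C) y * PP q B y))| ≤
      c * EY q lam K (fun y => PP q (A' ∪ C) y * PP q B' y))
    (h2 : |EY q lam K (fun y => R y * (PP q A y * PP q B y))| ≤
      c * EY q lam K (fun y => PP q A' y * PP q B' y)) :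
    |EY q lam K (fun y => (PC K q lam C y * R y) * (PP q A y * PP q B y))| ≤
      c * 2 * EY q lam K (fun y => PP q (A' ∪ C) y * PP q B' y) := by
  have e : (fun y => (PC K q lam C y * R y) * (PP q A y * PP q B y)) =
      fun y => R y * (PP q (A ∪ C) y * PP q B y) +
        -EY q lam K (PP q C) * (R y * (PP q A y * PP q B y)) := by
    funext y; rw [PP_union hd, PC]; ring
  rw [e, EY_add, EY_const_mul]
  refine (abs_add_le _ _).trans ?_
  rw [abs_mul, abs_neg, abs_of_nonneg (h.EY_PP_nonneg C)]
  have h3 := mul_le_mul_of_nonneg_left h2 (h.EY_PP_nonneg C)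
  have h4 := mul_le_mul_of_nonneg_left (h.absorb B' hd') hc
  nlinarith

lemma biUnion_insert_id (C : Finset (Pairs n)) (𝒜 : Finset (Finset (Pairs n))) :
    (insert C 𝒜).biUnion id = C ∪ 𝒜.biUnion id := by
  rw [Finset.biUnion_insert]; rfl

/-- Expanding the centred monomials: each one costs a factor two at most. -/
lemma Good.EY_centred_le (h : Good K q lam) (ℬ : Finset (Finset (Pairs n)))
    (hℬ : (ℬ : Set (Finset (Pairs n))).PairwiseDisjoint id) (𝒜 : Finset (Finset (Pairs n)))
    (h𝒜 : (𝒜 : Set (Finset (Pairs n))).PairwiseDisjoint id) (A : Finset (Pairs n))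
    (hA : Disjoint (𝒜.biUnion id) A) :
    |EY q lam K (fun y => ((∏ C ∈ 𝒜, PC K q lam C y) * ∏ C ∈ ℬ, PC K q lam C y) *
        (PP q A y * PP q ∅ y))| ≤
      2 ^ (𝒜.card + ℬ.card) *
        EY q lam K (fun y => PP q (A ∪ 𝒜.biUnion id) y * PP q (ℬ.biUnion id) y) := by
  induction 𝒜 using Finset.induction_on generalizing A with
  | empty =>
    have key : ∀ (ℬ : Finset (Finset (Pairs n))),
        (ℬ : Set (Finset (Pairs n))).PairwiseDisjoint id → ∀ B : Finset (Pairs n),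
        Disjoint (ℬ.biUnion id) B →
        |EY q lam K (fun y => (∏ C ∈ ℬ, PC K q lam C y) * (PP q B y * PP q A y))| ≤
        2 ^ ℬ.card * EY q lam K (fun y => PP q (B ∪ ℬ.biUnion id) y * PP q A y) := by
      intro ℬ hℬ
      induction ℬ using Finset.induction_on with
      | empty =>
        intro B _
        have h0 : 0 ≤ EY q lam K (fun y => PP q B y * PP q A y) := by
          simp only [EY, CE_PP_cross]
          exact EZ_nonneg fun z => mul_nonneg (pow_nonneg h.lam0.le _) (mul_nonneg
            (mul_nonneg (h.DX_nonneg _ z) (mono_nonneg _ z)) (mono_nonneg _ z))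
        simp [abs_of_nonneg h0]
      | insert C ℬ hC ih =>
        intro B hB
        rw [biUnion_insert_id, Finset.disjoint_union_left] at hB
        have hCℬ : Disjoint C (ℬ.biUnion id) := by
          rw [Finset.disjoint_biUnion_right]
          exact fun C' hC' => hℬ (by simp) (by simp [hC']) (fun e => hC (e ▸ hC'))
        have ih := ih (hℬ.subset (by simp))
        have h1 := ih (B ∪ C) (Finset.disjoint_union_right.2 ⟨hB.2, hCℬ.symm⟩)
        have h2 := ih B hB.2
        rw [Finset.union_right_comm] at h1
        have := h.centre_step A A _ _ (by positivity) (B ∪ ℬ.biUnion id) hB.1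
          (Finset.disjoint_union_right.2 ⟨hB.1, hCℬ⟩) h1 h2
        simp only [Finset.prod_insert hC]
        rw [Finset.card_insert_of_notMem hC, pow_succ, biUnion_insert_id,
          Finset.union_comm C, ← Finset.union_assoc]
        exact this
    have := key ℬ hℬ ∅ (by simp)
    simpa [mul_comm] using this
  | insert C 𝒜 hC ih =>
    rw [biUnion_insert_id, Finset.disjoint_union_left] at hA
    have hC𝒜 : Disjoint C (𝒜.biUnion id) := by
      rw [Finset.disjoint_biUnion_right]
      exact fun C' hC' => h𝒜 (by simp) (by simp [hC']) (fun e => hC (e ▸ hC'))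
    have ih := ih (h𝒜.subset (by simp))
    have h1 := ih (A ∪ C) (Finset.disjoint_union_right.2 ⟨hA.2, hC𝒜.symm⟩)
    have h2 := ih A hA.2
    rw [Finset.union_right_comm] at h1
    have := h.centre_step ∅ (ℬ.biUnion id) _ _ (by positivity) (A ∪ 𝒜.biUnion id) hA.1
      (Finset.disjoint_union_right.2 ⟨hA.1, hC𝒜⟩) h1 h2
    simp only [Finset.prod_insert hC]
    rw [Finset.card_insert_of_notMem hC, add_right_comm, pow_succ, biUnion_insert_id,
      Finset.union_comm C, ← Finset.union_assoc]
    simpa only [mul_assoc] using this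

lemma PP_biUnion {𝒮 : Finset (Finset (Pairs n))}
    (h𝒮 : (𝒮 : Set (Finset (Pairs n))).PairwiseDisjoint id) (y : EdgeConf n) :
    PP q (𝒮.biUnion id) y = ∏ C ∈ 𝒮, PP q C y := by
  rw [PP, Finset.prod_biUnion h𝒮]; rfl

lemma Good.EY_PC_sq_nonneg (h : Good K q lam) (C : Finset (Pairs n)) :
    0 ≤ EY q lam K (fun y => PC K q lam C y * PC K q lam C y) :=
  EY_nonneg q lam h.q0 h.lam0.le h.ql1 fun _ => mul_self_nonneg _

lemma EY_PC_sq (hK : 0 < K) (C : Finset (Pairs n)) :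
    EY q lam K (fun y => PC K q lam C y * PC K q lam C y) =
      EY q lam K (fun y => PP q C y * PP q C y) - EY q lam K (PP q C) ^ 2 := by
  have : (fun y => PC K q lam C y * PC K q lam C y) = fun y => PP q C y * PP q C y +
      (-(2 * EY q lam K (PP q C)) * PP q C y + EY q lam K (PP q C) ^ 2 * 1) := by
    funext y; rw [PC]; ring
  rw [this, EY_add, EY_add, EY_const_mul, EY_const_mul, EY_one q lam hK]
  ring

lemma EY_PB_sq (hK : 0 < K) (G : Finset (Pairs n)) :
    EY q lam K (fun y => PB K q lam G y * PB K q lam G y) = ∏ C ∈ comps G,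
      (EY q lam K (fun y => PP q C y * PP q C y) - EY q lam K (PP q C) ^ 2) := by
  have := EY_prod_mul (q := q) (lam := lam) hK (comps G) (fun C hC C' hC' => comps_disjoint hC hC')
    (fun C y => PC K q lam C y * PC K q lam C y)
    (fun C => dependsOn_mul (PC_dependsOn K q lam C) (PC_dependsOn K q lam C))
    (R := fun _ => 1) (B := ∅) (fun _ _ _ => rfl) (by simp [verts])
  simp only [EY_one q lam hK, mul_one, EY_PC_sq hK, Finset.prod_mul_distrib] at this
  exact this

lemma EY_PP_sq_prod (hK : 0 < K) (G : Finset (Pairs n)) :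
    EY q lam K (fun y => PP q G y * PP q G y) = ∏ C ∈ comps G,
      EY q lam K (fun y => PP q C y * PP q C y) := by
  have := EY_prod_mul (q := q) (lam := lam) hK (comps G) (fun C hC C' hC' => comps_disjoint hC hC')
    (fun C y => PP q C y * PP q C y)
    (fun C => dependsOn_mul (PP_dependsOn q C) (PP_dependsOn q C))
    (R := fun _ => 1) (B := ∅) (fun _ _ _ => rfl) (by simp [verts])
  simp only [EY_one q lam hK, mul_one, Finset.prod_mul_distrib,
    ← PP_biUnion (comps_pairwiseDisjoint G), biUnion_comps] at this
  exact this

/-- Gram matrix entries are controlled by the mixed moments of monomials. The components common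
to `G` and `H` factor out exactly, so that only the other ones cost a factor two each. -/
lemma Good.EY_PB_mul_le (h : Good K q lam) (G H : Finset (Pairs n)) :
    |EY q lam K (fun y => PB K q lam G y * PB K q lam H y)| ≤
      16 ^ (G \ H ∪ H \ G).card * EY q lam K (fun y => PP q G y * PP q H y) := by
  set T := comps G ∩ comps H with hT
  set 𝒢 := comps G \ comps H with h𝒢
  set ℋ := comps H \ comps G with hℋ
  have hGT : Disjoint T 𝒢 := by
    rw [Finset.disjoint_left]; intro C h1 h2; simp [hT, h𝒢] at h1 h2; tauto
  have hHT : Disjoint T ℋ := by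
    rw [Finset.disjoint_left]; intro C h1 h2; simp [hT, hℋ] at h1 h2; tauto
  have hG : comps G = T ∪ 𝒢 := by ext C; simp [hT, h𝒢]; tauto
  have hH : comps H = T ∪ ℋ := by ext C; simp [hT, hℋ]; tauto
  have pdG : (𝒢 : Set (Finset (Pairs n))).PairwiseDisjoint id :=
    (comps_pairwiseDisjoint G).subset (by simp [hG])
  have pdH : (ℋ : Set (Finset (Pairs n))).PairwiseDisjoint id :=
    (comps_pairwiseDisjoint H).subset (by simp [hH])
  have hTd : ∀ C ∈ T, ∀ C' ∈ T, C ≠ C' → Disjoint (verts C) (verts C') := by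
    intro C hC C' hC'
    exact comps_disjoint (hG ▸ Finset.mem_union_left _ hC) (hG ▸ Finset.mem_union_left _ hC')
  have hTR : ∀ C ∈ T, Disjoint (verts C) (verts (𝒢.biUnion id ∪ ℋ.biUnion id)) := by
    intro C hC
    rw [Finset.disjoint_left]
    intro v hv hv'
    obtain ⟨p, hp, hvp⟩ := mem_verts.1 hv'
    rw [Finset.mem_union, Finset.mem_biUnion, Finset.mem_biUnion] at hp
    rcases hp with ⟨C', hC', hp⟩ | ⟨C', hC', hp⟩
    · refine Finset.disjoint_left.1 (comps_disjoint (hG ▸ Finset.mem_union_left _ hC)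
        (hG ▸ Finset.mem_union_right _ hC') ?_) hv (mem_verts.2 ⟨p, hp, hvp⟩)
      exact fun e => Finset.disjoint_left.1 hGT hC (e ▸ hC')
    · refine Finset.disjoint_left.1 (comps_disjoint (hH ▸ Finset.mem_union_left _ hC)
        (hH ▸ Finset.mem_union_right _ hC') ?_) hv (mem_verts.2 ⟨p, hp, hvp⟩)
      exact fun e => Finset.disjoint_left.1 hHT hC (e ▸ hC')
  have sub1 : ∀ C ∈ 𝒢, C ⊆ 𝒢.biUnion id ∪ ℋ.biUnion id := fun C hC =>
    (Finset.subset_biUnion_of_mem id hC).trans Finset.subset_union_left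
  have sub2 : ∀ C ∈ ℋ, C ⊆ 𝒢.biUnion id ∪ ℋ.biUnion id := fun C hC =>
    (Finset.subset_biUnion_of_mem id hC).trans Finset.subset_union_right
  have e1 : (fun y => PB K q lam G y * PB K q lam H y) = fun y =>
      (∏ C ∈ T, (PC K q lam C y * PC K q lam C y)) *
        ((∏ C ∈ 𝒢, PC K q lam C y) * ∏ C ∈ ℋ, PC K q lam C y) := by
    funext y
    rw [PB, PB, hG, hH, Finset.prod_union hGT, Finset.prod_union hHT, Finset.prod_mul_distrib]
    ring
  have e2 : (fun y => PP q G y * PP q H y) = fun y =>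
      (∏ C ∈ T, (PP q C y * PP q C y)) *
        (PP q (𝒢.biUnion id) y * PP q (ℋ.biUnion id) y) := by
    funext y
    conv_lhs => rw [← biUnion_comps G, ← biUnion_comps H, PP_biUnion (comps_pairwiseDisjoint G),
      PP_biUnion (comps_pairwiseDisjoint H), hG, hH, Finset.prod_union hGT, Finset.prod_union hHT]
    rw [PP_biUnion pdG, PP_biUnion pdH, Finset.prod_mul_distrib]
    ring
  rw [e1, e2, EY_prod_mul h.K0 T hTd (fun C y => PC K q lam C y * PC K q lam C y)
    (fun C => dependsOn_mul (PC_dependsOn K q lam C) (PC_dependsOn K q lam C))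
    (dependsOn_mul (prod_PC_dependsOn K q lam sub1) (prod_PC_dependsOn K q lam sub2)) hTR,
    EY_prod_mul h.K0 T hTd (fun C y => PP q C y * PP q C y)
    (fun C => dependsOn_mul (PP_dependsOn q C) (PP_dependsOn q C))
    (dependsOn_mul ((PP_dependsOn q _).mono (by exact_mod_cast Finset.subset_union_left))
      ((PP_dependsOn q _).mono (by exact_mod_cast Finset.subset_union_right))) hTR]
  have hR := h.EY_centred_le ℋ pdH 𝒢 pdG ∅ (by simp)
  have hPe : ∀ y : EdgeConf n, PP q (∅ : Finset (Pairs n)) y = 1 := fun y => by simp [PP]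
  simp only [hPe, mul_one, Finset.empty_union] at hR
  have hcard : 𝒢.card + ℋ.card ≤ 4 * (G \ H ∪ H \ G).card := by
    have h1 := card_comps_sdiff_le G H
    have h2 := card_comps_sdiff_le H G
    rw [Finset.union_comm, ← hℋ] at h2
    rw [← h𝒢] at h1
    omega
  have h2pow : (2 : ℝ) ^ (𝒢.card + ℋ.card) ≤ 16 ^ (G \ H ∪ H \ G).card := by
    calc (2 : ℝ) ^ (𝒢.card + ℋ.card) ≤ 2 ^ (4 * (G \ H ∪ H \ G).card) :=
          pow_le_pow_right₀ (by norm_num) hcard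
      _ = _ := by rw [pow_mul]; norm_num
  have hM0 : 0 ≤ EY q lam K (fun y => PP q (𝒢.biUnion id) y * PP q (ℋ.biUnion id) y) := by
    have := (abs_nonneg _).trans hR
    exact nonneg_of_mul_nonneg_right this (by positivity)
  have hV : ∀ C ∈ T, EY q lam K (fun y => PC K q lam C y * PC K q lam C y) ≤
      EY q lam K (fun y => PP q C y * PP q C y) := fun C _ => by
    rw [EY_PC_sq h.K0]; nlinarith [sq_nonneg (EY q lam K (PP q C))]
  have hP0 : 0 ≤ ∏ C ∈ T, EY q lam K (fun y => PC K q lam C y * PC K q lam C y) :=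
    Finset.prod_nonneg fun C _ => h.EY_PC_sq_nonneg C
  have hPle := Finset.prod_le_prod (fun C _ => h.EY_PC_sq_nonneg C) hV
  rw [abs_mul, abs_of_nonneg hP0]
  calc _ ≤ (∏ C ∈ T, EY q lam K (fun y => PP q C y * PP q C y)) *
        (16 ^ (G \ H ∪ H \ G).card *
          EY q lam K (fun y => PP q (𝒢.biUnion id) y * PP q (ℋ.biUnion id) y)) :=
        mul_le_mul hPle (hR.trans (mul_le_mul_of_nonneg_right h2pow hM0)) (abs_nonneg _)
          (hP0.trans hPle)
    _ = _ := by ring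

end Centred

/-! ### The exponent `t` and the key moment inequality -/

/-- The consequences of the signal-to-noise assumption used in the sequel: with
`n = K ^ (2 - t)`, the squared signal `lam ^ 2` is smaller by a factor `δ` than the geometric
interpolation between the average edge variance and the within-community edge variance. -/
structure Regime (n K : ℕ) (q lam δ t : ℝ) : Prop extends Good K q lam where
  t0 : 0 ≤ t
  t1 : t ≤ 1
  δ0 : 0 < δ
  nK : (n : ℝ) = (K : ℝ) ^ (2 - t)
  snr : lam ^ 2 ≤ δ * ((lam * (1 - 2 * q) / K + q * (1 - q)) ^ (1 - t) *
    (lam * (1 - 2 * q) + q * (1 - q)) ^ t)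

section Key

variable {n K : ℕ} {q lam δ t : ℝ}

lemma Good.r_pos (h : Good K q lam) : 0 < lam * (1 - 2 * q) / K + q * (1 - q) := by
  have hK : (0 : ℝ) < K := by exact_mod_cast h.K0
  rcases h.q0.eq_or_lt with hq | hq
  · rw [← hq]; have := h.lam0; simp only [mul_zero, sub_zero, mul_one, add_zero]
    positivity
  · have h1 : 0 < q * (1 - q) := mul_pos hq (by have := h.qh; linarith)
    have h2 : 0 ≤ lam * (1 - 2 * q) / K := div_nonneg h.lp hK.le
    linarith

lemma Good.p_pos (h : Good K q lam) : 0 < lam * (1 - 2 * q) + q * (1 - q) := by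
  have hK : (1 : ℝ) ≤ K := by exact_mod_cast h.K0
  exact h.r_pos.trans_le (add_le_add_left (div_le_self h.lp hK) _)

lemma regime_of_cond {M : ℝ} (h : Good K q lam) (hKn : K ≤ n) (hs : Real.sqrt n ≤ K)
    (hM : 1 ≤ M) (hc : 2 * M * lam ≤
      (lam / K + q * (1 - q)) ^ (1 - Real.log K / Real.log n)) :
    Regime n K q lam M⁻¹ (2 - Real.log n / Real.log K) := by
  have hK2 : (2 : ℝ) ≤ K := by exact_mod_cast h.K2
  have hK0 : (0 : ℝ) < K := by linarith
  have hKn' : (K : ℝ) ≤ n := by exact_mod_cast hKn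
  have hn0 : (0 : ℝ) < n := by linarith
  have lK : 0 < Real.log K := Real.log_pos (by linarith)
  have ln : 0 < Real.log n := Real.log_pos (by linarith)
  have lKn : Real.log K ≤ Real.log n := Real.log_le_log hK0 hKn'
  have lnK : Real.log n ≤ 2 * Real.log K := by
    have h1 : (n : ℝ) ≤ K ^ 2 := (Real.sqrt_le_left hK0.le).1 hs
    have h2 := Real.log_le_log hn0 h1
    rwa [Real.log_pow, Nat.cast_ofNat] at h2
  obtain ⟨t, ht⟩ : ∃ t, t = 2 - Real.log n / Real.log K := ⟨_, rfl⟩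
  have h2t : 2 - t = Real.log n / Real.log K := by rw [ht]; ring
  rw [← ht]
  have t0 : 0 ≤ t := by
    have := (div_le_iff₀ lK).2 lnK
    linarith
  have t1 : t ≤ 1 := by
    have := (one_le_div lK).2 lKn
    linarith
  have hr := h.r_pos
  have hp := h.p_pos
  have hl := h.lam0
  have hqb := h.qb
  have hr1 : 0 < lam / K + q * (1 - q) := by positivity
  have hrr : lam / K + q * (1 - q) ≤ 2 * (lam * (1 - 2 * q) / K + q * (1 - q)) := by
    have h0 := h.q0; have h1 := h.qh; have h2 := h.ql
    have h3 : lam / K * (4 * q - 1) ≤ q * (1 - q) := by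
      by_cases h4 : 4 * q - 1 ≤ 0
      · exact (mul_nonpos_of_nonneg_of_nonpos (by positivity) h4).trans hqb
      · push Not at h4
        have h5 : lam / K ≤ (1 - q) / 4 := by
          rw [div_le_iff₀ hK0]; nlinarith
        calc lam / K * (4 * q - 1) ≤ (1 - q) / 4 * (4 * q) :=
              mul_le_mul h5 (by linarith) h4.le (by linarith)
          _ = _ := by ring
    have h6 : lam * (1 - 2 * q) / K = lam / K * (1 - 2 * q) := by ring
    rw [h6]; linarith
  have hlp : lam ≤ 2 * (lam * (1 - 2 * q) + q * (1 - q)) := by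
    have h0 := h.q0; have h1 := h.qh; have h2 := h.ql
    by_cases h4 : 4 * q - 1 ≤ 0
    · nlinarith
    · push Not at h4; nlinarith
  refine ⟨h, t0, t1, by positivity, ?_, ?_⟩
  · rw [h2t, Real.rpow_def_of_pos hK0, mul_div_cancel₀ _ lK.ne', Real.exp_log hn0]
  · obtain ⟨r, hrdef⟩ : ∃ r, r = lam * (1 - 2 * q) / K + q * (1 - q) := ⟨_, rfl⟩
    obtain ⟨p, hpdef⟩ : ∃ p, p = lam * (1 - 2 * q) + q * (1 - q) := ⟨_, rfl⟩
    rw [← hrdef] at hr hrr ⊢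
    rw [← hpdef] at hp hlp ⊢
    have e1 : (1 - Real.log K / Real.log n) * (2 - t) = 1 - t := by
      rw [show 1 - t = (2 - t) - 1 by ring, h2t]; field_simp
    have e2 := Real.rpow_le_rpow (by positivity) hc (by linarith : 0 ≤ 2 - t)
    rw [← Real.rpow_mul hr1.le, e1, Real.mul_rpow (by positivity) hl.le] at e2
    have e3 : 2 * M ≤ (2 * M) ^ (2 - t) := by
      conv_lhs => rw [← Real.rpow_one (2 * M)]
      exact Real.rpow_le_rpow_of_exponent_le (by linarith) (by linarith)
    have e4 : lam ^ 2 = lam ^ (2 - t) * lam ^ t := by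
      rw [← Real.rpow_add hl]; norm_num
    have e5 : (lam / K + q * (1 - q)) ^ (1 - t) ≤ 2 ^ (1 - t) * r ^ (1 - t) := by
      rw [← Real.mul_rpow (by norm_num) hr.le]
      exact Real.rpow_le_rpow hr1.le hrr (by linarith)
    have e6 : lam ^ t ≤ 2 ^ t * p ^ t := by
      rw [← Real.mul_rpow (by norm_num) hp.le]
      exact Real.rpow_le_rpow hl.le hlp t0
    have e7 : (2 : ℝ) ^ (1 - t) * 2 ^ t = 2 := by
      rw [← Real.rpow_add (by norm_num)]; norm_num
    have e8 : 2 * M * lam ^ (2 - t) ≤ 2 ^ (1 - t) * r ^ (1 - t) :=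
      ((mul_le_mul_of_nonneg_right e3 (by positivity)).trans e2).trans e5
    have e9 : 2 * M * lam ^ (2 - t) * lam ^ t ≤ 2 ^ (1 - t) * r ^ (1 - t) * (2 ^ t * p ^ t) :=
      mul_le_mul e8 e6 (by positivity) (by positivity)
    rw [← div_eq_inv_mul, le_div_iff₀ (by positivity), e4]
    have e10 : (2 : ℝ) ^ (1 - t) * r ^ (1 - t) * (2 ^ t * p ^ t) =
        2 * (r ^ (1 - t) * p ^ t) := by
      linear_combination (r ^ (1 - t) * p ^ t) * e7
    rw [e10] at e9
    linarith

lemma interp_le (ht0 : 0 ≤ t) (ht1 : t ≤ 1) {x y z : ℝ} (hx : 0 ≤ x) (hy : x ≤ y) (hz : x ≤ z) :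
    x ≤ y ^ (1 - t) * z ^ t := by
  rcases hx.eq_or_lt with h | h
  · rw [← h]; have : 0 ≤ y := hx.trans hy; have : 0 ≤ z := hx.trans hz; positivity
  calc x = x ^ (1 - t) * x ^ t := by rw [← Real.rpow_add h]; norm_num
    _ ≤ _ := mul_le_mul (Real.rpow_le_rpow hx hy (by linarith)) (Real.rpow_le_rpow hx hz ht0)
      (by positivity) (Real.rpow_nonneg (hx.trans hy) _)

lemma le_interp (ht0 : 0 ≤ t) (ht1 : t ≤ 1) {x y z : ℝ} (hy0 : 0 ≤ y) (hz0 : 0 ≤ z)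
    (hy : y ≤ x) (hz : z ≤ x) : y ^ (1 - t) * z ^ t ≤ x := by
  rcases (hy0.trans hy).eq_or_lt with h | h
  · obtain rfl : y = 0 := le_antisymm (h ▸ hy) hy0
    obtain rfl : z = 0 := le_antisymm (h ▸ hz) hz0
    rw [← Real.rpow_add_of_nonneg le_rfl (by linarith) ht0, ← h]; norm_num
  calc y ^ (1 - t) * z ^ t ≤ x ^ (1 - t) * x ^ t :=
        mul_le_mul (Real.rpow_le_rpow hy0 hy (by linarith)) (Real.rpow_le_rpow hz0 hz ht0)
          (by positivity) (by positivity)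
    _ = x := by rw [← Real.rpow_add h]; norm_num

lemma mul_pow_rpow {a x : ℝ} (s : ℝ) (ha : 0 ≤ a) (hx : 0 ≤ x) (m : ℕ) :
    (a ^ m * x) ^ s = (a ^ s) ^ m * x ^ s := by
  rw [Real.mul_rpow (pow_nonneg ha m) hx, ← Real.rpow_natCast, ← Real.rpow_natCast,
    ← Real.rpow_mul ha, ← Real.rpow_mul ha, mul_comm s]

/-- The variance lower bounds interpolated with exponent `t`. -/
lemma interp_var (ht0 : 0 ≤ t) (ht1 : t ≤ 1) {r p d b E : ℝ} (u : ℕ) (hr : 0 ≤ r) (hp : 0 ≤ p)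
    (hd : 0 ≤ d) (hb : 0 ≤ b) (h1 : r ^ u * d ≤ E) (h2 : p ^ u * b ≤ E) :
    (r ^ (1 - t) * p ^ t) ^ u * (d ^ (1 - t) * b ^ t) ≤ E := by
  have := le_interp ht0 ht1 (by positivity) (by positivity) h1 h2
  rw [mul_pow_rpow _ hr hd, mul_pow_rpow _ hp hb] at this
  rw [mul_pow]
  linarith

lemma Regime.K_pos (h : Regime n K q lam δ t) : (0 : ℝ) < K := by exact_mod_cast h.K0

lemma Regime.n_pos (h : Regime n K q lam δ t) : (0 : ℝ) < n := by
  rw [h.nK]; exact Real.rpow_pos_of_pos h.K_pos _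

lemma Regime.inv_n (h : Regime n K q lam δ t) :
    (((K : ℝ)⁻¹) ^ (1 - t)) ^ 2 * ((K : ℝ)⁻¹) ^ t = (n : ℝ)⁻¹ := by
  have hk : (0 : ℝ) < (K : ℝ)⁻¹ := inv_pos.2 h.K_pos
  rw [h.nK, ← Real.inv_rpow h.K_pos.le, sq, ← Real.rpow_add hk, ← Real.rpow_add hk]
  congr 1; ring

/-- The real-number core of the key inequality. -/
lemma Regime.core (h : Regime n K q lam δ t) {a b b' d E E' : ℝ} (u u' m m' : ℕ)
    (ha : 0 ≤ a) (hb : 0 ≤ b) (hb' : 0 ≤ b') (hd : 0 ≤ d)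
    (hab : a ≤ (K : ℝ)⁻¹ ^ m' * b) (hab' : a ≤ (K : ℝ)⁻¹ ^ m * b')
    (had : a ≤ (K : ℝ)⁻¹ ^ (m + m') * d)
    (h1 : (lam * (1 - 2 * q) / K + q * (1 - q)) ^ u * d ≤ E)
    (h2 : (lam * (1 - 2 * q) + q * (1 - q)) ^ u * b ≤ E)
    (h3 : (lam * (1 - 2 * q) / K + q * (1 - q)) ^ u' * d ≤ E')
    (h4 : (lam * (1 - 2 * q) + q * (1 - q)) ^ u' * b' ≤ E') :
    (lam ^ (u + u') * a) ^ 2 ≤ δ ^ (u + u') * (n : ℝ)⁻¹ ^ (m + m') * (E * E') := by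
  have hr := h.r_pos
  have hp := h.p_pos
  have hs := h.snr
  have hi1 := interp_var h.t0 h.t1 u hr.le hp.le hd hb h1 h2
  have hi2 := interp_var h.t0 h.t1 u' hr.le hp.le hd hb' h3 h4
  have hk : (0 : ℝ) < (K : ℝ)⁻¹ := inv_pos.2 h.K_pos
  have hj1 := interp_le h.t0 h.t1 ha had hab
  have hj2 := interp_le h.t0 h.t1 ha had hab'
  rw [mul_pow_rpow _ hk.le hd, mul_pow_rpow _ hk.le hb] at hj1
  rw [mul_pow_rpow _ hk.le hd, mul_pow_rpow _ hk.le hb'] at hj2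
  have hδ := h.δ0
  generalize lam * (1 - 2 * q) / K + q * (1 - q) = r at *
  generalize lam * (1 - 2 * q) + q * (1 - q) = p at *
  obtain ⟨ρ, hρ⟩ : ∃ ρ, ρ = r ^ (1 - t) * p ^ t := ⟨_, rfl⟩
  have hρ0 : 0 < ρ := by rw [hρ]; positivity
  rw [← hρ] at hs hi1 hi2
  obtain ⟨X, hX⟩ : ∃ X, X = d ^ (1 - t) * b ^ t := ⟨_, rfl⟩
  obtain ⟨X', hX'⟩ : ∃ X, X = d ^ (1 - t) * b' ^ t := ⟨_, rfl⟩
  have hX0 : 0 ≤ X := by rw [hX]; positivity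
  have hX0' : 0 ≤ X' := by rw [hX']; positivity
  rw [← hX] at hi1
  rw [← hX'] at hi2
  have ha2 : a ^ 2 ≤ (n : ℝ)⁻¹ ^ (m + m') * (X * X') := by
    rw [sq]
    refine (mul_le_mul hj1 hj2 ha (by positivity)).trans_eq ?_
    rw [← h.inv_n, hX, hX', mul_pow, ← pow_mul, mul_comm 2, pow_mul, sq]
    ring
  have hl2 : (lam ^ (u + u')) ^ 2 ≤ δ ^ (u + u') * (ρ ^ u * ρ ^ u') := by
    rw [← pow_mul, mul_comm, pow_mul, ← pow_add, ← mul_pow]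
    exact pow_le_pow_left₀ (sq_nonneg _) hs _
  have hn := h.n_pos
  calc (lam ^ (u + u') * a) ^ 2 = (lam ^ (u + u')) ^ 2 * a ^ 2 := mul_pow _ _ _
    _ ≤ δ ^ (u + u') * (ρ ^ u * ρ ^ u') * ((n : ℝ)⁻¹ ^ (m + m') * (X * X')) :=
        mul_le_mul hl2 ha2 (sq_nonneg _) (by positivity)
    _ = δ ^ (u + u') * (n : ℝ)⁻¹ ^ (m + m') * ((ρ ^ u * X) * (ρ ^ u' * X')) := by ring
    _ ≤ _ := by
        refine mul_le_mul_of_nonneg_left ?_ (by positivity)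
        exact mul_le_mul hi1 hi2 (by positivity) ((by positivity : 0 ≤ ρ ^ u * X).trans hi1)

lemma DX_dependsOn (S : Finset (Pairs n)) {A : Set (Fin n)} (hA : ∀ v ∈ verts S, v ∈ A) :
    DependsOn (fun z : Lab n K => DX q lam S z) A := by
  intro z z' hz
  refine Finset.prod_congr rfl fun p hp => ?_
  rw [mo, mo, hz _ (hA _ (ends_subset_verts hp (by simp [ends]))),
    hz _ (hA _ (ends_subset_verts hp (by simp [ends])))]

lemma mono_dependsOn (S : Finset (Pairs n)) {A : Set (Fin n)} (hA : ∀ v ∈ verts S, v ∈ A) :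
    DependsOn (fun z : Lab n K => mono S z) A := by
  intro z z' hz
  refine Finset.prod_congr rfl fun p hp => ?_
  rw [mo, mo, hz _ (hA _ (ends_subset_verts hp (by simp [ends]))),
    hz _ (hA _ (ends_subset_verts hp (by simp [ends])))]

/-- If no component of `H` avoids `G`, every vertex of `H` outside `G` is tied to the vertices
of `G` by the edges `H \ G`, and each such vertex costs a factor `1 / K`. -/
lemma EZ_det_sdiff (hK : 0 < K) (G H : Finset (Pairs n))
    (hH : ∀ B, B.Nonempty → IsClosedIn B H → ¬ Disjoint (verts B) (verts G))
    (φ : Lab n K → ℝ) (hφ0 : ∀ z, 0 ≤ φ z) (hφ : DependsOn φ (verts G : Set (Fin n))) :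
    EZ (fun z => φ z * mono (H \ G) z) ≤
      (K : ℝ)⁻¹ ^ (verts H \ verts G).card * EZ φ := by
  refine EZ_det hK (H \ G) (verts H \ verts G) ?_ ?_ φ hφ0 ?_
  · intro v hv
    rw [Finset.mem_sdiff] at hv
    obtain ⟨p, hp, hvp⟩ := mem_verts.1 hv.1
    exact mem_verts.2 ⟨p, Finset.mem_sdiff.2 ⟨hp, fun h => hv.2 (ends_subset_verts h hvp)⟩, hvp⟩
  · intro B hne hB hW
    have hdis : Disjoint (verts B) (verts G) := by
      rw [Finset.disjoint_left]
      exact fun v hv => (Finset.mem_sdiff.1 (hW hv)).2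
    refine hH B hne ⟨hB.1.trans Finset.sdiff_subset, ?_⟩ hdis
    rw [Finset.disjoint_left]
    intro v hv hv'
    obtain ⟨p, hp, hvp⟩ := mem_verts.1 hv'
    rw [Finset.mem_sdiff] at hp
    by_cases hpG : p ∈ G
    · exact Finset.disjoint_left.1 hdis hv (ends_subset_verts hpG hvp)
    · exact Finset.disjoint_left.1 hB.2 hv (mem_verts.2 ⟨p, by simp [hp, hpG], hvp⟩)
  · intro z z' hz
    refine hφ fun v hv => hz v ?_
    simp only [Set.mem_compl_iff, Finset.mem_coe, Finset.mem_sdiff, not_and, not_not]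
    exact fun _ => hv

/-- The mixed moments of two monomials are small compared with their second moments. -/
lemma Regime.EY_PP_mul_sq_le (h : Regime n K q lam δ t) (G H : Finset (Pairs n))
    (hG : ∀ B, B.Nonempty → IsClosedIn B G → ¬ Disjoint (verts B) (verts H))
    (hH : ∀ B, B.Nonempty → IsClosedIn B H → ¬ Disjoint (verts B) (verts G)) :
    EY q lam K (fun y => PP q G y * PP q H y) ^ 2 ≤
      δ ^ ((G \ H).card + (H \ G).card) *
        (n : ℝ)⁻¹ ^ ((verts G \ verts H).card + (verts H \ verts G).card) *
        (EY q lam K (fun y => PP q G y * PP q G y) *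
          EY q lam K (fun y => PP q H y * PP q H y)) := by
  have e : EY q lam K (fun y => PP q G y * PP q H y) = lam ^ ((G \ H).card + (H \ G).card) *
      EZ (fun z : Lab n K => DX q lam (G ∩ H) z * mono (G \ H) z * mono (H \ G) z) := by
    simp only [EY, CE_PP_cross, EZ_const_mul]
  rw [e, EY_PP_sq, EY_PP_sq]
  have hK := h.K0
  have hDX := h.toGood.DX_nonneg (n := n) (G ∩ H)
  have sG : verts (G ∩ H) ⊆ verts G := verts_mono Finset.inter_subset_left
  have sH : verts (G ∩ H) ⊆ verts H := verts_mono Finset.inter_subset_right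
  have s1 : verts (G \ H) ⊆ verts G := verts_mono Finset.sdiff_subset
  have s2 : verts (H \ G) ⊆ verts H := verts_mono Finset.sdiff_subset
  have d1 : Disjoint (G ∩ H) (G \ H) := by
    rw [Finset.disjoint_left]; intro p hp; simp at hp ⊢; tauto
  have d2 : Disjoint (G ∩ H) (H \ G) := by
    rw [Finset.disjoint_left]; intro p hp; simp at hp ⊢; tauto
  have u1 : (G ∩ H) ∪ (G \ H) = G := by ext p; simp; tauto
  have u2 : (G ∩ H) ∪ (H \ G) = H := by ext p; simp; tauto
  have hb : EZ (fun z : Lab n K => DX q lam (G ∩ H) z * mono (G \ H) z) ≤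
      (K : ℝ)⁻¹ ^ (verts G \ verts H).card * EZ (fun z : Lab n K => DX q lam (G ∩ H) z) :=
    EZ_det_sdiff hK H G hG _ hDX (DX_dependsOn _ fun v hv => sH hv)
  have hab := EZ_det_sdiff hK G H hH
    (fun z : Lab n K => DX q lam (G ∩ H) z * mono (G \ H) z)
    (fun z => mul_nonneg (hDX z) (mono_nonneg _ _)) (by
      intro z z' hz
      have a1 := DX_dependsOn (K := K) (q := q) (lam := lam) (G ∩ H)
        (A := (verts G : Set (Fin n))) (fun v hv => sG hv) hz
      have a2 := mono_dependsOn (K := K) (G \ H)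
        (A := (verts G : Set (Fin n))) (fun v hv => s1 hv) hz
      simp only at a1 a2 ⊢
      rw [a1, a2])
  have hab' := EZ_det_sdiff hK H G hG
    (fun z : Lab n K => DX q lam (G ∩ H) z * mono (H \ G) z)
    (fun z => mul_nonneg (hDX z) (mono_nonneg _ _)) (by
      intro z z' hz
      have a1 := DX_dependsOn (K := K) (q := q) (lam := lam) (G ∩ H)
        (A := (verts H : Set (Fin n))) (fun v hv => sH hv) hz
      have a2 := mono_dependsOn (K := K) (H \ G)
        (A := (verts H : Set (Fin n))) (fun v hv => s2 hv) hz
      simp only at a1 a2 ⊢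
      rw [a1, a2])
  have e3 : (fun z : Lab n K => DX q lam (G ∩ H) z * mono (H \ G) z * mono (G \ H) z) =
      fun z => DX q lam (G ∩ H) z * mono (G \ H) z * mono (H \ G) z := by funext z; ring
  rw [e3] at hab'
  have g1 := EZ_DX_grow h.toGood _ _ d1
  have g2 := EZ_DX_mono h.toGood _ _ d1
  have g3 := EZ_DX_grow h.toGood _ _ d2
  have g4 := EZ_DX_mono h.toGood _ _ d2
  rw [u1] at g1 g2
  rw [u2] at g3 g4
  refine h.core _ _ _ _ ?_ ?_ ?_ ?_ hab hab' ?_ g1 g2 g3 g4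
  · exact EZ_nonneg fun z => mul_nonneg (mul_nonneg (hDX z) (mono_nonneg _ _)) (mono_nonneg _ _)
  · exact EZ_nonneg fun z => mul_nonneg (hDX z) (mono_nonneg _ _)
  · exact EZ_nonneg fun z => mul_nonneg (hDX z) (mono_nonneg _ _)
  · exact EZ_nonneg hDX
  · rw [pow_add, mul_comm (_ ^ _) (_ ^ _), mul_assoc]
    exact hab.trans (mul_le_mul_of_nonneg_left hb (by positivity))

lemma Good.EY_PP_sq_pos (h : Good K q lam) (G : Finset (Pairs n)) :
    0 < EY q lam K (fun y => PP q G y * PP q G y) := by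
  rw [EY_PP_sq]
  have := EZ_DX_grow (n := n) h ∅ G (by simp)
  simp only [DX, Finset.prod_empty, EZ_one h.K0, mul_one, Finset.empty_union] at this
  exact (pow_pos h.r_pos _).trans_le this

/-- Off-diagonal entries of the Gram matrix of the basis functions. -/
lemma Regime.gram_sq_le (h : Regime n K q lam δ t) (G H : Finset (Pairs n)) :
    EY q lam K (fun y => PB K q lam G y * PB K q lam H y) ^ 2 ≤
      (256 * δ) ^ ((G \ H).card + (H \ G).card) *
        (n : ℝ)⁻¹ ^ ((verts G \ verts H).card + (verts H \ verts G).card) *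
        (EY q lam K (fun y => PP q G y * PP q G y) *
          EY q lam K (fun y => PP q H y * PP q H y)) := by
  have hpG := h.toGood.EY_PP_sq_pos G
  have hpH := h.toGood.EY_PP_sq_pos H
  have hδ := h.δ0
  have hn := h.n_pos
  have h0 : EY q lam K (fun y => PB K q lam G y * PB K q lam H y) = 0 →
      EY q lam K (fun y => PB K q lam G y * PB K q lam H y) ^ 2 ≤
      (256 * δ) ^ ((G \ H).card + (H \ G).card) *
        (n : ℝ)⁻¹ ^ ((verts G \ verts H).card + (verts H \ verts G).card) *
        (EY q lam K (fun y => PP q G y * PP q G y) *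
          EY q lam K (fun y => PP q H y * PP q H y)) := fun e => by
    rw [e, zero_pow two_ne_zero]; positivity
  by_cases hH : ∀ B, B.Nonempty → IsClosedIn B H → ¬ Disjoint (verts B) (verts G)
  · by_cases hG : ∀ B, B.Nonempty → IsClosedIn B G → ¬ Disjoint (verts B) (verts H)
    · have h1 := h.EY_PP_mul_sq_le G H hG hH
      have h2 := h.toGood.EY_PB_mul_le G H
      have hc : (G \ H ∪ H \ G).card = (G \ H).card + (H \ G).card :=
        Finset.card_union_of_disjoint (by
          rw [Finset.disjoint_left]; intro p hp; simp at hp ⊢; tauto)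
      rw [hc] at h2
      have h3 := pow_le_pow_left₀ (abs_nonneg _) h2 2
      rw [sq_abs, mul_pow, ← pow_mul, mul_comm _ 2, pow_mul] at h3
      refine h3.trans ?_
      rw [mul_pow 256 δ]
      norm_num only at h1 ⊢
      calc _ ≤ _ := mul_le_mul_of_nonneg_left h1 (by positivity)
        _ = _ := by ring
    · push Not at hG
      obtain ⟨B, hne, hB, hd⟩ := hG
      refine h0 ?_
      rw [← EY_PB_mul_eq_zero (q := q) (lam := lam) h.K0 hB hne hd]
      congr 1; funext y; ring
  · push Not at hH
    obtain ⟨B, hne, hB, hd⟩ := hH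
    exact h0 (EY_PB_mul_eq_zero h.K0 hB hne hd)

/-- The mean of the monomial of a connected graph is small. -/
lemma Regime.EY_PP_conn_sq_le (h : Regime n K q lam δ t) {C : Finset (Pairs n)}
    (hC : C ∈ comps C) :
    EY q lam K (PP q C) ^ 2 ≤ δ ^ C.card * (n : ℝ)⁻¹ ^ ((verts C).card - 1) *
      EY q lam K (fun y => PP q C y * PP q C y) := by
  have e : EY q lam K (PP q C) = lam ^ C.card * EZ (mono (K := K) C) := by
    simp only [EY, CE_PP, EZ_const_mul]
  have hK := h.K0
  obtain ⟨-, hne, hmin⟩ := mem_comps.1 hC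
  obtain ⟨v, hv⟩ := verts_nonempty hne
  have h1 : EZ (mono (K := K) C) ≤ (K : ℝ)⁻¹ ^ ((verts C).card - 1) * 1 := by
    have := EZ_det hK C ((verts C).erase v) (Finset.erase_subset _ _) (fun B hB hBC hsub => by
        rw [hmin B hBC.1 hB hBC] at hsub
        exact Finset.notMem_erase v _ (hsub hv)) (fun _ => 1) (fun _ => zero_le_one)
        (fun _ _ _ => rfl)
    rw [EZ_one hK, Finset.card_erase_of_mem hv] at this
    simpa using this
  rw [e, EY_PP_sq]
  have g1 := EZ_DX_grow (n := n) h.toGood ∅ C (by simp)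
  have g2 := EZ_DX_mono (n := n) h.toGood ∅ C (by simp)
  simp only [DX, Finset.prod_empty, EZ_one hK, Finset.empty_union, one_mul] at g1 g2
  have hm : 0 ≤ EZ (mono (n := n) (K := K) C) := EZ_nonneg fun z => mono_nonneg _ _
  have := h.core (E' := 1) C.card 0 ((verts C).card - 1) 0 hm hm zero_le_one zero_le_one (by simp)
    h1 (by simpa using h1) g1 g2 (by simp) (by simp)
  simpa only [add_zero, mul_one, DX] using this

lemma self_mem_comps {C G : Finset (Pairs n)} (h : C ∈ comps G) : C ∈ comps C := by
  obtain ⟨h1, h2, h3⟩ := mem_comps.1 h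
  exact mem_comps.2 ⟨isClosedIn_self C, h2, fun B hB hne hc => h3 B hB hne (hc.trans h1)⟩

/-- Centring costs at most a factor two in the second moment. -/
lemma Regime.EY_PB_sq_ge (h : Regime n K q lam δ t) {D : ℕ} (hδ : D * δ ≤ 1 / 2) (hδ1 : δ ≤ 1)
    {G : Finset (Pairs n)} (hG : G.card ≤ D) :
    1 / 2 * EY q lam K (fun y => PP q G y * PP q G y) ≤
      EY q lam K (fun y => PB K q lam G y * PB K q lam G y) := by
  rw [EY_PB_sq h.K0, EY_PP_sq_prod h.K0]
  have hδ0 := h.δ0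
  have hn1 : (1 : ℝ) ≤ n := by
    rw [h.nK]
    exact Real.one_le_rpow (by exact_mod_cast h.K0) (by have := h.t1; linarith)
  have hc : ∀ C ∈ comps G, (1 - δ) * EY q lam K (fun y => PP q C y * PP q C y) ≤
      EY q lam K (fun y => PP q C y * PP q C y) - EY q lam K (PP q C) ^ 2 := by
    intro C hC
    have h1 := h.EY_PP_conn_sq_le (self_mem_comps hC)
    have hpos := h.toGood.EY_PP_sq_pos C
    have h2 : δ ^ C.card * (n : ℝ)⁻¹ ^ ((verts C).card - 1) ≤ δ * 1 := by
      refine mul_le_mul ?_ (pow_le_one₀ (by positivity) (inv_le_one_of_one_le₀ hn1))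
        (by positivity) hδ0.le
      exact pow_le_of_le_one hδ0.le hδ1 (Finset.card_pos.2 (mem_comps.1 hC).2.1).ne'
    nlinarith [mul_le_mul_of_nonneg_right h2 hpos.le]
  refine le_trans ?_ (Finset.prod_le_prod (fun C _ => mul_nonneg (by linarith)
    (h.toGood.EY_PP_sq_pos C).le) hc)
  rw [Finset.prod_mul_distrib, Finset.prod_const]
  refine mul_le_mul_of_nonneg_right ?_
    (Finset.prod_nonneg fun C _ => (h.toGood.EY_PP_sq_pos C).le)
  have h3 := one_add_mul_le_pow (a := -δ) (by linarith) (comps G).card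
  have h4 : ((comps G).card : ℝ) ≤ D := by exact_mod_cast (card_comps_le G).trans hG
  have h5 := mul_le_mul_of_nonneg_right h4 hδ0.le
  rw [← sub_eq_add_neg] at h3
  linarith

end Key

/-! ### Counting graphs by their number of new vertices -/

section Counting

variable {n : ℕ}

lemma sum_vertex_le (hn : 0 < n) (B : Finset (Fin n)) :
    ∑ i : Fin n, (if i ∈ B then (1 : ℝ) else (n : ℝ)⁻¹) ≤ B.card + 1 := by
  have hn' : (0 : ℝ) < n := by exact_mod_cast hn
  calc ∑ i : Fin n, (if i ∈ B then (1 : ℝ) else (n : ℝ)⁻¹)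
      ≤ ∑ i : Fin n, ((if i ∈ B then (1 : ℝ) else 0) + (n : ℝ)⁻¹) := by
        refine Finset.sum_le_sum fun i _ => ?_
        split_ifs <;> simp
    _ = B.card + 1 := by
        rw [Finset.sum_add_distrib]
        simp [hn'.ne']

lemma inv_pow_card_ends (B : Finset (Fin n)) (p : Pairs n) :
    (n : ℝ)⁻¹ ^ (ends p \ B).card = (if p.1.1 ∈ B then (1 : ℝ) else (n : ℝ)⁻¹) *
      (if p.1.2 ∈ B then (1 : ℝ) else (n : ℝ)⁻¹) := by
  have hne : p.1.1 ≠ p.1.2 := p.2.ne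
  have : (n : ℝ)⁻¹ ^ (ends p \ B).card =
      ∏ v ∈ ends p, (if v ∈ B then (1 : ℝ) else (n : ℝ)⁻¹) := by
    rw [Finset.prod_ite, Finset.prod_const_one, Finset.prod_const, one_mul,
      Finset.sdiff_eq_filter]
  rw [this, ends, Finset.prod_pair hne]

lemma sum_edge_le (hn : 0 < n) (B : Finset (Fin n)) :
    ∑ p : Pairs n, (n : ℝ)⁻¹ ^ (ends p \ B).card ≤ ((B.card : ℝ) + 1) ^ 2 := by
  have h0 : ∀ i, 0 ≤ (if i ∈ B then (1 : ℝ) else (n : ℝ)⁻¹) := fun i => by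
    split_ifs <;> positivity
  simp only [inv_pow_card_ends]
  calc ∑ p : Pairs n, (if p.1.1 ∈ B then (1 : ℝ) else (n : ℝ)⁻¹) *
        (if p.1.2 ∈ B then (1 : ℝ) else (n : ℝ)⁻¹)
      ≤ ∑ p : Fin n × Fin n, (if p.1 ∈ B then (1 : ℝ) else (n : ℝ)⁻¹) *
        (if p.2 ∈ B then (1 : ℝ) else (n : ℝ)⁻¹) := by
        rw [← Finset.sum_image (s := Finset.univ) (g := fun p : Pairs n => p.1)
          (f := fun p : Fin n × Fin n => (if p.1 ∈ B then (1 : ℝ) else (n : ℝ)⁻¹) *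
            (if p.2 ∈ B then (1 : ℝ) else (n : ℝ)⁻¹)) (fun a _ b _ h => Subtype.ext h)]
        exact Finset.sum_le_sum_of_subset_of_nonneg (Finset.subset_univ _)
          fun p _ _ => mul_nonneg (h0 _) (h0 _)
    _ = (∑ i : Fin n, (if i ∈ B then (1 : ℝ) else (n : ℝ)⁻¹)) ^ 2 := by
        rw [sq, Finset.sum_mul_sum, Fintype.sum_prod_type]
    _ ≤ _ := pow_le_pow_left₀ (Finset.sum_nonneg fun i _ => h0 i) (sum_vertex_le hn B) 2

/-- Revealing the edges of a graph one by one: there are few graphs once every vertex outside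
`B` is discounted by `1 / n`. -/
lemma sum_graph_le (hn : 0 < n) (e : ℕ) (B : Finset (Fin n)) :
    ∑ U ∈ Finset.powersetCard e (Finset.univ : Finset (Pairs n)),
      (n : ℝ)⁻¹ ^ (verts U \ B).card ≤ (((B.card : ℝ) + 2 * e + 1) ^ 2) ^ e := by
  induction e generalizing B with
  | zero => simp [verts]
  | succ e ih =>
    rcases isEmpty_or_nonempty (Pairs n) with hP | hP
    · rw [Finset.powersetCard_eq_empty.2 (by simp), Finset.sum_empty]
      positivity
    obtain ⟨pick, hpick⟩ : ∃ pick : Finset (Pairs n) → Pairs n × Finset (Pairs n),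
        ∀ U ∈ Finset.powersetCard (e + 1) (Finset.univ : Finset (Pairs n)),
          insert (pick U).1 (pick U).2 = U ∧ (pick U).2.card = e := by
      have : ∀ U : Finset (Pairs n), ∃ x : Pairs n × Finset (Pairs n),
          U ∈ Finset.powersetCard (e + 1) (Finset.univ : Finset (Pairs n)) →
          insert x.1 x.2 = U ∧ x.2.card = e := by
        intro U
        by_cases hU : U ∈ Finset.powersetCard (e + 1) (Finset.univ : Finset (Pairs n))
        · have hc := (Finset.mem_powersetCard.1 hU).2
          obtain ⟨p, hp⟩ := Finset.card_pos.1 (by omega : 0 < U.card)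
          exact ⟨(p, U.erase p), fun _ => ⟨Finset.insert_erase hp, by
            rw [Finset.card_erase_of_mem hp]; omega⟩⟩
        · exact ⟨(Classical.arbitrary _, ∅), fun h => absurd h hU⟩
      choose f hf using this
      exact ⟨f, hf⟩
    have hinj : Set.InjOn pick (Finset.powersetCard (e + 1) (Finset.univ : Finset (Pairs n))) := by
      intro U hU U' hU' h
      rw [← (hpick U hU).1, ← (hpick U' hU').1, h]
    have hsplit : ∀ (p : Pairs n) (U : Finset (Pairs n)),
        (verts (insert p U) \ B).card = (ends p \ B).card + (verts U \ (B ∪ ends p)).card := by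
      intro p U
      rw [← Finset.card_union_of_disjoint]
      · congr 1
        ext v
        simp only [verts, Finset.biUnion_insert, Finset.mem_sdiff, Finset.mem_union]
        tauto
      · rw [Finset.disjoint_left]; intro v; simp only [Finset.mem_sdiff, Finset.mem_union]; tauto
    calc ∑ U ∈ Finset.powersetCard (e + 1) (Finset.univ : Finset (Pairs n)),
          (n : ℝ)⁻¹ ^ (verts U \ B).card
        = ∑ U ∈ Finset.powersetCard (e + 1) (Finset.univ : Finset (Pairs n)),
          (n : ℝ)⁻¹ ^ (verts (insert (pick U).1 (pick U).2) \ B).card :=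
          Finset.sum_congr rfl fun U hU => by rw [(hpick U hU).1]
      _ = ∑ x ∈ (Finset.powersetCard (e + 1) (Finset.univ : Finset (Pairs n))).image pick,
          (n : ℝ)⁻¹ ^ (verts (insert x.1 x.2) \ B).card := by
          rw [Finset.sum_image hinj]
      _ ≤ ∑ x ∈ (Finset.univ : Finset (Pairs n)) ×ˢ
            Finset.powersetCard e (Finset.univ : Finset (Pairs n)),
          (n : ℝ)⁻¹ ^ (verts (insert x.1 x.2) \ B).card := by
          refine Finset.sum_le_sum_of_subset_of_nonneg ?_ fun x _ _ => by positivity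
          intro x hx
          obtain ⟨U, hU, rfl⟩ := Finset.mem_image.1 hx
          exact Finset.mem_product.2 ⟨Finset.mem_univ _, Finset.mem_powersetCard.2
            ⟨Finset.subset_univ _, (hpick U hU).2⟩⟩
      _ = ∑ p : Pairs n, (n : ℝ)⁻¹ ^ (ends p \ B).card *
            ∑ U ∈ Finset.powersetCard e (Finset.univ : Finset (Pairs n)),
              (n : ℝ)⁻¹ ^ (verts U \ (B ∪ ends p)).card := by
          rw [Finset.sum_product]
          refine Finset.sum_congr rfl fun p _ => ?_
          rw [Finset.mul_sum]
          exact Finset.sum_congr rfl fun U _ => by rw [hsplit, pow_add]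
      _ ≤ ∑ p : Pairs n, (n : ℝ)⁻¹ ^ (ends p \ B).card *
            (((B.card : ℝ) + 2 * (e + 1) + 1) ^ 2) ^ e := by
          refine Finset.sum_le_sum fun p _ => mul_le_mul_of_nonneg_left ?_ (by positivity)
          refine (ih _).trans ?_
          have hc : ((B ∪ ends p).card : ℝ) ≤ B.card + 2 := by
            have := Finset.card_union_le B (ends p)
            rw [card_ends] at this
            exact_mod_cast this
          exact pow_le_pow_left₀ (by positivity)
            (pow_le_pow_left₀ (by positivity) (by linarith) 2) e
      _ ≤ ((B.card : ℝ) + 1) ^ 2 * (((B.card : ℝ) + 2 * (e + 1) + 1) ^ 2) ^ e := by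
          rw [← Finset.sum_mul]
          exact mul_le_mul_of_nonneg_right (sum_edge_le hn B) (by positivity)
      _ ≤ ((B.card : ℝ) + 2 * (e + 1) + 1) ^ 2 * (((B.card : ℝ) + 2 * (e + 1) + 1) ^ 2) ^ e := by
          gcongr
          have : (0 : ℝ) ≤ 2 * (e + 1) := by positivity
          linarith
      _ = _ := by push_cast; ring

/-- The graphs with at most `D` edges. -/
def deg (n D : ℕ) : Finset (Finset (Pairs n)) := Finset.univ.filter fun G => G.card ≤ D

lemma mem_deg {D : ℕ} {G : Finset (Pairs n)} : G ∈ deg n D ↔ G.card ≤ D := by simp [deg]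

lemma sum_deg (D : ℕ) (f : Finset (Pairs n) → ℝ) :
    ∑ U ∈ deg n D, f U = ∑ e ∈ Finset.range (D + 1),
      ∑ U ∈ Finset.powersetCard e (Finset.univ : Finset (Pairs n)), f U := by
  rw [← Finset.sum_fiberwise_of_maps_to (s := deg n D) (t := Finset.range (D + 1))
    (g := Finset.card) (fun U hU => Finset.mem_range.2 (Nat.lt_succ_of_le (mem_deg.1 hU)))]
  refine Finset.sum_congr rfl fun e he => Finset.sum_congr ?_ fun _ _ => rfl
  ext U
  have := Finset.mem_range.1 he
  simp only [Finset.mem_filter, mem_deg, Finset.mem_powersetCard, Finset.subset_univ, true_and]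
  omega

lemma geom_le {θ : ℝ} (h0 : 0 ≤ θ) (D : ℕ) :
    (1 - θ) * ∑ e ∈ Finset.range D, θ ^ e ≤ 1 := by
  rw [mul_neg_geom_sum]
  have := pow_nonneg h0 D
  linarith

lemma sum_weight_le (hn : 0 < n) {D b : ℕ} {η : ℝ} (hη : 0 ≤ η) {B : Finset (Fin n)}
    (hB : B.card ≤ b) : ∑ U ∈ deg n D, η ^ U.card * (n : ℝ)⁻¹ ^ (verts U \ B).card ≤
      ∑ e ∈ Finset.range (D + 1), (η * ((b : ℝ) + 2 * D + 1) ^ 2) ^ e := by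
  rw [sum_deg]
  refine Finset.sum_le_sum fun e he => ?_
  have he' : (e : ℝ) ≤ D := by exact_mod_cast Nat.lt_succ_iff.1 (Finset.mem_range.1 he)
  have hB' : (B.card : ℝ) ≤ b := by exact_mod_cast hB
  rw [Finset.sum_congr rfl (g := fun U => η ^ e * (n : ℝ)⁻¹ ^ (verts U \ B).card)
    (fun U hU => by rw [(Finset.mem_powersetCard.1 hU).2]), ← Finset.mul_sum, mul_pow]
  refine mul_le_mul_of_nonneg_left ((sum_graph_le hn e B).trans ?_) (by positivity)
  gcongr

/-- Row sums of the comparison matrix: the off-diagonal part is at most a quarter. -/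
lemma sum_row_le (hn : 0 < n) {D : ℕ} {η : ℝ} (hη : 0 ≤ η)
    (hθ : η * (4 * (D : ℝ) + 1) ^ 2 ≤ 1 / 10) {G : Finset (Pairs n)} (hG : G.card ≤ D) :
    ∑ H ∈ (deg n D).erase G, η ^ ((G \ H).card + (H \ G).card) *
      (n : ℝ)⁻¹ ^ (verts H \ verts G).card ≤ 1 / 4 := by
  have hD0 : (0 : ℝ) ≤ D := by positivity
  have hinj : Set.InjOn (fun H : Finset (Pairs n) => (G \ H, H \ G)) (deg n D) := by
    intro H _ H' _ h
    simp only [Prod.mk.injEq] at h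
    ext p
    have h1 := Finset.ext_iff.1 h.1 p
    have h2 := Finset.ext_iff.1 h.2 p
    simp only [Finset.mem_sdiff] at h1 h2
    by_cases hp : p ∈ G
    · simpa [hp, not_iff_not] using h1
    · simpa [hp] using h2
  have hv : ∀ H : Finset (Pairs n), (verts H \ verts G) = verts (H \ G) \ verts G := by
    intro H
    ext v
    simp only [Finset.mem_sdiff, mem_verts]
    constructor
    · rintro ⟨⟨p, hp, hv⟩, h2⟩
      exact ⟨⟨p, ⟨hp, fun h => h2 ⟨p, h, hv⟩⟩, hv⟩, h2⟩
    · rintro ⟨⟨p, hp, hv⟩, h2⟩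
      exact ⟨⟨p, hp.1, hv⟩, h2⟩
  have htot : ∑ H ∈ deg n D, η ^ ((G \ H).card + (H \ G).card) *
      (n : ℝ)⁻¹ ^ (verts H \ verts G).card ≤ 5 / 4 := by
    calc _ = ∑ H ∈ deg n D, η ^ (G \ H).card *
          (η ^ (H \ G).card * (n : ℝ)⁻¹ ^ (verts (H \ G) \ verts G).card) :=
          Finset.sum_congr rfl fun H _ => by rw [pow_add, hv, mul_assoc]
      _ = ∑ x ∈ (deg n D).image (fun H : Finset (Pairs n) => (G \ H, H \ G)), η ^ x.1.card *
          (η ^ x.2.card * (n : ℝ)⁻¹ ^ (verts x.2 \ verts G).card) := by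
          rw [Finset.sum_image hinj]
      _ ≤ ∑ x ∈ G.powerset ×ˢ deg n D, η ^ x.1.card *
          (η ^ x.2.card * (n : ℝ)⁻¹ ^ (verts x.2 \ verts G).card) := by
          refine Finset.sum_le_sum_of_subset_of_nonneg ?_ fun x _ _ => by positivity
          intro x hx
          obtain ⟨H, hH, rfl⟩ := Finset.mem_image.1 hx
          refine Finset.mem_product.2 ⟨Finset.mem_powerset.2 Finset.sdiff_subset, mem_deg.2 ?_⟩
          exact (Finset.card_le_card Finset.sdiff_subset).trans (mem_deg.1 hH)
      _ = (∑ A ∈ G.powerset, η ^ A.card) * ∑ U ∈ deg n D,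
          (η ^ U.card * (n : ℝ)⁻¹ ^ (verts U \ verts G).card) := by
          rw [Finset.sum_product, Finset.sum_mul_sum]
      _ ≤ (10 / 9) * (10 / 9) := by
          refine mul_le_mul ?_ ?_ (Finset.sum_nonneg fun U _ => by positivity) (by norm_num)
          · have e1 : ∑ A ∈ G.powerset, η ^ A.card = (1 + η) ^ G.card := by
              have := Finset.sum_pow_mul_eq_add_pow η 1 G
              simpa [add_comm] using this
            rw [e1]
            have hηD : D * η ≤ 1 / 10 := by
              nlinarith [mul_nonneg hη hD0, mul_nonneg hη (mul_nonneg hD0 hD0)]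
            have hη1 : η ≤ 1 / 10 := by
              nlinarith [mul_nonneg hη hD0, mul_nonneg hη (mul_nonneg hD0 hD0)]
            have e2 := one_add_mul_le_pow (a := -η) (by linarith) G.card
            have e3 : (1 + η) ^ G.card * (1 + -η) ^ G.card ≤ 1 := by
              rw [← mul_pow]
              exact pow_le_one₀ (by nlinarith) (by nlinarith)
            have e4 : (G.card : ℝ) * η ≤ D * η :=
              mul_le_mul_of_nonneg_right (by exact_mod_cast hG) hη
            have e5 : (1 : ℝ) ≤ (1 + η) ^ G.card := one_le_pow₀ (by linarith)
            nlinarith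
          · refine (sum_weight_le hn (b := 2 * D) hη
              ((card_verts_le G).trans (Nat.mul_le_mul_left 2 hG))).trans ?_
            have hθ0 : 0 ≤ η * ((2 * D : ℕ) + 2 * (D : ℝ) + 1) ^ 2 := by positivity
            have := geom_le hθ0 (D + 1)
            have hs : 0 ≤ ∑ e ∈ Finset.range (D + 1),
                (η * ((2 * D : ℕ) + 2 * (D : ℝ) + 1) ^ 2) ^ e :=
              Finset.sum_nonneg fun e _ => by positivity
            have hθ' : η * ((2 * D : ℕ) + 2 * (D : ℝ) + 1) ^ 2 ≤ 1 / 10 := by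
              push_cast
              convert hθ using 3
              ring
            nlinarith
      _ ≤ 5 / 4 := by norm_num
  rw [← Finset.add_sum_erase _ _ (mem_deg.2 hG)] at htot
  simp only [Finset.sdiff_self, Finset.card_empty, add_zero, pow_zero, one_mul] at htot
  linarith

/-- Total weight of the nonempty graphs attached to at most two marked vertices. -/
lemma sum_marked_le (hn : 0 < n) {D : ℕ} {δ : ℝ} (hδ : 0 ≤ δ)
    (hθ : δ * (2 * (D : ℝ) + 3) ^ 2 ≤ 1 / 2) {B : Finset (Fin n)} (hB : B.card ≤ 2) :
    ∑ U ∈ (deg n D).erase ∅, δ ^ U.card * (n : ℝ)⁻¹ ^ (verts U \ B).card ≤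
      2 * (δ * (2 * (D : ℝ) + 3) ^ 2) := by
  have h1 := sum_weight_le hn (D := D) hδ hB
  have e : ((2 : ℕ) : ℝ) + 2 * (D : ℝ) + 1 = 2 * (D : ℝ) + 3 := by push_cast; ring
  rw [e, ← Finset.add_sum_erase _ _ (mem_deg.2 (by simp : (∅ : Finset (Pairs n)).card ≤ D))] at h1
  simp only [Finset.card_empty, pow_zero, verts, Finset.biUnion_empty, Finset.empty_sdiff,
    one_mul] at h1
  have h0 : 0 ≤ δ * (2 * (D : ℝ) + 3) ^ 2 := by positivity
  generalize δ * (2 * (D : ℝ) + 3) ^ 2 = θ at *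
  have h2 := geom_le h0 D
  have hs : 0 ≤ ∑ e ∈ Finset.range D, θ ^ e := Finset.sum_nonneg fun e _ => by positivity
  rw [Finset.sum_range_succ', pow_zero] at h1
  simp only [pow_succ] at h1
  rw [← Finset.sum_mul] at h1
  have h3 : ∑ e ∈ Finset.range D, θ ^ e ≤ 2 := by nlinarith
  have h4 := mul_le_mul_of_nonneg_right h3 h0
  simp only [verts]
  linarith

end Counting

/-! ### Diagonal dominance of the Gram matrix -/

/-- A symmetric matrix which is diagonally dominant after rescaling by positive weights `w` is
bounded below by half its diagonal. -/
lemma diag_dom {ι : Type*} [DecidableEq ι] (s : Finset ι) (A : ι → ι → ℝ) (w a : ι → ℝ)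
    (hA : ∀ i j, A i j = A j i) (hw : ∀ i, 0 < w i)
    (hdom : ∀ i ∈ s, ∑ j ∈ s.erase i, |A i j| * w j ≤ 1 / 2 * A i i * w i) :
    1 / 2 * ∑ i ∈ s, a i ^ 2 * A i i ≤ ∑ i ∈ s, ∑ j ∈ s, a i * a j * A i j := by
  obtain ⟨B, hB⟩ : ∃ B : ι → ι → ℝ, ∀ i j, B i j = if i = j then 0 else |A i j| :=
    ⟨_, fun _ _ => rfl⟩
  have hB0 : ∀ i j, 0 ≤ B i j := fun i j => by rw [hB]; split_ifs <;> positivity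
  have hBs : ∀ i j, B i j = B j i := fun i j => by rw [hB, hB, hA]; simp only [eq_comm]
  have hrow : ∀ i ∈ s, ∑ j ∈ s, B i j * w j ≤ 1 / 2 * A i i * w i := by
    intro i hi
    refine le_trans (le_of_eq ?_) (hdom i hi)
    rw [← Finset.add_sum_erase _ _ hi, hB, if_pos rfl, zero_mul, zero_add]
    exact Finset.sum_congr rfl fun j hj => by rw [hB, if_neg (Finset.ne_of_mem_erase hj).symm]
  have hterm : ∀ i j, (if i = j then a i ^ 2 * A i i else 0) -
      (1 / 2 * (a i ^ 2 / w i * (B i j * w j)) + 1 / 2 * (a j ^ 2 / w j * (B j i * w i))) ≤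
      a i * a j * A i j := by
    intro i j
    by_cases h : i = j
    · subst h; simp [hB, sq]
    · rw [if_neg h, hBs j i]
      have hi := hw i
      have hj := hw j
      have h1 : |a i * a j * A i j| ≤
          1 / 2 * (a i ^ 2 / w i * (B i j * w j)) + 1 / 2 * (a j ^ 2 / w j * (B i j * w i)) := by
        rw [hB, if_neg h, abs_mul, abs_mul]
        have h2 : |a i| * |a j| ≤ 1 / 2 * (a i ^ 2 / w i * w j) + 1 / 2 * (a j ^ 2 / w j * w i) := by
          have h3 : 1 / 2 * (a i ^ 2 / w i * w j) + 1 / 2 * (a j ^ 2 / w j * w i) -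
              |a i| * |a j| = (|a i| * w j - |a j| * w i) ^ 2 / (2 * w i * w j) := by
            rw [← sq_abs (a i), ← sq_abs (a j)]
            field_simp
            ring
          have h4 : 0 ≤ (|a i| * w j - |a j| * w i) ^ 2 / (2 * w i * w j) := by positivity
          linarith
        calc |a i| * |a j| * |A i j| ≤ _ := mul_le_mul_of_nonneg_right h2 (abs_nonneg _)
          _ = _ := by ring
      have := neg_abs_le (a i * a j * A i j)
      linarith
  have hsum := Finset.sum_le_sum fun i (_ : i ∈ s) =>
    Finset.sum_le_sum fun j (_ : j ∈ s) => hterm i j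
  refine le_trans ?_ hsum
  simp only [Finset.sum_sub_distrib, Finset.sum_add_distrib, Finset.sum_ite_eq]
  rw [Finset.sum_comm (f := fun i j => 1 / 2 * (a j ^ 2 / w j * (B j i * w i)))]
  simp only [← Finset.mul_sum]
  have h5 : ∑ i ∈ s, a i ^ 2 / w i * ∑ j ∈ s, B i j * w j ≤ 1 / 2 * ∑ i ∈ s, a i ^ 2 * A i i := by
    rw [Finset.mul_sum]
    refine Finset.sum_le_sum fun i hi => ?_
    have hi' := hw i
    calc _ ≤ a i ^ 2 / w i * (1 / 2 * A i i * w i) :=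
          mul_le_mul_of_nonneg_left (hrow i hi) (by positivity)
      _ = _ := by field_simp
  have h6 : ∑ i ∈ s, (if i ∈ s then a i ^ 2 * A i i else 0) = ∑ i ∈ s, a i ^ 2 * A i i :=
    Finset.sum_congr rfl fun i hi => if_pos hi
  rw [h6]
  linarith

section Gram

variable {n K : ℕ} {q lam δ t : ℝ}

lemma Regime.gram_abs_le (h : Regime n K q lam δ t) (G H : Finset (Pairs n)) :
    |EY q lam K (fun y => PB K q lam G y * PB K q lam H y)| ≤
      (16 * √δ) ^ ((G \ H).card + (H \ G).card) *
        (√n)⁻¹ ^ ((verts G \ verts H).card + (verts H \ verts G).card) *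
        (√(EY q lam K (fun y => PP q G y * PP q G y)) *
          √(EY q lam K (fun y => PP q H y * PP q H y))) := by
  have hG := h.toGood.EY_PP_sq_pos G
  have hH := h.toGood.EY_PP_sq_pos H
  refine abs_le_of_sq_le_sq ((h.gram_sq_le G H).trans_eq ?_) (by positivity)
  have hs : ∀ (x : ℝ) (m : ℕ), (x ^ m) ^ 2 = (x ^ 2) ^ m := fun x m => by
    rw [← pow_mul, mul_comm, pow_mul]
  rw [mul_pow _ (√_ * √_) 2, mul_pow (_ ^ _) (_ ^ _) 2, mul_pow (√_) (√_), Real.sq_sqrt hG.le,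
    Real.sq_sqrt hH.le, hs, hs, mul_pow 16 (√δ) 2, inv_pow _ 2, Real.sq_sqrt h.δ0.le,
    Real.sq_sqrt h.n_pos.le]
  norm_num

/-- Diagonal dominance for matrices indexed by graphs, with weight `n ^ (-|V(G)| / 2)` attached
to a graph `G` after normalization. -/
lemma gram_abstract {n D : ℕ} (hn : 0 < n) {η : ℝ} (hη : 0 ≤ η)
    (hθ : η * (4 * (D : ℝ) + 1) ^ 2 ≤ 1 / 10) (E : Finset (Pairs n) → ℝ)
    (A : Finset (Pairs n) → Finset (Pairs n) → ℝ) (hE : ∀ G, 0 < E G)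
    (hA : ∀ G H, A G H = A H G)
    (hoff : ∀ G H, |A G H| ≤ η ^ ((G \ H).card + (H \ G).card) *
      (√n)⁻¹ ^ ((verts G \ verts H).card + (verts H \ verts G).card) * (√(E G) * √(E H)))
    (hdiag : ∀ G ∈ deg n D, 1 / 2 * E G ≤ A G G) (a : Finset (Pairs n) → ℝ) :
    1 / 4 * ∑ G ∈ deg n D, a G ^ 2 * E G ≤
      ∑ G ∈ deg n D, ∑ H ∈ deg n D, a G * a H * A G H := by
  have hn' : (0 : ℝ) < n := by exact_mod_cast hn
  have hsn : 0 < √(n : ℝ) := Real.sqrt_pos.2 hn'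
  have hni : (n : ℝ)⁻¹ = (√n)⁻¹ ^ 2 := by rw [inv_pow, Real.sq_sqrt hn'.le]
  have hterm : ∀ G H, |A G H| * ((√n)⁻¹ ^ (verts H).card / √(E H)) ≤
      (η ^ ((G \ H).card + (H \ G).card) * (n : ℝ)⁻¹ ^ (verts H \ verts G).card) *
        (E G * ((√n)⁻¹ ^ (verts G).card / √(E G))) := by
    intro G H
    have hcard : (verts G \ verts H).card + (verts H \ verts G).card + (verts H).card =
        2 * (verts H \ verts G).card + (verts G).card := by
      have h1 := Finset.card_sdiff_add_card (verts G) (verts H)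
      have h2 := Finset.card_sdiff_add_card (verts H) (verts G)
      rw [Finset.union_comm] at h2
      omega
    refine (mul_le_mul_of_nonneg_right (hoff G H) (by positivity)).trans_eq ?_
    have hsG : E G / √(E G) = √(E G) := Real.div_sqrt
    have hsH : √(E H) / √(E H) = 1 := div_self (Real.sqrt_pos.2 (hE H)).ne'
    have hpow : (√(n : ℝ))⁻¹ ^ ((verts G \ verts H).card + (verts H \ verts G).card) *
        (√n)⁻¹ ^ (verts H).card = (n : ℝ)⁻¹ ^ (verts H \ verts G).card *
        (√n)⁻¹ ^ (verts G).card := by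
      rw [← pow_add, hcard, hni, ← pow_mul, ← pow_add]
    calc _ = η ^ ((G \ H).card + (H \ G).card) *
          ((√(n : ℝ))⁻¹ ^ ((verts G \ verts H).card + (verts H \ verts G).card) *
            (√n)⁻¹ ^ (verts H).card) * √(E G) * (√(E H) / √(E H)) := by ring
      _ = η ^ ((G \ H).card + (H \ G).card) *
          ((n : ℝ)⁻¹ ^ (verts H \ verts G).card * (√n)⁻¹ ^ (verts G).card) *
          (E G / √(E G)) := by rw [hsH, hpow, hsG, mul_one]
      _ = _ := by ring
  refine le_trans ?_ (diag_dom (deg n D) A (fun G => (√n)⁻¹ ^ (verts G).card / √(E G)) a hA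
    (fun G => by have := hE G; positivity) ?_)
  · rw [Finset.mul_sum, Finset.mul_sum]
    refine Finset.sum_le_sum fun G hG => ?_
    have := mul_le_mul_of_nonneg_left (hdiag G hG) (sq_nonneg (a G))
    linarith
  · intro G hG
    have hrow := sum_row_le hn hη hθ (mem_deg.1 hG)
    refine (Finset.sum_le_sum fun H _ => hterm G H).trans ?_
    rw [← Finset.sum_mul]
    have hw : 0 ≤ (√(n : ℝ))⁻¹ ^ (verts G).card / √(E G) := by positivity
    have h1 := mul_le_mul_of_nonneg_right hrow (mul_nonneg (hE G).le hw)
    have h2 := mul_le_mul_of_nonneg_right (hdiag G hG) hw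
    refine h1.trans ?_
    generalize (√(n : ℝ))⁻¹ ^ (verts G).card / √(E G) = w at *
    linarith

/-- The Gram matrix of the basis functions is bounded below by a quarter of the diagonal matrix of
the second moments of the uncentred monomials. -/
lemma Regime.gram_lower (h : Regime n K q lam δ t) {D : ℕ} (hδ : D * δ ≤ 1 / 2) (hδ1 : δ ≤ 1)
    (hθ : 16 * √δ * (4 * (D : ℝ) + 1) ^ 2 ≤ 1 / 10) (a : Finset (Pairs n) → ℝ) :
    1 / 4 * ∑ G ∈ deg n D, a G ^ 2 * EY q lam K (fun y => PP q G y * PP q G y) ≤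
      EY q lam K (fun y => (∑ G ∈ deg n D, a G * PB K q lam G y) ^ 2) := by
  have e : EY q lam K (fun y => (∑ G ∈ deg n D, a G * PB K q lam G y) ^ 2) =
      ∑ G ∈ deg n D, ∑ H ∈ deg n D, a G * a H *
        EY q lam K (fun y => PB K q lam G y * PB K q lam H y) := by
    simp only [← EY_const_mul, ← EY_sum]
    congr 1
    funext y
    rw [sq, Finset.sum_mul_sum]
    exact Finset.sum_congr rfl fun G _ => Finset.sum_congr rfl fun H _ => by ring
  rw [e]
  exact gram_abstract (by exact_mod_cast h.n_pos) (by positivity) hθ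
    (fun G => EY q lam K (fun y => PP q G y * PP q G y))
    (fun G H => EY q lam K (fun y => PB K q lam G y * PB K q lam H y))
    (fun G => h.toGood.EY_PP_sq_pos G) (fun G H => by simp only [mul_comm])
    (fun G H => h.gram_abs_le G H) (fun G hG => h.EY_PB_sq_ge hδ hδ1 (mem_deg.1 hG)) a

end Gram

/-! ### Low-degree polynomials in terms of the basis functions -/

section Span

variable {n : ℕ} (K : ℕ) (q lam : ℝ)

/-- The functions of the observations spanned by the basis functions with at most `D` edges. -/
def lowSpan (n D : ℕ) : Submodule ℝ (EdgeConf n → ℝ) :=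
  Submodule.span ℝ (PB K q lam '' (deg n D : Set (Finset (Pairs n))))

lemma Ymat_pair (y : EdgeConf n) (p : Pairs n) : Ymat n q y p.1.1 p.1.2 = yv q y p := by
  have h := p.2
  rw [Ymat, dif_neg h.ne, yv]
  congr 3
  exact congrArg _ (Subtype.ext (Prod.ext (min_eq_left h.le) (max_eq_right h.le)))

/-- Powers of a two-valued variable are affine functions of it. -/
lemma yv_pow (k : ℕ) : ∃ α β : ℝ, ∀ (y : EdgeConf n) (p : Pairs n),
    yv q y p ^ k = α + β * yv q y p := by
  induction k with
  | zero => exact ⟨1, 0, fun y p => by simp⟩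
  | succ k ih =>
    obtain ⟨α, β, h⟩ := ih
    refine ⟨β * (q * (1 - q)), α + β * (1 - 2 * q), fun y p => ?_⟩
    rw [pow_succ, h, yv]
    split_ifs <;> ring

lemma PP_mem_lowSpan {D : ℕ} (G : Finset (Pairs n)) (hG : G.card ≤ D) :
    PP q G ∈ lowSpan K q lam n D := by
  induction hk : G.card using Nat.strong_induction_on generalizing G with
  | _ k ih =>
  subst hk
  have h1 : PB K q lam G = fun y => ∑ 𝒮 ∈ (comps G).powerset,
      (∏ C ∈ comps G \ 𝒮, -EY q lam K (PP q C)) * PP q (𝒮.biUnion id) y := by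
    funext y
    simp only [PB, PC, sub_eq_add_neg]
    rw [Finset.prod_add]
    refine Finset.sum_congr rfl fun 𝒮 h𝒮 => ?_
    rw [PP_biUnion ((comps_pairwiseDisjoint G).subset (by
      exact_mod_cast Finset.mem_powerset.1 h𝒮)), mul_comm]
  have h2 : PP q G = PB K q lam G - ∑ 𝒮 ∈ (comps G).ssubsets,
      (∏ C ∈ comps G \ 𝒮, -EY q lam K (PP q C)) • PP q (𝒮.biUnion id) := by
    rw [h1]
    funext y
    simp only [Pi.sub_apply]
    rw [Finset.ssubsets, ← Finset.add_sum_erase _ _ (Finset.mem_powerset_self (comps G)),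
      biUnion_comps]
    simp [Finset.sum_apply]
  rw [h2]
  refine Submodule.sub_mem _ (Submodule.subset_span ⟨G, by simpa [mem_deg] using hG, rfl⟩)
    (Submodule.sum_mem _ fun 𝒮 h𝒮 => Submodule.smul_mem _ _ ?_)
  rw [Finset.mem_ssubsets] at h𝒮
  have hlt : (𝒮.biUnion id).card < G.card := by
    refine Finset.card_lt_card (Finset.ssubset_iff_subset_ne.2 ⟨?_, fun he => ?_⟩)
    · exact Finset.biUnion_subset.2 fun C hC => comps_subset (h𝒮.1 hC)
    · obtain ⟨C, hC, hC'⟩ := Finset.exists_of_ssubset h𝒮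
      obtain ⟨p, hp⟩ := (mem_comps.1 hC).2.1
      have : p ∈ 𝒮.biUnion id := by rw [he]; exact comps_subset hC hp
      obtain ⟨C', h', hp'⟩ := Finset.mem_biUnion.1 this
      refine Finset.disjoint_left.1 (disjoint_of_verts
        (comps_disjoint hC (h𝒮.1 h') fun e => hC' (e ▸ h'))) hp hp'
  exact ih _ hlt _ (hlt.le.trans hG) rfl

lemma evalY_mem_lowSpan {D : ℕ} (f : MvPolynomial (Pairs n) ℝ) (hf : f.totalDegree ≤ D) :
    evalY n q f ∈ lowSpan K q lam n D := by
  have h1 : evalY n q f = ∑ m ∈ f.support, f.coeff m • fun y => ∏ p ∈ m.support, yv q y p ^ m p := by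
    funext y
    simp only [evalY, MvPolynomial.eval_eq, Ymat_pair, Finset.sum_apply, Pi.smul_apply, smul_eq_mul]
  rw [h1]
  refine Submodule.sum_mem _ fun m hm => Submodule.smul_mem _ _ ?_
  have hdeg := (MvPolynomial.le_totalDegree hm).trans hf
  have hcard : m.support.card ≤ D := by
    refine le_trans ?_ hdeg
    rw [Finset.card_eq_sum_ones]
    exact Finset.sum_le_sum fun p hp => Nat.one_le_iff_ne_zero.2 (Finsupp.mem_support_iff.1 hp)
  choose α β hαβ using fun k => yv_pow (n := n) q k
  have h2 : (fun y => ∏ p ∈ m.support, yv q y p ^ m p) = ∑ S ∈ m.support.powerset,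
      ((∏ p ∈ S, β (m p)) * ∏ p ∈ m.support \ S, α (m p)) • PP q S := by
    funext y
    simp only [hαβ, Finset.sum_apply, Pi.smul_apply, smul_eq_mul, PP]
    rw [Finset.prod_congr rfl fun p _ => add_comm _ _, Finset.prod_add]
    refine Finset.sum_congr rfl fun S _ => ?_
    rw [Finset.prod_mul_distrib]
    ring
  rw [h2]
  refine Submodule.sum_mem _ fun S hS => Submodule.smul_mem _ _ (PP_mem_lowSpan K q lam S ?_)
  exact (Finset.card_le_card (Finset.mem_powerset.1 hS)).trans hcard

lemma exists_coeff {D : ℕ} (f : MvPolynomial (Pairs n) ℝ) (hf : f.totalDegree ≤ D) :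
    ∃ a : Finset (Pairs n) → ℝ, evalY n q f = fun y => ∑ G ∈ deg n D, a G * PB K q lam G y := by
  have := evalY_mem_lowSpan K q lam f hf
  rw [lowSpan, Submodule.mem_span_image_finset_iff_exists_fun'] at this
  obtain ⟨a, ha⟩ := this
  refine ⟨a, ?_⟩
  rw [← ha]
  funext y
  simp [Finset.sum_apply]

end Span

/-! ### Correlation of the basis functions with the signal -/

section Signal

variable {n K : ℕ} {q lam δ t : ℝ} {i0 i1 : Fin n}

lemma shift_eq_of_notMem [NeZero K] {A : Finset (Fin n)} {v : Fin n} (h : v ∉ A) (a : Fin K)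
    (z : Lab n K) : shift A a z v = z v := by
  simp [shift, h]

lemma shift_eq_of_mem [NeZero K] {A : Finset (Fin n)} {v : Fin n} (h : v ∈ A) (a : Fin K)
    (z : Lab n K) : shift A a z v = z v + a := by
  simp [shift, h]

/-- A function of the edges of `G` is conditionally insensitive to a common shift of the labels
of a connected component of `G`. -/
lemma CE_shift [NeZero K] {F : EdgeConf n → ℝ} {C G : Finset (Pairs n)}
    (hF : DependsOn F (G : Set (Pairs n))) (hC : IsClosedIn C G) (a : Fin K) (z : Lab n K) :
    CE q lam (shift (verts C) a z) F = CE q lam z F := by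
  refine pE_congr_weight _ _ (we_sum q lam _) (we_sum q lam z) (G : Set (Pairs n)) ?_ hF
  intro p hp
  have e1 : p.1.1 ∈ ends p := by simp [ends]
  have e2 : p.1.2 ∈ ends p := by simp [ends]
  have : shift (verts C) a z p.1.1 = shift (verts C) a z p.1.2 ↔ z p.1.1 = z p.1.2 := by
    by_cases hpC : p ∈ C
    · rw [shift_eq_of_mem (ends_subset_verts hpC e1), shift_eq_of_mem (ends_subset_verts hpC e2),
        add_left_inj]
    · have hv : ∀ v ∈ ends p, v ∉ verts C := fun v hv hvC =>
        Finset.disjoint_left.1 hC.2 hvC (ends_subset_verts (Finset.mem_sdiff.2 ⟨hp, hpC⟩) hv)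
      rw [shift_eq_of_notMem (hv _ e1), shift_eq_of_notMem (hv _ e2)]
  funext b
  simp only [we, pEdge, this]

lemma EZ_xind (hK : 0 < K) (h01 : i0 ≠ i1) : EZ (fun z => xind n K i0 i1 z) = 0 := by
  have : NeZero K := ⟨hK.ne'⟩
  have := EZ_shift (K := K) {i0} (Finset.mem_singleton_self i0)
    (by simpa using h01.symm : i1 ∉ ({i0} : Finset (Fin n))) (fun _ => 1) (fun _ _ => rfl)
  simpa [xind] using this

lemma abs_xind_le (hK : 0 < K) (z : Lab n K) : |xind n K i0 i1 z| ≤ 1 := by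
  have h1 : (1 : ℝ) ≤ K := by exact_mod_cast hK
  have h2 : 1 / (K : ℝ) ≤ 1 := (div_le_one (by linarith)).2 h1
  have h3 : 0 ≤ 1 / (K : ℝ) := by positivity
  rw [xind, abs_le]
  split_ifs <;> constructor <;> linarith

/-- Only connected graphs through both marked vertices are correlated with the signal. -/
lemma signal_eq_zero (hK : 0 < K) (h01 : i0 ≠ i1) (G : Finset (Pairs n))
    (hG : ¬ (G ∈ comps G ∧ i0 ∈ verts G ∧ i1 ∈ verts G)) :
    EZ (fun z => CE q lam z (PB K q lam G) * xind n K i0 i1 z) = 0 := by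
  have : NeZero K := ⟨hK.ne'⟩
  by_cases h0 : i0 ∈ verts G
  swap
  · refine EZ_shift (K := K) {i0} (Finset.mem_singleton_self i0)
      (by simpa using h01.symm : i1 ∉ ({i0} : Finset (Fin n))) _ fun a z => ?_
    refine CE_dependsOn q lam (PB_dependsOn K q lam G) fun v hv => shift_eq_of_notMem ?_ a z
    rw [Finset.mem_singleton]
    rintro rfl
    exact h0 hv
  obtain ⟨p, hp, hp0⟩ := mem_verts.1 h0
  obtain ⟨C, hC, hpC⟩ := exists_comp_mem hp
  have h0C : i0 ∈ verts C := ends_subset_verts hpC hp0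
  by_cases h1C : i1 ∈ verts C
  swap
  · exact EZ_shift (K := K) (verts C) h0C h1C _ fun a z =>
      CE_shift (PB_dependsOn K q lam G) (mem_comps.1 hC).1 a z
  have hne : C ≠ G := by
    rintro rfl
    exact hG ⟨hC, h0C, h1C⟩
  obtain ⟨p', hp', hpC'⟩ := Finset.exists_of_ssubset
    (Finset.ssubset_iff_subset_ne.2 ⟨comps_subset hC, hne⟩)
  obtain ⟨C', hC', hpmem⟩ := exists_comp_mem hp'
  have hCC' : C' ≠ C := by rintro rfl; exact hpC' hpmem
  have hd := comps_disjoint hC' hC hCC'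
  have e : PB K q lam G = fun y => PC K q lam C' y *
      ∏ C'' ∈ (comps G).erase C', PC K q lam C'' y := by
    funext y
    rw [PB, ← Finset.mul_prod_erase _ _ hC']
  have hsub : ∀ C'' ∈ (comps G).erase C', C'' ⊆ G \ C' := by
    intro C'' h p hp
    rw [Finset.mem_erase] at h
    refine Finset.mem_sdiff.2 ⟨comps_subset h.2 hp, fun hpC => ?_⟩
    exact Finset.disjoint_left.1 (disjoint_of_verts (comps_disjoint h.2 hC' h.1)) hp hpC
  rw [e, indep q lam hK (A := C') (B := G \ C') (W := {i0, i1}) (PC_dependsOn K q lam C')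
    (prod_PC_dependsOn K q lam hsub) ?_ (mem_comps.1 hC').1.2 ?_, EY_PC hK, zero_mul]
  · intro z z' h
    simp only [xind]
    rw [h i0 (by simp), h i1 (by simp)]
  · rw [Finset.disjoint_right]
    intro v hv hv'
    rw [Finset.mem_insert, Finset.mem_singleton] at hv
    rcases hv with rfl | rfl
    · exact Finset.disjoint_left.1 hd hv' h0C
    · exact Finset.disjoint_left.1 hd hv' h1C

lemma comps_of_self {G : Finset (Pairs n)} (hG : G ∈ comps G) : comps G = {G} := by
  ext C
  rw [Finset.mem_singleton]
  constructor
  · intro hC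
    exact (mem_comps.1 hG).2.2 C (comps_subset hC) (mem_comps.1 hC).2.1 (mem_comps.1 hC).1
  · rintro rfl
    exact hG

lemma Good.signal_abs_le (h : Good K q lam) (h01 : i0 ≠ i1) {G : Finset (Pairs n)}
    (hG : G ∈ comps G) :
    |EZ (fun z => CE q lam z (PB K q lam G) * xind n K i0 i1 z)| ≤ EY q lam K (PP q G) := by
  have hK := h.K0
  have e1 : ∀ z : Lab n K, CE q lam z (PB K q lam G) =
      CE q lam z (PP q G) + -EY q lam K (PP q G) := by
    intro z
    have : PB K q lam G = fun y => PP q G y + -EY q lam K (PP q G) * 1 := by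
      funext y; rw [PB, comps_of_self hG, Finset.prod_singleton, PC]; ring
    rw [this, CE, pE_add, pE_const_mul, pE_one _ (we_sum q lam z), mul_one, CE]
  have e2 : EZ (fun z => CE q lam z (PB K q lam G) * xind n K i0 i1 z) =
      EZ (fun z => CE q lam z (PP q G) * xind n K i0 i1 z) := by
    simp only [e1, add_mul]
    rw [EZ_add, EZ_const_mul, EZ_xind hK h01, mul_zero, add_zero]
  have hc : ∀ z : Lab n K, 0 ≤ CE q lam z (PP q G) := fun z => by
    rw [CE_PP]; exact mul_nonneg (pow_nonneg h.lam0.le _) (mono_nonneg _ _)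
  rw [e2, abs_le]
  have hx := fun z => abs_le.1 (abs_xind_le (n := n) (i0 := i0) (i1 := i1) hK z)
  constructor
  · have : -EY q lam K (PP q G) = EZ (fun z : Lab n K => -1 * CE q lam z (PP q G)) := by
      rw [EZ_const_mul, EY]; ring
    rw [this]
    exact EZ_mono fun z => by nlinarith [hc z, hx z]
  · exact EZ_mono fun z => by nlinarith [hc z, hx z]

/-- The squared correlation of a basis function with the signal, relative to its second moment. -/
lemma Regime.signal_sq_le (h : Regime n K q lam δ t) (h01 : i0 ≠ i1) (G : Finset (Pairs n)) :
    EZ (fun z => CE q lam z (PB K q lam G) * xind n K i0 i1 z) ^ 2 ≤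
      (if G = ∅ then 0 else
        (n : ℝ)⁻¹ * (δ ^ G.card * (n : ℝ)⁻¹ ^ (verts G \ {i0, i1}).card)) *
        EY q lam K (fun y => PP q G y * PP q G y) := by
  have hpos := h.toGood.EY_PP_sq_pos G
  have hδ := h.δ0
  have hn := h.n_pos
  by_cases hG : G ∈ comps G ∧ i0 ∈ verts G ∧ i1 ∈ verts G
  · obtain ⟨hGc, h0, h1⟩ := hG
    have hne : G ≠ ∅ := (mem_comps.1 hGc).2.1.ne_empty
    rw [if_neg hne]
    have hcard : (verts G).card - 1 = 1 + (verts G \ {i0, i1}).card := by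
      have hsub : ({i0, i1} : Finset (Fin n)) ⊆ verts G := by
        intro v hv
        rw [Finset.mem_insert, Finset.mem_singleton] at hv
        rcases hv with rfl | rfl <;> assumption
      have h2 := Finset.card_sdiff_add_card_eq_card hsub
      rw [Finset.card_pair h01] at h2
      omega
    have h3 := pow_le_pow_left₀ (abs_nonneg _) (h.toGood.signal_abs_le h01 hGc) 2
    rw [sq_abs] at h3
    refine (h3.trans (h.EY_PP_conn_sq_le hGc)).trans_eq ?_
    rw [hcard, pow_add, pow_one]
    ring
  · rw [signal_eq_zero h.K0 h01 G hG, zero_pow two_ne_zero]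
    split_ifs <;> positivity

/-- The bound on the low-degree correlation in terms of the parameters `δ` and `D`. -/
lemma Regime.corr_le (h : Regime n K q lam δ t) {D : ℕ} (hδ : D * δ ≤ 1 / 2) (hδ1 : δ ≤ 1)
    (hθ : 16 * √δ * (4 * (D : ℝ) + 1) ^ 2 ≤ 1 / 10)
    (hθ' : δ * (2 * (D : ℝ) + 3) ^ 2 ≤ 1 / 2) (h01 : i0 ≠ i1) :
    Corr2 n K D q lam i0 i1 ≤ 4 / n * (2 * (δ * (2 * (D : ℝ) + 3) ^ 2)) := by
  have hn := h.n_pos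
  have hδ0 := h.δ0
  refine Real.sSup_le ?_ (by positivity)
  rintro r ⟨f, hf, hpos, rfl⟩
  rw [div_le_iff₀ hpos]
  obtain ⟨a, ha⟩ := exists_coeff K q lam f hf
  have e1 : expec n K q lam (fun _ y => evalY n q f y ^ 2) =
      EY q lam K (fun y => (∑ G ∈ deg n D, a G * PB K q lam G y) ^ 2) := by
    rw [expec_eq' q lam (fun y => evalY n q f y ^ 2), ha]
  have e2 : expec n K q lam (fun z y => evalY n q f y * xind n K i0 i1 z) =
      ∑ G ∈ deg n D, a G * EZ (fun z => CE q lam z (PB K q lam G) * xind n K i0 i1 z) := by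
    rw [expec_eq q lam (evalY n q f), ha]
    simp only [CE, pE_sum, pE_const_mul, Finset.sum_mul, EZ_sum, mul_assoc, EZ_const_mul]
  have hlow := h.gram_lower hδ hδ1 hθ a
  rw [e1, e2]
  have hE := fun G => h.toGood.EY_PP_sq_pos (n := n) G
  have hsig := fun G => h.signal_sq_le (i0 := i0) (i1 := i1) h01 G
  generalize EY q lam K (fun y => (∑ G ∈ deg n D, a G * PB K q lam G y) ^ 2) = V at *
  obtain ⟨c, hc⟩ : ∃ c : Finset (Pairs n) → ℝ, ∀ G, c G =
    EZ (fun z => CE q lam z (PB K q lam G) * xind n K i0 i1 z) := ⟨_, fun _ => rfl⟩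
  obtain ⟨E, hEd⟩ : ∃ E : Finset (Pairs n) → ℝ, ∀ G, E G =
    EY q lam K (fun y => PP q G y * PP q G y) := ⟨_, fun _ => rfl⟩
  simp only [← hc, ← hEd] at *
  have hcs := Finset.sum_mul_sq_le_sq_mul_sq (deg n D) (fun G => a G * √(E G))
    (fun G => c G / √(E G))
  have hs1 : ∀ G, a G * √(E G) * (c G / √(E G)) = a G * c G := fun G => by
    have := Real.sqrt_pos.2 (hE G)
    field_simp
  have hs2 : ∀ G, (a G * √(E G)) ^ 2 = a G ^ 2 * E G := fun G => by
    rw [mul_pow, Real.sq_sqrt (hE G).le]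
  have hs3 : ∀ G, (c G / √(E G)) ^ 2 = c G ^ 2 / E G := fun G => by
    rw [div_pow, Real.sq_sqrt (hE G).le]
  simp only [hs1, hs2, hs3] at hcs
  have hsum : ∑ G ∈ deg n D, c G ^ 2 / E G ≤
      (n : ℝ)⁻¹ * (2 * (δ * (2 * (D : ℝ) + 3) ^ 2)) := by
    calc ∑ G ∈ deg n D, c G ^ 2 / E G ≤ ∑ G ∈ deg n D, (if G = ∅ then 0 else
          (n : ℝ)⁻¹ * (δ ^ G.card * (n : ℝ)⁻¹ ^ (verts G \ {i0, i1}).card)) :=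
          Finset.sum_le_sum fun G _ => (div_le_iff₀ (hE G)).2 (hsig G)
      _ = ∑ G ∈ (deg n D).erase ∅,
          (n : ℝ)⁻¹ * (δ ^ G.card * (n : ℝ)⁻¹ ^ (verts G \ {i0, i1}).card) := by
          rw [← Finset.add_sum_erase _ _
            (mem_deg.2 (by simp : (∅ : Finset (Pairs n)).card ≤ D)), if_pos rfl, zero_add]
          exact Finset.sum_congr rfl fun G hG => if_neg (Finset.ne_of_mem_erase hG)
      _ ≤ _ := by
          rw [← Finset.mul_sum]
          exact mul_le_mul_of_nonneg_left (sum_marked_le (by exact_mod_cast hn) hδ0.le hθ'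
            Finset.card_le_two) (by positivity)
  have hV : ∑ G ∈ deg n D, a G ^ 2 * E G ≤ 4 * V := by linarith
  calc (∑ G ∈ deg n D, a G * c G) ^ 2
      ≤ (∑ G ∈ deg n D, a G ^ 2 * E G) * ∑ G ∈ deg n D, c G ^ 2 / E G := hcs
    _ ≤ (4 * V) * ((n : ℝ)⁻¹ * (2 * (δ * (2 * (D : ℝ) + 3) ^ 2))) :=
        mul_le_mul hV hsum (Finset.sum_nonneg fun G _ =>
          div_nonneg (sq_nonneg _) (hE G).le) (by linarith)
    _ = _ := by ring

end Signal

/-! ### Numerical verification -/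

/-- With `δ = D ^ (-16 cs)` all smallness conditions hold, with a lot of room. -/
lemma numerics {D : ℕ} (hD : 2 ≤ D) {cs : ℝ} (hcs : 14 ≤ cs) :
    D * ((D : ℝ) ^ (16 * cs))⁻¹ ≤ 1 / 2 ∧ ((D : ℝ) ^ (16 * cs))⁻¹ ≤ 1 ∧
    16 * √(((D : ℝ) ^ (16 * cs))⁻¹) * (4 * (D : ℝ) + 1) ^ 2 ≤ 1 / 10 ∧
    ((D : ℝ) ^ (16 * cs))⁻¹ * (2 * (D : ℝ) + 3) ^ 2 ≤ 1 / 2 ∧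
    2 * (((D : ℝ) ^ (16 * cs))⁻¹ * (2 * (D : ℝ) + 3) ^ 2) ≤ (D : ℝ) ^ (-(15 * cs)) := by
  have hd : (2 : ℝ) ≤ D := by exact_mod_cast hD
  have hd0 : (0 : ℝ) < D := by linarith
  obtain ⟨x, hx⟩ : ∃ x : ℝ, x = D := ⟨_, rfl⟩
  rw [← hx] at hd hd0 ⊢
  -- The factor `X = D ^ (8 cs)` dominates `D ^ 14`, which dominates every polynomial needed.
  have h14 : x ^ 14 ≤ x ^ cs := by
    rw [← Real.rpow_natCast]
    exact Real.rpow_le_rpow_of_exponent_le (by linarith) (by exact_mod_cast hcs)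
  have hX : x ^ cs ≤ x ^ (8 * cs) :=
    Real.rpow_le_rpow_of_exponent_le (by linarith) (by linarith)
  have h16 : x ^ (16 * cs) = (x ^ (8 * cs)) ^ 2 := by
    rw [← Real.rpow_natCast, ← Real.rpow_mul hd0.le]; congr 1; push_cast; ring
  have h15 : x ^ (-(15 * cs)) = x ^ cs * (x ^ (16 * cs))⁻¹ := by
    rw [← Real.rpow_neg hd0.le, ← Real.rpow_add hd0]; congr 1; ring
  have hpoly : 4096 * x ^ 2 ≤ x ^ 14 := by
    have : (2 : ℝ) ^ 12 ≤ x ^ 12 := pow_le_pow_left₀ (by norm_num) hd 12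
    nlinarith [sq_nonneg x]
  obtain ⟨X, hXd⟩ : ∃ X : ℝ, X = x ^ (8 * cs) := ⟨_, rfl⟩
  rw [← hXd] at hX h16
  have hXx : 4096 * x ^ 2 ≤ X := hpoly.trans (h14.trans hX)
  have hX1 : 1 ≤ X := by nlinarith
  have hX0 : 0 < X := by linarith
  rw [h15, h16, Real.sqrt_inv, Real.sqrt_sq hX0.le]
  have hX2 : X ≤ X ^ 2 := by nlinarith
  refine ⟨?_, ?_, ?_, ?_, ?_⟩
  · rw [← div_eq_mul_inv, div_le_iff₀ (by positivity)]; nlinarith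
  · exact inv_le_one_of_one_le₀ (by nlinarith)
  · have : 16 * X⁻¹ * (4 * x + 1) ^ 2 = 16 * (4 * x + 1) ^ 2 / X := by ring
    rw [this, div_le_iff₀ hX0]
    nlinarith
  · rw [inv_mul_eq_div, div_le_iff₀ (by positivity)]; nlinarith
  · have h2 : 2 * (2 * x + 3) ^ 2 ≤ x ^ cs := by nlinarith
    have := mul_le_mul_of_nonneg_right h2 (by positivity : 0 ≤ (X ^ 2)⁻¹)
    linarith

theorem statement1 (n K D : ℕ) (q lam cs : ℝ)
    (hcs : 14 ≤ cs) (hD : 2 ≤ D) (hq0 : 0 ≤ q) (hq : q ≤ 1 / 2)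
    (hql : q + 2 * lam ≤ 1) (hlam : 0 < lam) (hK : 2 ≤ K) (hKn : K ≤ n)
    (hKsqrt : Real.sqrt n ≤ K)
    (hcond : 2 * (D : ℝ) ^ (16 * cs) * lam ≤
      (lam / K + q * (1 - q)) ^ (1 - Real.log K / Real.log n)) :
    Corr2 n K D q lam ⟨0, by omega⟩ ⟨1, by omega⟩ ≤ 4 / n * (D : ℝ) ^ (-(15 * cs)) := by
  have hd : (2 : ℝ) ≤ D := by exact_mod_cast hD
  have hM : (1 : ℝ) ≤ (D : ℝ) ^ (16 * cs) := Real.one_le_rpow (by linarith) (by linarith)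
  have hreg := regime_of_cond ⟨hq0, hq, hql, hlam, hK⟩ hKn hKsqrt hM hcond
  obtain ⟨h1, h2, h3, h4, h5⟩ := numerics hD hcs
  refine (hreg.corr_le h1 h2 h3 h4 (by simp)).trans ?_
  exact mul_le_mul_of_nonneg_left h5 (by positivity)

end SBM
end
end

section
/- Assume q ≤ 1/2, q + 2λ ≤ 1, λ > 0, and 0 < q. For any two templates G^(1), G^(2), any node matching M ∈ M*, and any pair of labelings (π^(1),π^(2)) ∈ Π(M): | E[P_{G^(1),π^(1)}·P_{G^(2),π^(2)}] / √( E[P_{G^(1),π^(1)}²]·E[P_{G^(2),π^(2)}²] ) | ≤ min( K^{−(|U^(1)|+|U^(2)|)}·(λ/√q̄)^{|E_Δ|} , λ^{|E_Δ|/2} / K^{(|U^(1)|+|U^(2)|)/2} ). -/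
/-! Let `S₁`, `S₂` be the edge sets of the two labeled graphs and, for a labelling `z` of the nodes,
let `A`, `B` be the indicators that `z` is constant along the edges of `S₁ \ S₂`, `S₂ \ S₁`. Put
`w_p = E[Y_p² | z]` and `W = ∏_{p ∈ S₁ ∩ S₂} w_p`. Since `E[Y_p | z] = lam 1{z equal on p}`,
conditional independence gives `E[P₁ P₂] = lam^|E_Δ| E[A B W]` and `E[Pᵢ²] = E ∏_{Sᵢ} w_p`
(`expec_PG_mul`, `expec_PG_sq`).

Every component of each template contains a matched node, so any path from an unmatched node to
its first matched node uses unmatched edges only; hence `A = 1` forces the labels on `U⁽¹⁾` given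
all the others (`eq_of_prod_ne_zero`), and averaging a quantity that ignores `U⁽¹⁾` against `A`
costs a factor `K^{-|U⁽¹⁾|}` (`sum_mul_pow_le`); the same holds for `B` and `U⁽²⁾`. This gives
`E[ABW] ≤ K^{-|U⁽¹⁾|-|U⁽²⁾|} E[W]`, `E[ABW] ≤ K^{-|U⁽²⁾|} E[AW]` and
`E[ABW] ≤ K^{-|U⁽¹⁾|} E[BW]`.

On the other side `w_p ≥ q(1-q)` yields `E[P₁²] ≥ (q(1-q))^|S₁ \ S₂| E[W]`, and `q + 2 lam ≤ 1`
yields `w_p ≥ lam 1{z equal on p}`, so `E[P₁²] ≥ lam^|S₁ \ S₂| E[AW]` (`sum_wPair_ge`), and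
likewise for `P₂`. The first bound of the minimum combines the `E[W]` estimates; the second comes
from multiplying the `E[AW]` and `E[BW]` estimates. -/

open Classical Finset

noncomputable section

namespace SBM

/-- Expectation conditionally on `z i = z j`. -/
def expecEq (n K : ℕ) (q lam : ℝ) (i j : Fin n) (F : Lab n K → EdgeConf n → ℝ) : ℝ :=
  expec n K q lam (fun z y => if z i = z j then F z y else 0) /
    expec n K q lam (fun z _ => if z i = z j then 1 else 0)

/-- Expectation conditionally on `z i ≠ z j`. -/
def expecNe (n K : ℕ) (q lam : ℝ) (i j : Fin n) (F : Lab n K → EdgeConf n → ℝ) : ℝ :=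
  expec n K q lam (fun z y => if z i ≠ z j then F z y else 0) /
    expec n K q lam (fun z _ => if z i ≠ z j then 1 else 0)

/-- Variance conditionally on `z i = z j`. -/
def varEq (n K : ℕ) (q lam : ℝ) (i j : Fin n) (F : Lab n K → EdgeConf n → ℝ) : ℝ :=
  expecEq n K q lam i j (fun z y => F z y ^ 2) - expecEq n K q lam i j F ^ 2

/-- Variance conditionally on `z i ≠ z j`. -/
def varNe (n K : ℕ) (q lam : ℝ) (i j : Fin n) (F : Lab n K → EdgeConf n → ℝ) : ℝ :=
  expecNe n K q lam i j (fun z y => F z y ^ 2) - expecNe n K q lam i j F ^ 2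

/-- A template: a finite simple graph on `Fin v` (edges stored as ordered pairs `a < b`)
with the two distinguished nodes `0` and `1`. -/
structure Template where
  v : ℕ
  hv : 2 ≤ v
  E : Finset (Fin v × Fin v)
  hE : ∀ e ∈ E, e.1 < e.2

namespace Template

/-- First distinguished node. -/
def v1 (T : Template) : Fin T.v := ⟨0, by have := T.hv; omega⟩

/-- Second distinguished node. -/
def v2 (T : Template) : Fin T.v := ⟨1, by have := T.hv; omega⟩

/-- The underlying simple graph of a template. -/
def graph (T : Template) : SimpleGraph (Fin T.v) :=
  SimpleGraph.fromRel fun a b => (a, b) ∈ T.E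

end Template

/-- Labelings `Π_V`: injections sending the distinguished nodes to the nodes `0` and `1`. -/
def PiV (n : ℕ) (hn : 2 ≤ n) (T : Template) : Finset (Fin T.v ↪ Fin n) :=
  Finset.univ.filter fun π =>
    π T.v1 = (⟨0, by omega⟩ : Fin n) ∧ π T.v2 = (⟨1, by omega⟩ : Fin n)

/-- The monomial `P_{G,π}(Y) = ∏_{(u,w) ∈ E} Y_{π u, π w}`. -/
def PG (n : ℕ) (q : ℝ) (T : Template) (π : Fin T.v ↪ Fin n) (y : EdgeConf n) : ℝ :=
  ∏ e ∈ T.E, Ymat n q y (π e.1) (π e.2)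

/-- A matching between the node sets of two templates: no node appears twice. -/
def IsMatching (T1 T2 : Template) (M : Finset (Fin T1.v × Fin T2.v)) : Prop :=
  (∀ p ∈ M, ∀ p' ∈ M, (p : Fin T1.v × Fin T2.v).1 = (p' : Fin T1.v × Fin T2.v).1 → p = p') ∧
  (∀ p ∈ M, ∀ p' ∈ M, (p : Fin T1.v × Fin T2.v).2 = (p' : Fin T1.v × Fin T2.v).2 → p = p')

/-- `Π(M)`: pairs of labelings compatible with the matching `M`. -/
def PiM (n : ℕ) (hn : 2 ≤ n) (T1 T2 : Template) (M : Finset (Fin T1.v × Fin T2.v)) :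
    Set ((Fin T1.v ↪ Fin n) × (Fin T2.v ↪ Fin n)) :=
  {pp | pp.1 ∈ PiV n hn T1 ∧ pp.2 ∈ PiV n hn T2 ∧
    ∀ (a : Fin T1.v) (b : Fin T2.v), pp.1 a = pp.2 b ↔ (a, b) ∈ M}

/-- An edge of `T1` is matched if its two endpoints are matched to the endpoints of an
edge of `T2`. -/
def EdgeMatched1 (T1 T2 : Template) (M : Finset (Fin T1.v × Fin T2.v))
    (e : Fin T1.v × Fin T1.v) : Prop :=
  ∃ e' ∈ T2.E, ((e.1, e'.1) ∈ M ∧ (e.2, e'.2) ∈ M) ∨ ((e.1, e'.2) ∈ M ∧ (e.2, e'.1) ∈ M)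

/-- An edge of `T2` is matched if its two endpoints are matched to the endpoints of an
edge of `T1`. -/
def EdgeMatched2 (T1 T2 : Template) (M : Finset (Fin T1.v × Fin T2.v))
    (e' : Fin T2.v × Fin T2.v) : Prop :=
  ∃ e ∈ T1.E, ((e.1, e'.1) ∈ M ∧ (e.2, e'.2) ∈ M) ∨ ((e.1, e'.2) ∈ M ∧ (e.2, e'.1) ∈ M)

/-- `|E_Δ|`: the number of unmatched edges (in either template). -/
def EDeltaCard (T1 T2 : Template) (M : Finset (Fin T1.v × Fin T2.v)) : ℕ :=
  (T1.E.filter fun e => ¬ EdgeMatched1 T1 T2 M e).card +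
    (T2.E.filter fun e => ¬ EdgeMatched2 T1 T2 M e).card

/-- `|U^{(1)}|`: the number of unmatched nodes of the first template. -/
def U1card (T1 T2 : Template) (M : Finset (Fin T1.v × Fin T2.v)) : ℕ :=
  (Finset.univ.filter fun a : Fin T1.v => ∀ p ∈ M, (p : Fin T1.v × Fin T2.v).1 ≠ a).card

/-- `|U^{(2)}|`: the number of unmatched nodes of the second template. -/
def U2card (T1 T2 : Template) (M : Finset (Fin T1.v × Fin T2.v)) : ℕ :=
  (Finset.univ.filter fun b : Fin T2.v => ∀ p ∈ M, (p : Fin T1.v × Fin T2.v).2 ≠ b).card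

/-- A pair of matched nodes is semi-matched if one of them is incident to an unmatched edge. -/
def IsSemiMatched (T1 T2 : Template) (M : Finset (Fin T1.v × Fin T2.v))
    (p : Fin T1.v × Fin T2.v) : Prop :=
  (∃ e ∈ T1.E, (e.1 = p.1 ∨ e.2 = p.1) ∧ ¬ EdgeMatched1 T1 T2 M e) ∨
  (∃ e' ∈ T2.E, (e'.1 = p.2 ∨ e'.2 = p.2) ∧ ¬ EdgeMatched2 T1 T2 M e')

/-- `M_SM`: the semi-matched pairs of `M`. -/
def MSM (T1 T2 : Template) (M : Finset (Fin T1.v × Fin T2.v)) :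
    Finset (Fin T1.v × Fin T2.v) :=
  M.filter (IsSemiMatched T1 T2 M)

/-- `M_PM`: the perfectly matched pairs of `M`. -/
def MPM (T1 T2 : Template) (M : Finset (Fin T1.v × Fin T2.v)) :
    Finset (Fin T1.v × Fin T2.v) :=
  M.filter fun p => ¬ IsSemiMatched T1 T2 M p

/-- A node is isolated if it is incident to no edge. -/
def IsIsolated (T : Template) (w : Fin T.v) : Prop :=
  ∀ e ∈ T.E, e.1 ≠ w ∧ e.2 ≠ w

/-- The pruned matching `M⁻`: remove the pair of first (resp. second) distinguished nodes
whenever that node is isolated in `T1` or in `T2`. -/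
def Mminus (T1 T2 : Template) (M : Finset (Fin T1.v × Fin T2.v)) :
    Finset (Fin T1.v × Fin T2.v) :=
  M.filter fun p =>
    ¬ ((p = (T1.v1, T2.v1) ∧ (IsIsolated T1 T1.v1 ∨ IsIsolated T2 T2.v1)) ∨
       (p = (T1.v2, T2.v2) ∧ (IsIsolated T1 T1.v2 ∨ IsIsolated T2 T2.v2)))

/-- `M ∈ M*`: every connected component of `T1` and of `T2` meets the pruned matching. -/
def InMstar (T1 T2 : Template) (M : Finset (Fin T1.v × Fin T2.v)) : Prop :=
  (∀ w : Fin T1.v, ∃ p ∈ Mminus T1 T2 M, T1.graph.Reachable w p.1) ∧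
  (∀ w : Fin T2.v, ∃ p ∈ Mminus T1 T2 M, T2.graph.Reachable w p.2)

/-! ### Node pairs and the edge set of a labeled template -/

/-- The unordered pair of two distinct nodes, as an element of `Pairs n`. -/
def mkPair {n : ℕ} {i j : Fin n} (h : i ≠ j) : Pairs n :=
  ⟨(min i j, max i j), min_lt_max.mpr h⟩

lemma mkPair_eq_iff {n : ℕ} {i j k l : Fin n} (h : i ≠ j) (h' : k ≠ l) :
    mkPair h = mkPair h' ↔ (i = k ∧ j = l) ∨ (i = l ∧ j = k) := by
  simp only [mkPair, Subtype.mk.injEq, Prod.mk.injEq]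
  constructor
  · rintro ⟨h1, h2⟩
    rcases le_total i j with a | a <;> rcases le_total k l with b | b <;>
      simp only [min_eq_left, min_eq_right, max_eq_left, max_eq_right, a, b] at h1 h2 <;> simp_all
  · rintro (⟨rfl, rfl⟩ | ⟨rfl, rfl⟩)
    · simp
    · simp [min_comm, max_comm]

lemma ne_of_mem {n : ℕ} (T : Template) (π : Fin T.v ↪ Fin n) {e : Fin T.v × Fin T.v}
    (he : e ∈ T.E) : π e.1 ≠ π e.2 :=
  fun h => (T.hE e he).ne (π.injective h)

/-- The edge set of the labeled graph `G[π]`. -/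
def edgeSet {n : ℕ} (T : Template) (π : Fin T.v ↪ Fin n) : Finset (Pairs n) :=
  T.E.attach.image fun e => mkPair (ne_of_mem T π e.2)

lemma mem_edgeSet {n : ℕ} (T : Template) (π : Fin T.v ↪ Fin n) (p : Pairs n) :
    p ∈ edgeSet T π ↔ ∃ e, ∃ he : e ∈ T.E, mkPair (ne_of_mem T π he) = p := by
  simp [edgeSet]

lemma mkPair_injOn {n : ℕ} (T : Template) (π : Fin T.v ↪ Fin n)
    {e e' : Fin T.v × Fin T.v} (he : e ∈ T.E) (he' : e' ∈ T.E)
    (h : mkPair (ne_of_mem T π he) = mkPair (ne_of_mem T π he')) : e = e' := by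
  rw [mkPair_eq_iff] at h
  rcases h with ⟨h1, h2⟩ | ⟨h1, h2⟩
  · exact Prod.ext (π.injective h1) (π.injective h2)
  · have h1 := π.injective h1
    have h2 := π.injective h2
    have a := T.hE e he
    have b := T.hE e' he'
    rw [h1, h2] at a
    exact absurd a (lt_asymm b)

/-- The recentered entry of a node pair. -/
def Yp {n : ℕ} (q : ℝ) (y : EdgeConf n) (p : Pairs n) : ℝ := (if y p then 1 else 0) - q

lemma PG_eq {n : ℕ} (q : ℝ) (T : Template) (π : Fin T.v ↪ Fin n) (y : EdgeConf n) :
    PG n q T π y = ∏ p ∈ edgeSet T π, Yp q y p := by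
  unfold PG
  refine Finset.prod_bij (fun e he => mkPair (ne_of_mem T π he)) ?_ ?_ ?_ ?_
  · intro e he
    exact (mem_edgeSet T π _).2 ⟨e, he, rfl⟩
  · intro e he e' he' h
    exact mkPair_injOn T π he he' h
  · intro p hp
    exact (mem_edgeSet T π p).1 hp
  · intro e he
    rw [Ymat, dif_neg (ne_of_mem T π he)]
    rfl

/-! ### Second moments as averages over the labels -/

/-- Indicator that the two nodes of `p` have the same label. -/
def cInd {n K : ℕ} (z : Lab n K) (p : Pairs n) : ℝ := if z p.1.1 = z p.1.2 then 1 else 0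

/-- Conditional second moment `E[Y_p² | z] = q(1-q) + lam (1-2q) 1{z equal on p}`. -/
def wPair {n K : ℕ} (q lam : ℝ) (z : Lab n K) (p : Pairs n) : ℝ :=
  q * (1 - q) + lam * (1 - 2 * q) * cInd z p

lemma cInd_nonneg {n K : ℕ} (z : Lab n K) (p : Pairs n) : 0 ≤ cInd z p := by
  unfold cInd; split_ifs <;> norm_num

lemma cInd_le_one {n K : ℕ} (z : Lab n K) (p : Pairs n) : cInd z p ≤ 1 := by
  unfold cInd; split_ifs <;> norm_num

/-- Conditional independence of the edges given the labels. -/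
lemma expec_prod (n K : ℕ) (q lam : ℝ) (f : Pairs n → Bool → ℝ) :
    expec n K q lam (fun _ y => ∏ p, f p (y p)) =
      ((K : ℝ)⁻¹) ^ n * ∑ z : Lab n K, ∏ p, (pEdge n K q lam z p * f p true +
        (1 - pEdge n K q lam z p) * f p false) := by
  unfold expec wt
  rw [Finset.mul_sum]
  refine Finset.sum_congr rfl fun z _ => ?_
  have h : ∀ p : Pairs n, pEdge n K q lam z p * f p true +
      (1 - pEdge n K q lam z p) * f p false =
      ∑ b : Bool, (if b then pEdge n K q lam z p else 1 - pEdge n K q lam z p) * f p b := by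
    intro p; simp
  simp_rw [h]
  rw [Finset.prod_univ_sum, Fintype.piFinset_univ, Finset.mul_sum]
  refine Finset.sum_congr rfl fun y _ => ?_
  rw [mul_assoc, ← Finset.prod_mul_distrib]

lemma expec_PG_mul (n K : ℕ) (q lam : ℝ) (S₁ S₂ : Finset (Pairs n)) :
    expec n K q lam (fun _ y => (∏ p ∈ S₁, Yp q y p) * ∏ p ∈ S₂, Yp q y p) =
      ((K : ℝ)⁻¹) ^ n * (lam ^ (S₁ \ S₂).card * lam ^ (S₂ \ S₁).card *
        ∑ z : Lab n K, (∏ p ∈ S₁ \ S₂, cInd z p) * (∏ p ∈ S₂ \ S₁, cInd z p) *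
          ∏ p ∈ S₁ ∩ S₂, wPair q lam z p) := by
  have hind : ∀ (S : Finset (Pairs n)) (g : Pairs n → ℝ),
      ∏ p ∈ S, g p = ∏ p, if p ∈ S then g p else 1 := by
    intro S g; rw [Finset.prod_ite_mem, Finset.univ_inter]
  let f : Pairs n → Bool → ℝ := fun p b =>
    (if p ∈ S₁ then ((if b then 1 else 0) - q) else 1) *
    (if p ∈ S₂ then ((if b then 1 else 0) - q) else 1)
  have h1 : (fun (_ : Lab n K) (y : EdgeConf n) =>
      (∏ p ∈ S₁, Yp q y p) * ∏ p ∈ S₂, Yp q y p) =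
      fun _ y => ∏ p, f p (y p) := by
    funext _ y
    rw [hind S₁, hind S₂, ← Finset.prod_mul_distrib]
    rfl
  rw [h1, expec_prod n K q lam f]
  congr 1
  rw [Finset.mul_sum]
  refine Finset.sum_congr rfl fun z _ => ?_
  have h2 : lam ^ (S₁ \ S₂).card * lam ^ (S₂ \ S₁).card *
      ((∏ p ∈ S₁ \ S₂, cInd z p) * (∏ p ∈ S₂ \ S₁, cInd z p) *
        ∏ p ∈ S₁ ∩ S₂, wPair q lam z p) =
      (∏ p ∈ S₁ \ S₂, lam * cInd z p) * (∏ p ∈ S₂ \ S₁, lam * cInd z p) *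
        ∏ p ∈ S₁ ∩ S₂, wPair q lam z p := by
    simp only [Finset.prod_mul_distrib, Finset.prod_const]; ring
  rw [h2, hind (S₁ \ S₂), hind (S₂ \ S₁), hind (S₁ ∩ S₂), ← Finset.prod_mul_distrib,
    ← Finset.prod_mul_distrib]
  refine Finset.prod_congr rfl fun p _ => ?_
  by_cases a : p ∈ S₁ <;> by_cases b : p ∈ S₂ <;> by_cases c : z p.1.1 = z p.1.2 <;>
    simp [f, a, b, c, pEdge, cInd, wPair] <;> ring

lemma expec_PG_sq (n K : ℕ) (q lam : ℝ) (S : Finset (Pairs n)) :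
    expec n K q lam (fun _ y => (∏ p ∈ S, Yp q y p) ^ 2) =
      ((K : ℝ)⁻¹) ^ n * ∑ z : Lab n K, ∏ p ∈ S, wPair q lam z p := by
  have := expec_PG_mul n K q lam S S
  simp only [Finset.sdiff_self, Finset.card_empty, pow_zero, Finset.prod_empty, one_mul,
    Finset.inter_self] at this
  simpa only [pow_two] using this

/-! ### Unmatched nodes each cost a factor `K` -/

/-- If, once the labels off `D` are fixed, at most one labelling has `B ≠ 0`, then multiplying
by `B ≤ 1` a nonnegative integrand `F` that ignores the labels on `D` divides its average by at least `K ^ |D|`. -/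
lemma sum_mul_pow_le {n K : ℕ} (D : Finset (Fin n)) (F B : Lab n K → ℝ)
    (hF : ∀ z, 0 ≤ F z) (hB : ∀ z, B z ≤ 1)
    (hFD : ∀ z z' : Lab n K, (∀ i ∉ D, z i = z' i) → F z = F z')
    (hBD : ∀ z z' : Lab n K, B z ≠ 0 → B z' ≠ 0 → (∀ i ∉ D, z i = z' i) → z = z') :
    (∑ z, B z * F z) * (K : ℝ) ^ D.card ≤ ∑ z, F z := by
  let ov : Lab n K × (D → Fin K) → Lab n K :=
    fun x i => if h : i ∈ D then x.2 ⟨i, h⟩ else x.1 i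
  have hov : ∀ x, ∀ i ∉ D, ov x i = x.1 i := fun x i hi => by simp [ov, hi]
  let Q : Finset (Lab n K × (D → Fin K)) := (univ.filter fun z => B z ≠ 0) ×ˢ univ
  have hinj : Set.InjOn ov Q := by
    intro x hx x' hx' h
    simp only [Q, Finset.coe_product, Set.mem_prod, Finset.mem_coe, Finset.mem_filter,
      Finset.mem_univ, true_and, and_true] at hx hx'
    have h1 : x.1 = x'.1 := by
      refine hBD _ _ hx hx' fun i hi => ?_
      rw [← hov x i hi, ← hov x' i hi, h]
    refine Prod.ext h1 ?_
    funext i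
    have := congrFun h i.1
    simpa [ov, i.2] using this
  have hcard : (Fintype.card (D → Fin K) : ℝ) = (K : ℝ) ^ D.card := by simp
  calc (∑ z, B z * F z) * (K : ℝ) ^ D.card
      = (∑ z ∈ univ.filter fun z => B z ≠ 0, B z * F z) * (K : ℝ) ^ D.card := by
        congr 1
        refine (Finset.sum_filter_of_ne fun z _ h => ?_).symm
        exact fun h0 => h (by simp [h0])
    _ ≤ (∑ z ∈ univ.filter fun z => B z ≠ 0, F z) * (K : ℝ) ^ D.card := by
        gcongr with z hz
        simpa using mul_le_mul_of_nonneg_right (hB z) (hF z)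
    _ = ∑ x ∈ Q, F (ov x) := by
        rw [Finset.sum_product, Finset.sum_mul]
        refine Finset.sum_congr rfl fun z _ => ?_
        rw [Finset.sum_congr rfl (fun u _ => hFD (ov (z, u)) z (hov (z, u))),
          Finset.sum_const, Finset.card_univ, nsmul_eq_mul, hcard, mul_comm]
    _ = ∑ z ∈ Q.image ov, F z := (Finset.sum_image hinj).symm
    _ ≤ ∑ z, F z := Finset.sum_le_sum_of_subset_of_nonneg (Finset.subset_univ _)
        fun z _ _ => hF z

/-- Labels used by `π` and not by `π'`. -/
def privSet {n : ℕ} (T T' : Template) (π : Fin T.v ↪ Fin n) (π' : Fin T'.v ↪ Fin n) :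
    Finset (Fin n) :=
  (univ.filter fun a : Fin T.v => ∀ b, π a ≠ π' b).map π

lemma notMem_privSet {n : ℕ} {T T' : Template} {π : Fin T.v ↪ Fin n} {π' : Fin T'.v ↪ Fin n}
    {a : Fin T.v} {b : Fin T'.v} (h : π a = π' b) : π a ∉ privSet T T' π π' := by
  simp only [privSet, Finset.mem_map', Finset.mem_filter, Finset.mem_univ, true_and]
  exact fun h' => h' b h

lemma notMem_privSet' {n : ℕ} {T T' : Template} {π : Fin T.v ↪ Fin n} {π' : Fin T'.v ↪ Fin n}
    (b : Fin T'.v) : π' b ∉ privSet T T' π π' := by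
  simp only [privSet, Finset.mem_map, Finset.mem_filter, Finset.mem_univ, true_and]
  rintro ⟨a, ha, h⟩
  exact ha b h

lemma cInd_mkPair {n K : ℕ} (z : Lab n K) {i j : Fin n} (h : i ≠ j) :
    cInd z (mkPair h) = if z i = z j then 1 else 0 := by
  unfold cInd mkPair
  rcases le_total i j with a | a <;> simp [a, eq_comm]

/-- Edges of `G'[π']` do not see the labels used only by `π`. -/
lemma cInd_congr {n K : ℕ} (T T' : Template) (π : Fin T.v ↪ Fin n) (π' : Fin T'.v ↪ Fin n)
    {z z' : Lab n K} (h : ∀ i ∉ privSet T T' π π', z i = z' i) {p : Pairs n}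
    (hp : p ∈ edgeSet T' π') : cInd z p = cInd z' p := by
  obtain ⟨e, he, rfl⟩ := (mem_edgeSet T' π' p).1 hp
  rw [cInd_mkPair, cInd_mkPair, h _ (notMem_privSet' _), h _ (notMem_privSet' _)]

/-- When every component of `G` contains a shared node, the labels of the private nodes of `G`
are determined by the others as soon as labels agree along the private edges: any path from a
private node to its first shared node consists of private edges. -/
lemma eq_of_prod_ne_zero {n K : ℕ} (T T' : Template) (π : Fin T.v ↪ Fin n)
    (π' : Fin T'.v ↪ Fin n)
    (hR : ∀ w : Fin T.v, ∃ a, (∃ b, π a = π' b) ∧ T.graph.Reachable w a)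
    (z z' : Lab n K)
    (hz : ∏ p ∈ edgeSet T π \ edgeSet T' π', cInd z p ≠ 0)
    (hz' : ∏ p ∈ edgeSet T π \ edgeSet T' π', cInd z' p ≠ 0)
    (h : ∀ i ∉ privSet T T' π π', z i = z' i) : z = z' := by
  have key : ∀ a c : Fin T.v, T.graph.Adj a c → (∀ b, π a ≠ π' b) →
      z (π a) = z (π c) ∧ z' (π a) = z' (π c) := by
    intro a c hac ha
    have hne : π a ≠ π c := fun h => hac.ne (π.injective h)
    have hmem : mkPair hne ∈ edgeSet T π \ edgeSet T' π' := by
      rw [Finset.mem_sdiff, mem_edgeSet, mem_edgeSet]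
      constructor
      · rcases ((SimpleGraph.fromRel_adj _ _ _).1 hac).2 with he | he
        · exact ⟨_, he, rfl⟩
        · exact ⟨_, he, (mkPair_eq_iff _ _).2 (Or.inr ⟨rfl, rfl⟩)⟩
      · rintro ⟨e, he, h'⟩
        rcases (mkPair_eq_iff _ _).1 h' with ⟨h1, _⟩ | ⟨_, h1⟩
        · exact ha _ h1.symm
        · exact ha _ h1.symm
    have h1 := Finset.prod_ne_zero_iff.1 hz _ hmem
    have h2 := Finset.prod_ne_zero_iff.1 hz' _ hmem
    rw [cInd_mkPair] at h1 h2
    simp only [ne_eq, ite_eq_right_iff, one_ne_zero, imp_false, not_not] at h1 h2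
    exact ⟨h1, h2⟩
  have main : ∀ w : Fin T.v, z (π w) = z' (π w) := by
    intro w
    obtain ⟨a, ⟨b, hab⟩, ⟨p⟩⟩ := hR w
    induction p with
    | nil => exact h _ (notMem_privSet hab)
    | @cons u v x huv p ih =>
      by_cases hu : ∃ b, π u = π' b
      · obtain ⟨b', hb'⟩ := hu
        exact h _ (notMem_privSet hb')
      · push Not at hu
        obtain ⟨h1, h2⟩ := key _ _ huv hu
        rw [h1, h2]
        exact ih hab
  funext i
  by_cases hi : i ∈ privSet T T' π π'
  · obtain ⟨a, _, rfl⟩ := Finset.mem_map.1 hi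
    exact main a
  · exact h i hi

/-! ### Counting through the matching -/

lemma card_sdiff_eq {n : ℕ} (T T' : Template) (π : Fin T.v ↪ Fin n) (π' : Fin T'.v ↪ Fin n)
    (P : Fin T.v × Fin T.v → Prop)
    (hP : ∀ e, P e ↔ ∃ e' ∈ T'.E, (π e.1 = π' e'.1 ∧ π e.2 = π' e'.2) ∨
      (π e.1 = π' e'.2 ∧ π e.2 = π' e'.1)) :
    (T.E.filter fun e => ¬ P e).card = (edgeSet T π \ edgeSet T' π').card := by
  have hmem : ∀ e (he : e ∈ T.E), mkPair (ne_of_mem T π he) ∈ edgeSet T' π' ↔ P e := by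
    intro e he
    rw [hP, mem_edgeSet]
    constructor
    · rintro ⟨e', he', h⟩
      exact ⟨e', he', (mkPair_eq_iff _ _).1 h.symm⟩
    · rintro ⟨e', he', h⟩
      exact ⟨e', he', ((mkPair_eq_iff _ _).2 h).symm⟩
  refine Finset.card_bij
    (fun e he => mkPair (ne_of_mem T π (Finset.mem_filter.1 he).1)) ?_ ?_ ?_
  · intro e he
    obtain ⟨h1, h2⟩ := Finset.mem_filter.1 he
    exact Finset.mem_sdiff.2 ⟨(mem_edgeSet T π _).2 ⟨e, h1, rfl⟩, fun h => h2 ((hmem e h1).1 h)⟩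
  · intro e he e' he' h
    exact mkPair_injOn T π (Finset.mem_filter.1 he).1 (Finset.mem_filter.1 he').1 h
  · intro p hp
    obtain ⟨h1, h2⟩ := Finset.mem_sdiff.1 hp
    obtain ⟨e, he, rfl⟩ := (mem_edgeSet T π p).1 h1
    exact ⟨e, Finset.mem_filter.2 ⟨he, fun h => h2 ((hmem e he).2 h)⟩, rfl⟩

/-! ### The lower bounds on the second moments and the conclusion -/

lemma sum_wPair_ge {n K : ℕ} (q lam : ℝ) (hq2 : q ≤ 1 / 2) (hql : q + 2 * lam ≤ 1)
    (hlam : 0 < lam) (hq0 : 0 < q) (S S' : Finset (Pairs n)) :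
    ((q * (1 - q)) ^ (S \ S').card * ∑ z : Lab n K, ∏ p ∈ S ∩ S', wPair q lam z p ≤
      ∑ z : Lab n K, ∏ p ∈ S, wPair q lam z p) ∧
    (lam ^ (S \ S').card * ∑ z : Lab n K,
      (∏ p ∈ S \ S', cInd z p) * ∏ p ∈ S ∩ S', wPair q lam z p ≤
      ∑ z : Lab n K, ∏ p ∈ S, wPair q lam z p) := by
  have hsplit : ∀ z : Lab n K, ∏ p ∈ S, wPair q lam z p =
      (∏ p ∈ S \ S', wPair q lam z p) * ∏ p ∈ S ∩ S', wPair q lam z p := by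
    intro z
    rw [← Finset.prod_inter_mul_prod_sdiff S S', mul_comm]
  have hqq : 0 < q * (1 - q) := mul_pos hq0 (by linarith)
  have hc : 0 ≤ lam * (1 - 2 * q) := mul_nonneg hlam.le (by linarith)
  have hw1 : ∀ (z : Lab n K) p, q * (1 - q) ≤ wPair q lam z p := fun z p => by
    have := mul_nonneg hc (cInd_nonneg z p)
    unfold wPair; linarith
  have hw0 : ∀ (z : Lab n K) p, 0 ≤ wPair q lam z p := fun z p => hqq.le.trans (hw1 z p)
  have hw2 : ∀ (z : Lab n K) p, lam * cInd z p ≤ wPair q lam z p := fun z p => by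
    -- `q(1-q) + lam(1-2q) ≥ lam` is exactly `q + 2 lam ≤ 1` after division by `q`
    unfold wPair cInd
    split_ifs
    · nlinarith
    · linarith
  constructor
  · rw [Finset.mul_sum]
    refine Finset.sum_le_sum fun z _ => ?_
    rw [hsplit]
    refine mul_le_mul_of_nonneg_right ?_ (Finset.prod_nonneg fun p _ => hw0 z p)
    rw [← Finset.prod_const]
    exact Finset.prod_le_prod (fun _ _ => hqq.le) fun p _ => hw1 z p
  · rw [Finset.mul_sum]
    refine Finset.sum_le_sum fun z _ => ?_
    rw [hsplit, ← mul_assoc]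
    refine mul_le_mul_of_nonneg_right ?_ (Finset.prod_nonneg fun p _ => hw0 z p)
    rw [← Finset.prod_const, ← Finset.prod_mul_distrib]
    exact Finset.prod_le_prod (fun p _ => mul_nonneg hlam.le (cInd_nonneg z p)) fun p _ => hw2 z p

/-- The real-number arithmetic combining the bounds: `X = ∑ A B W`, `Z = ∑ W`, `Xa = ∑ A W`,
`Xb = ∑ B W`, and `Y₁`, `Y₂` are the (unnormalized) second moments. -/
lemma final_arith (k qb lam N X Z Xa Xb Y₁ Y₂ : ℝ) (d₁ d₂ u₁ u₂ : ℕ)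
    (hk : 0 < k) (hqb : 0 < qb) (hlam : 0 < lam) (hN : 0 < N)
    (hX : 0 ≤ X) (hZ : 0 < Z) (hXa : 0 ≤ Xa) (hXb : 0 ≤ Xb)
    (h1 : X * k ^ (u₁ + u₂) ≤ Z) (h2 : X * k ^ u₂ ≤ Xa) (h3 : X * k ^ u₁ ≤ Xb)
    (hY₁ : qb ^ d₁ * Z ≤ Y₁) (hY₂ : qb ^ d₂ * Z ≤ Y₂)
    (hY₁' : lam ^ d₁ * Xa ≤ Y₁) (hY₂' : lam ^ d₂ * Xb ≤ Y₂) :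
    |N * (lam ^ d₁ * lam ^ d₂ * X) / √(N * Y₁ * (N * Y₂))| ≤
      min (k ^ (-((u₁ + u₂ : ℕ) : ℝ)) * (lam / √qb) ^ (d₁ + d₂))
        (lam ^ (((d₁ + d₂ : ℕ) : ℝ) / 2) / k ^ (((u₁ + u₂ : ℕ) : ℝ) / 2)) := by
  have hY1 : 0 < Y₁ := lt_of_lt_of_le (by positivity) hY₁
  have hY2 : 0 < Y₂ := lt_of_lt_of_le (by positivity) hY₂
  have hs : 0 < √(N * Y₁ * (N * Y₂)) := Real.sqrt_pos.2 (by positivity)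
  rw [abs_of_nonneg (by positivity), div_le_iff₀ hs, min_mul_of_nonneg _ _ hs.le, le_min_iff]
  constructor
  · have hsq : N * (√qb ^ (d₁ + d₂) * Z) ≤ √(N * Y₁ * (N * Y₂)) := by
      apply Real.le_sqrt_of_sq_le
      have e : (√qb ^ (d₁ + d₂)) ^ 2 = qb ^ d₁ * qb ^ d₂ := by
        rw [← pow_mul, mul_comm, pow_mul, Real.sq_sqrt hqb.le, pow_add]
      calc (N * (√qb ^ (d₁ + d₂) * Z)) ^ 2
          = N ^ 2 * ((√qb ^ (d₁ + d₂)) ^ 2 * Z ^ 2) := by ring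
        _ = N ^ 2 * ((qb ^ d₁ * Z) * (qb ^ d₂ * Z)) := by rw [e]; ring
        _ ≤ N ^ 2 * (Y₁ * Y₂) := by gcongr
        _ = _ := by ring
    rw [Real.rpow_neg hk.le, Real.rpow_natCast]
    have hsqb : 0 < √qb := Real.sqrt_pos.2 hqb
    calc N * (lam ^ d₁ * lam ^ d₂ * X)
        = N * (lam ^ (d₁ + d₂) * ((k ^ (u₁ + u₂))⁻¹ * (X * k ^ (u₁ + u₂)))) := by
          rw [pow_add lam]; field_simp
      _ ≤ N * (lam ^ (d₁ + d₂) * ((k ^ (u₁ + u₂))⁻¹ * Z)) := by gcongr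
      _ = (k ^ (u₁ + u₂))⁻¹ * (lam / √qb) ^ (d₁ + d₂) * (N * (√qb ^ (d₁ + d₂) * Z)) := by
          rw [div_pow]; field_simp
      _ ≤ _ := by gcongr
  · have hl : (lam ^ (((d₁ + d₂ : ℕ) : ℝ) / 2)) ^ 2 = lam ^ d₁ * lam ^ d₂ := by
      rw [← Real.rpow_natCast, ← Real.rpow_mul hlam.le, ← pow_add, ← Real.rpow_natCast lam]
      congr 1; push_cast; ring
    have hkk : (k ^ (((u₁ + u₂ : ℕ) : ℝ) / 2)) ^ 2 = k ^ u₁ * k ^ u₂ := by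
      rw [← Real.rpow_natCast, ← Real.rpow_mul hk.le, ← pow_add, ← Real.rpow_natCast k]
      congr 1; push_cast; ring
    set a := lam ^ (((d₁ + d₂ : ℕ) : ℝ) / 2)
    set b := k ^ (((u₁ + u₂ : ℕ) : ℝ) / 2)
    have ha : 0 < a := Real.rpow_pos_of_pos hlam _
    have hb : 0 < b := Real.rpow_pos_of_pos hk _
    rw [div_mul_eq_mul_div, le_div_iff₀ hb]
    refine le_of_sq_le_sq ?_ (by positivity)
    calc (N * (lam ^ d₁ * lam ^ d₂ * X) * b) ^ 2
        = N ^ 2 * (lam ^ d₁ * lam ^ d₂) * ((lam ^ d₁ * (X * k ^ u₂)) * (lam ^ d₂ * (X * k ^ u₁))) := by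
          rw [mul_pow, hkk]; ring
      _ ≤ N ^ 2 * (lam ^ d₁ * lam ^ d₂) * ((lam ^ d₁ * Xa) * (lam ^ d₂ * Xb)) := by gcongr
      _ ≤ N ^ 2 * (lam ^ d₁ * lam ^ d₂) * (Y₁ * Y₂) := by gcongr
      _ = (a * √(N * Y₁ * (N * Y₂))) ^ 2 := by
          rw [mul_pow, hl, Real.sq_sqrt (by positivity)]; ring

theorem statement7 (n K : ℕ) (q lam : ℝ) (hn : 2 ≤ n) (hK : 2 ≤ K) (hKn : K ≤ n)
    (hq2 : q ≤ 1 / 2) (hql : q + 2 * lam ≤ 1) (hlam : 0 < lam) (hq0 : 0 < q)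
    (T1 T2 : Template) (M : Finset (Fin T1.v × Fin T2.v))
    (hM : IsMatching T1 T2 M) (hMstar : InMstar T1 T2 M)
    (π1 : Fin T1.v ↪ Fin n) (π2 : Fin T2.v ↪ Fin n)
    (hπ : (π1, π2) ∈ PiM n hn T1 T2 M) :
    |expec n K q lam (fun _ y => PG n q T1 π1 y * PG n q T2 π2 y) /
        Real.sqrt (expec n K q lam (fun _ y => PG n q T1 π1 y ^ 2) *
          expec n K q lam (fun _ y => PG n q T2 π2 y ^ 2))| ≤
      min ((K : ℝ) ^ (-((U1card T1 T2 M + U2card T1 T2 M : ℕ) : ℝ)) *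
            (lam / Real.sqrt (q * (1 - q))) ^ EDeltaCard T1 T2 M)
        (lam ^ ((EDeltaCard T1 T2 M : ℝ) / 2) /
          (K : ℝ) ^ (((U1card T1 T2 M + U2card T1 T2 M : ℕ) : ℝ) / 2)) := by
  obtain ⟨-, -, hm⟩ := hπ
  simp only at hm
  set S₁ := edgeSet T1 π1 with hS₁
  set S₂ := edgeSet T2 π2 with hS₂
  have hd₁ : (T1.E.filter fun e => ¬ EdgeMatched1 T1 T2 M e).card = (S₁ \ S₂).card := by
    refine card_sdiff_eq T1 T2 π1 π2 _ fun e => ?_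
    simp only [EdgeMatched1, hm]
  have hd₂ : (T2.E.filter fun e => ¬ EdgeMatched2 T1 T2 M e).card = (S₂ \ S₁).card := by
    refine card_sdiff_eq T2 T1 π2 π1 _ fun e => ?_
    simp only [EdgeMatched2, ← hm, eq_comm (a := π2 _)]
    refine exists_congr fun e' => and_congr_right fun _ => or_congr Iff.rfl and_comm
  have hu₁ : U1card T1 T2 M = (privSet T1 T2 π1 π2).card := by
    rw [privSet, Finset.card_map, U1card]
    congr 1
    ext a
    simp only [Finset.mem_filter, Finset.mem_univ, true_and, ne_eq, hm]
    exact ⟨fun h b hb => h _ hb rfl, fun h p hp hpa => h p.2 (hpa ▸ hp)⟩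
  have hu₂ : U2card T1 T2 M = (privSet T2 T1 π2 π1).card := by
    rw [privSet, Finset.card_map, U2card]
    congr 1
    ext b
    simp only [Finset.mem_filter, Finset.mem_univ, true_and, ne_eq, eq_comm (a := π2 _), hm]
    exact ⟨fun h a hb => h _ hb rfl, fun h p hp hpa => h p.1 (hpa ▸ hp)⟩
  have hR₁ : ∀ w : Fin T1.v, ∃ a, (∃ b, π1 a = π2 b) ∧ T1.graph.Reachable w a := by
    intro w
    obtain ⟨p, hp, hr⟩ := hMstar.1 w
    exact ⟨p.1, ⟨p.2, (hm _ _).2 (Finset.mem_filter.1 hp).1⟩, hr⟩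
  have hR₂ : ∀ w : Fin T2.v, ∃ a, (∃ b, π2 a = π1 b) ∧ T2.graph.Reachable w a := by
    intro w
    obtain ⟨p, hp, hr⟩ := hMstar.2 w
    exact ⟨p.2, ⟨p.1, ((hm _ _).2 (Finset.mem_filter.1 hp).1).symm⟩, hr⟩
  have hk : (0 : ℝ) < K := by exact_mod_cast (by omega : 0 < K)
  have hqb : 0 < q * (1 - q) := mul_pos hq0 (by linarith)
  let A : Lab n K → ℝ := fun z => ∏ p ∈ S₁ \ S₂, cInd z p
  let B : Lab n K → ℝ := fun z => ∏ p ∈ S₂ \ S₁, cInd z p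
  let W : Lab n K → ℝ := fun z => ∏ p ∈ S₁ ∩ S₂, wPair q lam z p
  have hA0 : ∀ z, 0 ≤ A z := fun z => Finset.prod_nonneg fun p _ => cInd_nonneg z p
  have hB0 : ∀ z, 0 ≤ B z := fun z => Finset.prod_nonneg fun p _ => cInd_nonneg z p
  have hA1 : ∀ z, A z ≤ 1 := fun z =>
    Finset.prod_le_one (fun p _ => cInd_nonneg z p) fun p _ => cInd_le_one z p
  have hB1 : ∀ z, B z ≤ 1 := fun z =>
    Finset.prod_le_one (fun p _ => cInd_nonneg z p) fun p _ => cInd_le_one z p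
  have hW0 : ∀ z, 0 < W z := fun z => Finset.prod_pos fun p _ => by
    have := mul_nonneg (mul_nonneg hlam.le (by linarith : (0 : ℝ) ≤ 1 - 2 * q)) (cInd_nonneg z p)
    unfold wPair; linarith
  have hAD : ∀ z z' : Lab n K, (∀ i ∉ privSet T2 T1 π2 π1, z i = z' i) → A z = A z' :=
    fun z z' h => Finset.prod_congr rfl fun p hp =>
      cInd_congr T2 T1 π2 π1 h (Finset.mem_sdiff.1 hp).1
  have hBD : ∀ z z' : Lab n K, (∀ i ∉ privSet T1 T2 π1 π2, z i = z' i) → B z = B z' :=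
    fun z z' h => Finset.prod_congr rfl fun p hp =>
      cInd_congr T1 T2 π1 π2 h (Finset.mem_sdiff.1 hp).1
  have hWD₁ : ∀ z z' : Lab n K, (∀ i ∉ privSet T1 T2 π1 π2, z i = z' i) → W z = W z' :=
    fun z z' h => Finset.prod_congr rfl fun p hp => by
      unfold wPair; rw [cInd_congr T1 T2 π1 π2 h (Finset.mem_inter.1 hp).2]
  have hWD₂ : ∀ z z' : Lab n K, (∀ i ∉ privSet T2 T1 π2 π1, z i = z' i) → W z = W z' :=
    fun z z' h => Finset.prod_congr rfl fun p hp => by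
      unfold wPair; rw [cInd_congr T2 T1 π2 π1 h (Finset.mem_inter.1 hp).1]
  have hXa : (∑ z, A z * B z * W z) * (K : ℝ) ^ U2card T1 T2 M ≤ ∑ z, A z * W z := by
    rw [hu₂]
    have := sum_mul_pow_le (privSet T2 T1 π2 π1) (fun z => A z * W z) B
      (fun z => mul_nonneg (hA0 z) (hW0 z).le) hB1
      (fun z z' h => by rw [hAD z z' h, hWD₂ z z' h])
      (eq_of_prod_ne_zero T2 T1 π2 π1 hR₂)
    convert this using 3
    ring
  have hXb : (∑ z, A z * B z * W z) * (K : ℝ) ^ U1card T1 T2 M ≤ ∑ z, B z * W z := by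
    rw [hu₁]
    have := sum_mul_pow_le (privSet T1 T2 π1 π2) (fun z => B z * W z) A
      (fun z => mul_nonneg (hB0 z) (hW0 z).le) hA1
      (fun z z' h => by rw [hBD z z' h, hWD₁ z z' h])
      (eq_of_prod_ne_zero T1 T2 π1 π2 hR₁)
    convert this using 3
    ring
  have hXZ : (∑ z, A z * B z * W z) * (K : ℝ) ^ (U1card T1 T2 M + U2card T1 T2 M) ≤ ∑ z, W z := by
    have := sum_mul_pow_le (privSet T1 T2 π1 π2) W A (fun z => (hW0 z).le) hA1 hWD₁
      (eq_of_prod_ne_zero T1 T2 π1 π2 hR₁)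
    rw [← hu₁] at this
    rw [add_comm, pow_add, ← mul_assoc]
    exact (mul_le_mul_of_nonneg_right hXa (by positivity)).trans this
  obtain ⟨hY₁, hY₁'⟩ := sum_wPair_ge (K := K) q lam hq2 hql hlam hq0 S₁ S₂
  obtain ⟨hY₂, hY₂'⟩ := sum_wPair_ge (K := K) q lam hq2 hql hlam hq0 S₂ S₁
  rw [Finset.inter_comm S₂ S₁] at hY₂ hY₂'
  simp only [PG_eq, ← hS₁, ← hS₂]
  rw [expec_PG_mul, expec_PG_sq, expec_PG_sq, EDeltaCard, hd₁, hd₂]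
  have : Nonempty (Fin K) := ⟨⟨0, by omega⟩⟩
  exact final_arith K (q * (1 - q)) lam (((K : ℝ)⁻¹) ^ n) _ (∑ z, W z) (∑ z, A z * W z)
    (∑ z, B z * W z) _ _ _ _ _ _ hk hqb hlam (by positivity)
    (Finset.sum_nonneg fun z _ => mul_nonneg (mul_nonneg (hA0 z) (hB0 z)) (hW0 z).le)
    (Finset.sum_pos (fun z _ => hW0 z) Finset.univ_nonempty)
    (Finset.sum_nonneg fun z _ => mul_nonneg (hA0 z) (hW0 z).le)
    (Finset.sum_nonneg fun z _ => mul_nonneg (hB0 z) (hW0 z).le)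
    hXZ hXa hXb hY₁ hY₂ hY₁' hY₂'

end SBM
end
end
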